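/- There exist universal constants c, C > 0 and c₂ ∈ (0,1) such that the following holds. Let X be an isotropic random vector in ℝⁿ with log-concave density which is ψ_α (α ∈ [1,2]) with constant b_α, and let A be an n×n real matrix with ‖A‖_HS² = n. Set ñ := n/(‖A‖_op²·b_α²). Then P(|AX| ≤ (1−t)√n) ≤ C·exp(−c·ñ^{α/2}·max(t^{2+α}, log(c₂/(1−t)))) for all t ∈ [0,1). -/

import Mathlib

open MeasureTheory ProbabilityTheory Real
open scoped ENNReal RealInnerProductSpace Pointwise NNReal

noncomputable section

/-- A nonnegative function is log-concave if `f(λx+(1-λ)y) ≥ f(x)^λ f(y)^{1-λ}`. -/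
def IsLogConcaveFn {E : Type*} [AddCommGroup E] [Module ℝ E] (f : E → ℝ) : Prop :=
  (∀ x, 0 ≤ f x) ∧
  ∀ x y : E, ∀ l : ℝ, 0 ≤ l → l ≤ 1 →
    f x ^ l * f y ^ (1 - l) ≤ f (l • x + (1 - l) • y)

/-- Hilbert-Schmidt (Frobenius) norm of a matrix. -/
def hsNorm {n : ℕ} (A : Matrix (Fin n) (Fin n) ℝ) : ℝ :=
  Real.sqrt (∑ i, ∑ j, (A i j) ^ 2)

/-- Operator norm of a matrix acting on Euclidean space. -/
def opNorm {n : ℕ} (A : Matrix (Fin n) (Fin n) ℝ) : ℝ :=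
  ‖LinearMap.toContinuousLinearMap (Matrix.toEuclideanLin A)‖

/-- Application of a matrix to a Euclidean vector. -/
def mApp {n : ℕ} (A : Matrix (Fin n) (Fin n) ℝ) (x : EuclideanSpace ℝ (Fin n)) :
    EuclideanSpace ℝ (Fin n) := Matrix.toEuclideanLin A x

/-- The random vector `X` has density `f` with respect to Lebesgue measure. -/
def HasDensityFn {Ω : Type*} [MeasurableSpace Ω] (P : Measure Ω) {n : ℕ}
    (X : Ω → EuclideanSpace ℝ (Fin n)) (f : EuclideanSpace ℝ (Fin n) → ℝ) : Prop :=
  Measurable X ∧ Measure.map X P = volume.withDensity fun x => ENNReal.ofReal (f x)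

/-- `X` is isotropic: centered with identity covariance. -/
def Isotropic {Ω : Type*} [MeasurableSpace Ω] (P : Measure Ω) {n : ℕ}
    (X : Ω → EuclideanSpace ℝ (Fin n)) : Prop :=
  (∫ ω, X ω ∂P) = 0 ∧
  ∀ θ η : EuclideanSpace ℝ (Fin n), (∫ ω, ⟪X ω, θ⟫ * ⟪X ω, η⟫ ∂P) = ⟪θ, η⟫

/-- `X` is ψ_α with constant `b`. -/
def IsPsiAlpha {Ω : Type*} [MeasurableSpace Ω] (P : Measure Ω) {n : ℕ}
    (X : Ω → EuclideanSpace ℝ (Fin n)) (α b : ℝ) : Prop :=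
  ∀ p : ℝ, 2 ≤ p → ∀ y : EuclideanSpace ℝ (Fin n),
    (∫ ω, |⟪X ω, y⟫| ^ p ∂P) ^ (1/p) ≤ b * p ^ (1/α) * (∫ ω, ⟪X ω, y⟫ ^ 2 ∂P) ^ ((1:ℝ)/2)

/-- `G` is a standard Gaussian random vector in `ℝⁿ`. -/
def IsStdGaussian {Ω : Type*} [MeasurableSpace Ω] (P : Measure Ω) {n : ℕ}
    (G : Ω → EuclideanSpace ℝ (Fin n)) : Prop :=
  Measurable G ∧
  Measure.map G P = volume.withDensity fun x =>
    ENNReal.ofReal ((2 * π) ^ (-(n:ℝ)/2) * Real.exp (-‖x‖ ^ 2 / 2))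

/-- Surface area of the unit sphere `S^{k-1}` in `ℝᵏ`. -/
def sphereVol (k : ℕ) : ℝ := 2 * π ^ ((k : ℝ)/2) / Real.Gamma ((k : ℝ)/2)

/-- The marginal density `π_F g(x) = ∫_{F^⊥} g(x+y) dy`. -/
def marginalDensity {n : ℕ} (g : EuclideanSpace ℝ (Fin n) → ℝ)
    (F : Submodule ℝ (EuclideanSpace ℝ (Fin n))) (x : EuclideanSpace ℝ (Fin n)) : ℝ :=
  ∫ y : Fᗮ, g (x + y)

/-- `h_{k,p}(u) = vol(S^{k-1}) ∫₀^∞ t^{p+k-1} π_{u(E₀)} g(t u(θ₀)) dt`. -/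
def hkp {n : ℕ} (g : EuclideanSpace ℝ (Fin n) → ℝ)
    (E₀ : Submodule ℝ (EuclideanSpace ℝ (Fin n))) (θ₀ : EuclideanSpace ℝ (Fin n))
    (k : ℕ) (p : ℝ) (u : Matrix (Fin n) (Fin n) ℝ) : ℝ :=
  sphereVol k * ∫ t in Set.Ioi (0:ℝ), t ^ (p + (k:ℝ) - 1) *
    marginalDensity g (Submodule.map (Matrix.toEuclideanLin u) E₀) (t • mApp u θ₀)

/-- Support functional of the one-sided L_q-centroid body `Z⁺_q(w)`. -/
def suppZplus {m : ℕ} (w : EuclideanSpace ℝ (Fin m) → ℝ) (q : ℝ)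
    (y : EuclideanSpace ℝ (Fin m)) : ℝ :=
  (2 * ∫ x, (max ⟪x, y⟫ 0) ^ q * w x) ^ (1/q)

/-- Ball's body `K_q(w) = {x : q ∫₀^∞ t^{q-1} w(tx) dt ≥ 1}`. -/
def ballBody {m : ℕ} (w : EuclideanSpace ℝ (Fin m) → ℝ) (q : ℝ) :
    Set (EuclideanSpace ℝ (Fin m)) :=
  {x | 1 ≤ q * ∫ t in Set.Ioi (0:ℝ), t ^ (q-1) * w (t • x)}

/-- The one-sided L_q-centroid body `Z⁺_q(w)`, as the convex set with support
functional `suppZplus w q`. -/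
def ZplusBody {m : ℕ} (w : EuclideanSpace ℝ (Fin m) → ℝ) (q : ℝ) :
    Set (EuclideanSpace ℝ (Fin m)) :=
  {x | ∀ y, ⟪x, y⟫ ≤ suppZplus w q y}

/-!
*Deviation.* Let `ν` be the log-concave law of `AX / √n`. For fixed `g₁, …, g_k` the integral of
`∏ exp (-(l - ⟪x, g_i⟫)² / 2)` against `ν` is midpoint log-concave in `l` by Prékopa–Leindler.
Averaging over independent Gaussian `g_i` gives
`∬ K_{l₁, l₂}(x, y) ^ k ≤ ∬ K_{m, m}(x, y) ^ k` with `m = (l₁ + l₂) / 2`. For `x`, `y` of small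
correlation the kernel `K_{l₁, l₂}` is about `(e l₁ l₂)⁻¹` when `√(1 + |x|²) ≈ l₁` and
`√(1 + |y|²) ≈ l₂`, while `K_{m, m} ≤ (e m²)⁻¹ exp (50 |⟪x, y⟫|)`, where the last factor is
controlled up to `k ~ K g ^ α` by the `ψ_α` moments. As `m²` exceeds `l₁ l₂`, the events `|x| ≤ r`
and `|x| ≥ r + g` cannot both be likely: the norm concentrates around its median, and hence
around `1`, with tails `exp (-c K g ^ (2 + α))`.

*Small balls.* For an even log-concave law the Laplace transform `φ s = ∫ exp (-s |x|² / 2) dν`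
satisfies the B-inequality `φ a * φ b ≤ φ (√(a b))²`, so `s ↦ φ s` is log-concave in `log s`. Hence
a single decay step `φ s ≤ exp (-η) φ (s / 16)`, which the deviation bound at `t = 1 / 2` provides,
repeats on all larger scales, and Markov's inequality turns this into `(C e) ^ (c K)` for the ball
of radius `e`. A general law is replaced by its symmetrization.
-/

/-! ### The Prékopa–Leindler inequality -/

section PrekopaLeindler

variable {E F : Type*} [AddCommGroup E] [Module ℝ E] [MeasurableSpace E]
  [AddCommGroup F] [Module ℝ F] [MeasurableSpace F]

/-- The Prékopa–Leindler inequality with weight `1/2` for a measure `μ`. It is the form of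
log-concavity of `μ` used here, because it passes to products and linear images and does not refer
to a density. -/
def PrekopaLeindler (μ : Measure E) : Prop :=
  ∀ f g h : E → ℝ≥0∞, Measurable f → Measurable g → Measurable h →
    (∀ x y, f x * g y ≤ h ((1 / 2 : ℝ) • (x + y)) ^ 2) →
    (∫⁻ x, f x ∂μ) * (∫⁻ x, g x ∂μ) ≤ (∫⁻ x, h x ∂μ) ^ 2

lemma volume_setOf_two_mul_sub_mem (K : Set ℝ) (b : ℝ) :
    volume {y : ℝ | 2 * y - b ∈ K} = volume K / 2 := by
  have preimage_eq : {y : ℝ | 2 * y - b ∈ K} = (fun y ↦ 2 * y) ⁻¹' ((fun y ↦ y + -b) ⁻¹' K) := by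
    ext y; simp [sub_eq_add_neg]
  rw [preimage_eq, Real.volume_preimage_mul_left two_ne_zero, measure_preimage_add_right,
    abs_of_pos (by positivity), ENNReal.ofReal_inv_of_pos two_pos, ENNReal.div_eq_inv_mul,
    ENNReal.ofReal_ofNat]

-- The sets `(K + min L) / 2` and `(max K + L) / 2` meet in at most one point.
lemma volume_add_volume_le_of_isCompact {K L C : Set ℝ} (hK : IsCompact K) (hL : IsCompact L)
    (hK₀ : K.Nonempty) (hL₀ : L.Nonempty) (hC : ∀ a ∈ K, ∀ b ∈ L, (a + b) / 2 ∈ C) :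
    volume K + volume L ≤ 2 * volume C := by
  obtain ⟨a, ha, a_max⟩ := hK.exists_isGreatest hK₀
  obtain ⟨b, hb, b_min⟩ := hL.exists_isLeast hL₀
  have hm : MeasurableSet {y : ℝ | 2 * y - a ∈ L} :=
    hL.measurableSet.preimage (by fun_prop : Measurable fun y : ℝ ↦ 2 * y - a)
  have union_inter := measure_union_add_inter (μ := volume) {y : ℝ | 2 * y - b ∈ K} hm
  have inter_null : volume ({y : ℝ | 2 * y - b ∈ K} ∩ {y : ℝ | 2 * y - a ∈ L}) = 0 := by
    refine measure_mono_null (t := {(a + b) / 2}) ?_ (by simp)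
    rintro y ⟨hyK, hyL⟩
    rw [Set.mem_singleton_iff]
    linarith [a_max hyK, b_min hyL]
  have union_subset : {y : ℝ | 2 * y - b ∈ K} ∪ {y : ℝ | 2 * y - a ∈ L} ⊆ C := by
    rintro y (hy | hy)
    · simpa using hC _ hy b hb
    · simpa using hC a ha _ hy
  rw [inter_null, add_zero, volume_setOf_two_mul_sub_mem, volume_setOf_two_mul_sub_mem,
    ← ENNReal.add_div] at union_inter
  rw [mul_comm]
  exact (ENNReal.div_le_iff_le_mul (by simp) (by simp)).1
    (union_inter ▸ measure_mono union_subset)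

lemma volume_add_volume_le {A B C : Set ℝ} (hA : MeasurableSet A) (hB : MeasurableSet B)
    (hA₀ : A.Nonempty) (hB₀ : B.Nonempty) (hC : ∀ a ∈ A, ∀ b ∈ B, (a + b) / 2 ∈ C) :
    volume A + volume B ≤ 2 * volume C := by
  obtain ⟨a, ha⟩ := hA₀
  obtain ⟨b, hb⟩ := hB₀
  rw [hA.measure_eq_iSup_isCompact, hB.measure_eq_iSup_isCompact]
  simp_rw [iSup_and']
  refine ENNReal.biSup_add_biSup_le' ⟨∅, by simp⟩ ⟨∅, by simp⟩ ?_
  rintro K ⟨hKA, hK⟩ L ⟨hLB, hL⟩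
  calc volume K + volume L
      ≤ volume (insert a K) + volume (insert b L) := by gcongr <;> exact Set.subset_insert _ _
    _ ≤ 2 * volume C :=
      volume_add_volume_le_of_isCompact (hK.insert a) (hL.insert b) (by simp) (by simp)
        fun x hx y hy ↦ hC x (Set.insert_subset ha hKA hx) y (Set.insert_subset hb hLB hy)

lemma lintegral_eq_lintegral_Ioo_measure_lt {α : Type*} [MeasurableSpace α] (μ : Measure α)
    {f : α → ℝ≥0∞} (hf : Measurable f) (hf₁ : ∀ x, f x ≤ 1) :
    ∫⁻ x, f x ∂μ = ∫⁻ t in Set.Ioo (0 : ℝ) 1, μ {x | ENNReal.ofReal t < f x} := by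
  have ne_top x : f x ≠ ∞ := ne_top_of_le_ne_top ENNReal.one_ne_top (hf₁ x)
  have layer := lintegral_eq_lintegral_meas_lt μ (f := fun x ↦ (f x).toReal)
    (ae_of_all _ fun _ ↦ ENNReal.toReal_nonneg) (by fun_prop)
  have layer_eq : ∫⁻ t in Set.Ioi (0 : ℝ), μ {x | t < (f x).toReal}
      = ∫⁻ t in Set.Ioi (0 : ℝ), μ {x | ENNReal.ofReal t < f x} :=
    setLIntegral_congr_fun measurableSet_Ioi fun t (ht : 0 < t) ↦ by
      simp only [ENNReal.ofReal_lt_iff_lt_toReal ht.le (ne_top _)]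
  simp_rw [ENNReal.ofReal_toReal (ne_top _)] at layer
  rw [layer, layer_eq]
  rw [← Set.Iio_inter_Ioi, ← Measure.restrict_restrict measurableSet_Iio]
  refine (setLIntegral_eq_of_support_subset fun t ht ↦ ?_).symm
  contrapose! ht
  simp [fun x ↦ ((hf₁ x).trans (ENNReal.one_le_ofReal.2 (not_lt.1 ht))).not_gt]

lemma lintegral_add_lintegral_le_of_iSup_eq_one {f g h : ℝ → ℝ≥0∞} (hf : Measurable f)
    (hg : Measurable g) (hh : Measurable h) (hf₁ : ⨆ x, f x = 1) (hg₁ : ⨆ x, g x = 1)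
    (H : ∀ x y, f x * g y ≤ h ((x + y) / 2) ^ 2) :
    (∫⁻ x, f x) + ∫⁻ x, g x ≤ 2 * ∫⁻ x, h x := by
  have measurable_level (u : ℝ → ℝ≥0∞) :
      Measurable fun t : ℝ ↦ volume {x | ENNReal.ofReal t < u x} :=
    Antitone.measurable fun s t hst ↦ measure_mono fun x (hx : ENNReal.ofReal t < u x) ↦
      (ENNReal.ofReal_le_ofReal hst).trans_lt hx
  calc (∫⁻ x, f x) + ∫⁻ x, g x
      = ∫⁻ t in Set.Ioo (0 : ℝ) 1,
          volume {x | ENNReal.ofReal t < f x} + volume {x | ENNReal.ofReal t < g x} := by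
        rw [lintegral_add_left (measurable_level f),
          ← lintegral_eq_lintegral_Ioo_measure_lt _ hf fun x ↦ hf₁ ▸ le_iSup f x,
          ← lintegral_eq_lintegral_Ioo_measure_lt _ hg fun x ↦ hg₁ ▸ le_iSup g x]
    _ ≤ ∫⁻ t in Set.Ioo (0 : ℝ) 1, 2 * volume {x | ENNReal.ofReal t < min (h x) 1} := by
        refine setLIntegral_mono' measurableSet_Ioo fun t ⟨_, t_lt⟩ ↦ ?_
        have t_lt' : ENNReal.ofReal t < 1 := ENNReal.ofReal_lt_one.2 t_lt
        refine volume_add_volume_le (measurableSet_lt measurable_const hf)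
          (measurableSet_lt measurable_const hg) (lt_iSup_iff.1 (t_lt'.trans_eq hf₁.symm))
          (lt_iSup_iff.1 (t_lt'.trans_eq hg₁.symm)) fun x hx y hy ↦ lt_min ?_ t_lt'
        refine lt_of_pow_lt_pow_left' 2 (lt_of_lt_of_le ?_ (H x y))
        rw [sq]
        exact ENNReal.mul_lt_mul hx hy
    _ = 2 * ∫⁻ x, min (h x) 1 := by
        rw [lintegral_const_mul _ (measurable_level _),
          ← lintegral_eq_lintegral_Ioo_measure_lt _ (by fun_prop) fun x ↦ min_le_right _ _]
    _ ≤ 2 * ∫⁻ x, h x := by gcongr; exact min_le_left _ _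

lemma ennreal_mul_le_sq_of_add_le_two_mul {a b c : ℝ≥0∞} (h : a + b ≤ 2 * c) : a * b ≤ c ^ 2 := by
  rcases eq_or_ne c ∞ with rfl | hc
  · simp
  have sum_ne_top : a + b ≠ ∞ := ne_top_of_le_ne_top (by finiteness) h
  rw [ENNReal.add_ne_top] at sum_ne_top
  lift a to ℝ≥0 using sum_ne_top.1
  lift b to ℝ≥0 using sum_ne_top.2
  lift c to ℝ≥0 using hc
  norm_cast at h ⊢
  rw [← NNReal.coe_le_coe] at h ⊢
  push_cast at h ⊢
  nlinarith [sq_nonneg ((a : ℝ) - b), a.2, b.2, c.2]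

lemma lintegral_mul_lintegral_le_of_iSup_ne_top {f g h : ℝ → ℝ≥0∞} (hf : Measurable f)
    (hg : Measurable g) (hh : Measurable h) (hf₁ : ⨆ x, f x ≠ ∞) (hg₁ : ⨆ x, g x ≠ ∞)
    (H : ∀ x y, f x * g y ≤ h ((x + y) / 2) ^ 2) :
    (∫⁻ x, f x) * ∫⁻ x, g x ≤ (∫⁻ x, h x) ^ 2 := by
  set a := ⨆ x, f x with ha
  set b := ⨆ x, g x with hb
  by_cases a_zero : a = 0
  · simp [ENNReal.iSup_eq_zero.1 (ha ▸ a_zero)]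
  by_cases b_zero : b = 0
  · simp [ENNReal.iSup_eq_zero.1 (hb ▸ b_zero)]
  set c : ℝ≥0∞ := (a * b) ^ (1 / 2 : ℝ)
  have c_sq : c ^ 2 = a * b := by
    rw [← ENNReal.rpow_natCast, ← ENNReal.rpow_mul]; norm_num
  have normalized : a⁻¹ * (∫⁻ x, f x) + b⁻¹ * ∫⁻ x, g x ≤ 2 * (c⁻¹ * ∫⁻ x, h x) := by
    rw [← lintegral_const_mul _ hf, ← lintegral_const_mul _ hg, ← lintegral_const_mul _ hh]
    refine lintegral_add_lintegral_le_of_iSup_eq_one (by fun_prop) (by fun_prop) (by fun_prop)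
      (by rw [← ENNReal.mul_iSup, ENNReal.inv_mul_cancel a_zero hf₁])
      (by rw [← ENNReal.mul_iSup, ENNReal.inv_mul_cancel b_zero hg₁]) fun x y ↦ ?_
    rw [mul_mul_mul_comm, mul_pow, ← ENNReal.inv_pow, c_sq,
      ENNReal.mul_inv (Or.inl a_zero) (Or.inl hf₁)]
    gcongr
    exact H x y
  have product := ennreal_mul_le_sq_of_add_le_two_mul normalized
  rw [mul_mul_mul_comm, mul_pow, ← ENNReal.inv_pow, c_sq,
    ← ENNReal.mul_inv (Or.inl a_zero) (Or.inl hf₁)] at product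
  exact (ENNReal.mul_le_mul_iff_right (ENNReal.inv_ne_zero.2 (by finiteness))
    (ENNReal.inv_ne_top.2 (mul_ne_zero a_zero b_zero))).1 product

lemma lintegral_eq_iSup_lintegral_min_natCast {α : Type*} [MeasurableSpace α] (μ : Measure α)
    {f : α → ℝ≥0∞} (hf : Measurable f) :
    ∫⁻ x, f x ∂μ = ⨆ n : ℕ, ∫⁻ x, min (f x) n ∂μ := by
  rw [← lintegral_iSup (fun n ↦ hf.min measurable_const)
    fun m n hmn x ↦ min_le_min le_rfl (by exact_mod_cast hmn)]
  simp [← inf_iSup_eq, ENNReal.iSup_natCast]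

theorem prekopaLeindler_volume_real : PrekopaLeindler (volume : Measure ℝ) := by
  intro f g h hf hg hh H
  rw [lintegral_eq_iSup_lintegral_min_natCast _ hf, lintegral_eq_iSup_lintegral_min_natCast _ hg,
    ENNReal.iSup_mul]
  refine iSup_le fun m ↦ ENNReal.mul_iSup _ _ ▸ iSup_le fun n ↦ ?_
  have iSup_min_ne_top (u : ℝ → ℝ≥0∞) (k : ℕ) : ⨆ x, min (u x) (k : ℝ≥0∞) ≠ ∞ :=
    ne_top_of_le_ne_top (ENNReal.natCast_ne_top k) (iSup_le fun _ ↦ min_le_right _ _)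
  refine lintegral_mul_lintegral_le_of_iSup_ne_top (by fun_prop) (by fun_prop) hh
    (iSup_min_ne_top f m) (iSup_min_ne_top g n) fun x y ↦ ?_
  calc min (f x) m * min (g y) n ≤ f x * g y := by gcongr <;> exact min_le_left _ _
    _ ≤ h ((x + y) / 2) ^ 2 := by simpa [div_eq_inv_mul] using H x y

namespace PrekopaLeindler

theorem prod {μ : Measure E} {ν : Measure F} [SFinite μ] [SFinite ν] (hμ : PrekopaLeindler μ)
    (hν : PrekopaLeindler ν) : PrekopaLeindler (μ.prod ν) := by
  intro f g h hf hg hh H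
  rw [lintegral_prod _ hf.aemeasurable, lintegral_prod _ hg.aemeasurable,
    lintegral_prod _ hh.aemeasurable]
  exact hμ _ _ _ hf.lintegral_prod_right' hg.lintegral_prod_right' hh.lintegral_prod_right'
    fun x y ↦ hν (fun z ↦ f (x, z)) (fun w ↦ g (y, w)) _ (by fun_prop) (by fun_prop) (by fun_prop)
      fun z w ↦ H (x, z) (y, w)

theorem setLIntegral_mul_setLIntegral_le {μ : Measure E} (hμ : PrekopaLeindler μ)
    {s t u : Set E} (hs : MeasurableSet s) (ht : MeasurableSet t)
    (hu : MeasurableSet u) {f g h : E → ℝ≥0∞} (hf : Measurable f)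
    (hg : Measurable g) (hh : Measurable h)
    (H : ∀ x ∈ s, ∀ y ∈ t, (1 / 2 : ℝ) • (x + y) ∈ u ∧ f x * g y ≤ h ((1 / 2 : ℝ) • (x + y)) ^ 2) :
    (∫⁻ x in s, f x ∂μ) * (∫⁻ x in t, g x ∂μ) ≤ (∫⁻ x in u, h x ∂μ) ^ 2 := by
  rw [← lintegral_indicator hs, ← lintegral_indicator ht, ← lintegral_indicator hu]
  refine hμ _ _ _ (hf.indicator hs) (hg.indicator ht) (hh.indicator hu) fun x y ↦ ?_
  by_cases hx : x ∈ s
  · by_cases hy : y ∈ t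
    · simpa only [hx, hy, (H x hx y hy).1, Set.indicator_of_mem] using (H x hx y hy).2
    · simp [hy]
  · simp [hx]

theorem map {μ : Measure E} (hμ : PrekopaLeindler μ) (L : E →ₗ[ℝ] F) (hL : Measurable L) :
    PrekopaLeindler (μ.map L) := by
  intro f g h hf hg hh H
  rw [lintegral_map hf hL, lintegral_map hg hL, lintegral_map hh hL]
  exact hμ _ _ _ (hf.comp hL) (hg.comp hL) (hh.comp hL) fun x y ↦ by simpa using H (L x) (L y)

end PrekopaLeindler

theorem prekopaLeindler_volume_fin (n : ℕ) : PrekopaLeindler (volume : Measure (Fin n → ℝ)) := by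
  induction n with
  | zero =>
    intro f g h _ _ _ H
    simpa [volume_pi, Measure.pi_of_empty (x := 0)] using H 0 0
  | succ n ih =>
    let e := Fin.consLinearEquiv ℝ fun _ : Fin (n + 1) ↦ ℝ
    have e_eq : ⇑e = (MeasurableEquiv.piFinSuccAbove (fun _ : Fin (n + 1) ↦ ℝ) 0).symm := by
      funext p
      simp [e, MeasurableEquiv.piFinSuccAbove]
      rfl
    have preserving : MeasurePreserving e volume volume :=
      e_eq ▸ (volume_preserving_piFinSuccAbove (fun _ : Fin (n + 1) ↦ ℝ) 0).symm
    rw [← preserving.map_eq, Measure.volume_eq_prod]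
    exact (prekopaLeindler_volume_real.prod ih).map e.toLinearMap preserving.measurable

theorem prekopaLeindler_volume_pi (ι : Type*) [Fintype ι] :
    PrekopaLeindler (volume : Measure (ι → ℝ)) := by
  have preserving : MeasurePreserving (LinearEquiv.funCongrLeft ℝ ℝ (Fintype.equivFin ι)) :=
    volume_preserving_arrowCongr' (Fintype.equivFin ι).symm (MeasurableEquiv.refl ℝ) (.id _)
  rw [← preserving.map_eq]
  exact (prekopaLeindler_volume_fin _).map
    (LinearEquiv.funCongrLeft ℝ ℝ (Fintype.equivFin ι)).toLinearMap preserving.measurable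

end PrekopaLeindler

/-! ### Log-concave densities and laws -/

section LogConcave

lemma IsLogConcaveFn.quasiconcaveOn {E : Type*} [AddCommGroup E] [Module ℝ E] {f : E → ℝ}
    (hf : IsLogConcaveFn f) : QuasiconcaveOn ℝ Set.univ f := by
  refine quasiconcaveOn_iff_min_le.2 ⟨convex_univ, fun x _ y _ a b ha hb hab ↦ ?_⟩
  obtain rfl : b = 1 - a := by linarith
  refine le_trans ?_ (hf.2 x y a ha (by linarith))
  have min_nonneg : 0 ≤ min (f x) (f y) := le_min (hf.1 x) (hf.1 y)
  calc min (f x) (f y) = min (f x) (f y) ^ a * min (f x) (f y) ^ (1 - a) := by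
        rw [← Real.rpow_add' min_nonneg (by norm_num), add_sub_cancel, Real.rpow_one]
    _ ≤ f x ^ a * f y ^ (1 - a) := by
        gcongr
        · exact Real.rpow_nonneg (hf.1 x) a
        · exact min_le_left _ _
        · exact min_le_right _ _

/-- Midpoint log-concavity of a density with values in `ℝ≥0∞`. -/
def MidpointLogConcave {E : Type*} [AddCommGroup E] [Module ℝ E] (F : E → ℝ≥0∞) : Prop :=
  ∀ x y, F x * F y ≤ F ((1 / 2 : ℝ) • (x + y)) ^ 2

lemma IsLogConcaveFn.midpointLogConcave {E : Type*} [AddCommGroup E] [Module ℝ E] {f : E → ℝ}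
    (hf : IsLogConcaveFn f) : MidpointLogConcave fun x ↦ ENNReal.ofReal (f x) := by
  intro x y
  have half := hf.2 x y (1 / 2) (by norm_num) (by norm_num)
  rw [sub_half, ← smul_add, ← Real.sqrt_eq_rpow, ← Real.sqrt_eq_rpow, ← Real.sqrt_mul (hf.1 x),
    Real.sqrt_le_left (hf.1 _)] at half
  rw [← ENNReal.ofReal_mul (hf.1 x), ← ENNReal.ofReal_pow (hf.1 _)]
  exact ENNReal.ofReal_le_ofReal half

section Regularization

variable {E : Type*} [NormedAddCommGroup E]

/-- The lower semicontinuous regularization of `F`. A log-concave function need not be Borel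
measurable, but its regularization is, and differs from it only on a null set. -/
def lscRegularization (F : E → ℝ≥0∞) (x : E) : ℝ≥0∞ :=
  Filter.liminf F (nhds x)

lemma lowerSemicontinuous_lscRegularization (F : E → ℝ≥0∞) :
    LowerSemicontinuous (lscRegularization F) := by
  intro x c hc
  obtain ⟨d, hcd, hd⟩ := exists_between hc
  filter_upwards [eventually_eventually_nhds.2 (Filter.eventually_lt_of_lt_liminf hd)] with y hy
  exact hcd.trans_le (Filter.le_liminf_of_le (h := hy.mono fun _ ↦ le_of_lt))

variable [NormedSpace ℝ E]

lemma lscRegularization_ae_eq [MeasurableSpace E] [BorelSpace E] [FiniteDimensional ℝ E]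
    (μ : Measure E) [μ.IsAddHaarMeasure] {f : E → ℝ} (hf : IsLogConcaveFn f) :
    lscRegularization (fun x ↦ ENNReal.ofReal (f x)) =ᵐ[μ] fun x ↦ ENNReal.ofReal (f x) := by
  have not_mem_frontier : ∀ᵐ x ∂μ, ∀ q : ℚ, x ∉ frontier {y | (q : ℝ) < f y} := by
    refine ae_all_iff.2 fun q ↦ measure_eq_zero_iff_ae_notMem.1 ?_
    simpa using (hf.quasiconcaveOn.convex_gt (q : ℝ)).addHaar_frontier μ
  filter_upwards [not_mem_frontier] with x hx
  apply le_antisymm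
  · exact le_of_forall_lt fun c hc ↦ (Filter.eventually_lt_of_lt_liminf hc).self_of_nhds
  · refine le_of_forall_lt fun c hc ↦ ?_
    obtain ⟨q, c_lt, q_lt⟩ := exists_rat_btwn ((ENNReal.lt_ofReal_iff_toReal_lt hc.ne_top).1 hc)
    have mem_interior : x ∈ interior {y | (q : ℝ) < f y} :=
      by_contra fun h ↦ hx q ⟨subset_closure q_lt, h⟩
    refine ((ENNReal.lt_ofReal_iff_toReal_lt hc.ne_top).2 c_lt).trans_le
      (Filter.le_liminf_of_le (h := ?_))
    filter_upwards [mem_interior_iff_mem_nhds.1 mem_interior] with y hy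
    exact ENNReal.ofReal_le_ofReal (le_of_lt hy)

lemma MidpointLogConcave.lscRegularization {F : E → ℝ≥0∞} (hF : MidpointLogConcave F) :
    MidpointLogConcave (lscRegularization F) := by
  refine fun x y ↦ ENNReal.mul_le_of_forall_lt fun c hc d hd ↦ ?_
  have midpoint_open : IsOpenMap fun p : E × E ↦ (1 / 2 : ℝ) • (p.1 + p.2) :=
    (isOpenMap_smul₀ (by norm_num)).comp <| IsOpenMap.of_nhds_le fun p ↦ by
      rw [nhds_add, nhds_prod_eq, Filter.map_prod_eq_map₂ (· + ·)]
      rfl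
  have sqrt_le : (c * d) ^ (1 / 2 : ℝ) ≤ _root_.lscRegularization F ((1 / 2 : ℝ) • (x + y)) := by
    refine Filter.le_liminf_of_le (h := ?_)
    have above := (Filter.eventually_lt_of_lt_liminf hc).prod_nhds
      (Filter.eventually_lt_of_lt_liminf hd)
    refine Filter.mem_of_superset (midpoint_open.image_mem_nhds above) ?_
    rintro _ ⟨p, ⟨hp₁, hp₂⟩, rfl⟩
    rw [Set.mem_ofPred_eq, one_div, ENNReal.rpow_inv_le_iff two_pos, ENNReal.rpow_two]
    exact (mul_le_mul' hp₁.le hp₂.le).trans (by simpa using hF p.1 p.2)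
  rwa [one_div, ENNReal.rpow_inv_le_iff two_pos, ENNReal.rpow_two, ← one_div] at sqrt_le

end Regularization

lemma map_withDensity_comp {α β : Type*} [MeasurableSpace α] [MeasurableSpace β] {μ : Measure α}
    {e : α → β} (he : Measurable e) {G : β → ℝ≥0∞} (hG : Measurable G) :
    (μ.withDensity (G ∘ e)).map e = (μ.map e).withDensity G := by
  ext s hs
  rw [Measure.map_apply he hs, withDensity_apply _ (he hs), withDensity_apply _ hs,
    setLIntegral_map hs hG he]
  rfl

lemma PrekopaLeindler.withDensity {E : Type*} [AddCommGroup E] [Module ℝ E] [MeasurableSpace E]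
    {μ : Measure E} (hμ : PrekopaLeindler μ) {F : E → ℝ≥0∞} (hFm : Measurable F)
    (hF : MidpointLogConcave F) : PrekopaLeindler (μ.withDensity F) := by
  intro f g h hf hg hh H
  simp only [lintegral_withDensity_eq_lintegral_mul _ hFm, hf, hg, hh]
  refine hμ _ _ _ (hFm.mul hf) (hFm.mul hg) (hFm.mul hh) fun x y ↦ ?_
  simp only [Pi.mul_apply, mul_pow]
  calc F x * f x * (F y * g y) = (F x * F y) * (f x * g y) := by ring
    _ ≤ _ := mul_le_mul' (hF x y) (H x y)

lemma PrekopaLeindler.restrict {E : Type*} [AddCommGroup E] [Module ℝ E] [MeasurableSpace E]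
    {μ : Measure E} (hμ : PrekopaLeindler μ) {s : Set E} (hsm : MeasurableSet s)
    (hs : Convex ℝ s) : PrekopaLeindler (μ.restrict s) := by
  rw [← withDensity_indicator_one hsm]
  refine hμ.withDensity (measurable_one.indicator hsm) fun x y ↦ ?_
  by_cases hx : x ∈ s <;> by_cases hy : y ∈ s <;> simp [hx, hy]
  have mem : (2⁻¹ : ℝ) • x + (2⁻¹ : ℝ) • y ∈ s :=
    hs hx hy (by norm_num) (by norm_num) (by norm_num)
  simp [mem]

section Law

variable {V W : Type*} [NormedAddCommGroup V] [NormedSpace ℝ V] [MeasurableSpace V] [BorelSpace V]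
  [NormedAddCommGroup W] [NormedSpace ℝ W] [MeasurableSpace W] [BorelSpace W]

/-- A log-concave, possibly degenerate, law: a linear image of a measure on some `ℝᵐ` with a
log-concave density. -/
def IsLogConcaveLaw (ν : Measure V) : Prop :=
  ∃ (ι : Type) (_ : Fintype ι) (F : (ι → ℝ) → ℝ≥0∞) (L : (ι → ℝ) →ₗ[ℝ] V),
    Measurable F ∧ MidpointLogConcave F ∧ ν = (volume.withDensity F).map L

namespace IsLogConcaveLaw

lemma measurable_linearMap {ι : Type} [Finite ι] (L : (ι → ℝ) →ₗ[ℝ] V) : Measurable L :=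
  L.continuous_of_finiteDimensional.measurable

theorem prekopaLeindler {ν : Measure V} (hν : IsLogConcaveLaw ν) : PrekopaLeindler ν := by
  obtain ⟨ι, _, F, L, hFm, hF, rfl⟩ := hν
  exact ((prekopaLeindler_volume_pi ι).withDensity hFm hF).map L (measurable_linearMap L)

theorem map {ν : Measure V} (hν : IsLogConcaveLaw ν) (M : V →L[ℝ] W) :
    IsLogConcaveLaw (ν.map M) := by
  obtain ⟨ι, _, F, L, hFm, hF, rfl⟩ := hν
  refine ⟨ι, inferInstance, F, M.toLinearMap ∘ₗ L, hFm, hF, ?_⟩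
  rw [Measure.map_map M.measurable (measurable_linearMap L)]
  rfl

theorem prod [SecondCountableTopology V] [SecondCountableTopology W] {ν : Measure V}
    {ρ : Measure W} (hν : IsLogConcaveLaw ν) (hρ : IsLogConcaveLaw ρ) :
    IsLogConcaveLaw (ν.prod ρ) := by
  obtain ⟨ι, _, F, L, hFm, hF, rfl⟩ := hν
  obtain ⟨κ, _, G, M, hGm, hG, rfl⟩ := hρ
  let e := LinearEquiv.sumPiEquivProdPi ℝ ι κ fun _ ↦ ℝ
  have he : MeasurePreserving e volume volume :=
    volume_measurePreserving_sumPiEquivProdPi fun _ : ι ⊕ κ ↦ ℝ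
  let FG : (ι → ℝ) × (κ → ℝ) → ℝ≥0∞ := fun p ↦ F p.1 * G p.2
  have FG_measurable : Measurable FG := by fun_prop
  refine ⟨ι ⊕ κ, inferInstance, FG ∘ e, (L.prodMap M) ∘ₗ e.toLinearMap,
    FG_measurable.comp he.measurable, fun x y ↦ ?_, ?_⟩
  · have := mul_le_mul' (hF (e x).1 (e y).1) (hG (e x).2 (e y).2)
    simp only [FG, Function.comp_apply, map_smul, map_add, Prod.smul_fst, Prod.smul_snd,
      Prod.fst_add, Prod.snd_add, mul_pow]
    exact (mul_mul_mul_comm _ _ _ _).trans_le this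
  · have hLM : Measurable (Prod.map L M) :=
      (measurable_linearMap L).prodMap (measurable_linearMap M)
    rw [Measure.map_prod_map _ _ (measurable_linearMap L) (measurable_linearMap M),
      prod_withDensity hFm hGm, ← Measure.volume_eq_prod, ← he.map_eq,
      ← map_withDensity_comp he.measurable FG_measurable, Measure.map_map hLM he.measurable]
    rfl

-- Fiberwise Prékopa–Leindler over the antidiagonals `p + q = c`.
lemma lintegral_volume_prod_le_of_antidiagonal {ι : Type} [Fintype ι]
    {f h : (ι → ℝ) × (ι → ℝ) → ℝ≥0∞} (hf : Measurable f) (hh : Measurable h)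
    (H : ∀ p q p' q', p + q = p' + q' →
      f (p, q) * f (q', p') ≤ h ((1 / 2 : ℝ) • (p + p'), (1 / 2 : ℝ) • (q + q')) ^ 2) :
    ∫⁻ p, f p ≤ ∫⁻ p, h p := by
  have shear (u : (ι → ℝ) × (ι → ℝ) → ℝ≥0∞) (hu : Measurable u) :
      ∫⁻ p, u p = ∫⁻ c, ∫⁻ y, u (y, c - y) := by
    rw [Measure.volume_eq_prod, lintegral_prod _ hu.aemeasurable,
      lintegral_lintegral_swap (f := fun c y ↦ u (y, c - y)) (by fun_prop)]
    exact lintegral_congr fun y ↦ (lintegral_sub_right_eq_self (fun q ↦ u (y, q)) y).symm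
  rw [shear f hf, shear h hh]
  refine lintegral_mono fun c ↦ (ENNReal.pow_le_pow_left_iff two_ne_zero).1 ?_
  have reflect : ∫⁻ y, f (y, c - y) = ∫⁻ y, f (c - y, y) := by
    simpa using (lintegral_sub_left_eq_self (fun y ↦ f (y, c - y)) c).symm
  have fiber := prekopaLeindler_volume_pi ι (fun y ↦ f (y, c - y)) (fun y ↦ f (c - y, y))
    (fun y ↦ h (y, c - y)) (by fun_prop) (by fun_prop) (by fun_prop) fun y y' ↦ by
      convert H y (c - y) y' (c - y') (by simp) using 4
      module
  rwa [← reflect, ← sq] at fiber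

theorem lintegral_prod_le_of_antidiagonal [SecondCountableTopology V] {ν : Measure V}
    (hν : IsLogConcaveLaw ν) {f h : V × V → ℝ≥0∞} (hf : Measurable f) (hh : Measurable h)
    (H : ∀ p q p' q', p + q = p' + q' →
      f (p, q) * f (q', p') ≤ h ((1 / 2 : ℝ) • (p + p'), (1 / 2 : ℝ) • (q + q')) ^ 2) :
    ∫⁻ p, f p ∂(ν.prod ν) ≤ ∫⁻ p, h p ∂(ν.prod ν) := by
  obtain ⟨ι, _, F, L, hFm, hF, rfl⟩ := hν
  have hL : Measurable L := measurable_linearMap L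
  have pull (u : V × V → ℝ≥0∞) (hu : Measurable u) :
      ∫⁻ p, u p ∂(((volume.withDensity F).map L).prod ((volume.withDensity F).map L))
        = ∫⁻ p : (ι → ℝ) × (ι → ℝ), F p.1 * F p.2 * u (L p.1, L p.2) := by
    rw [Measure.map_prod_map _ _ hL hL, lintegral_map hu (by fun_prop), prod_withDensity hFm hFm,
      lintegral_withDensity_eq_lintegral_mul _ (by fun_prop) (by fun_prop)]
    rfl
  rw [pull f hf, pull h hh]
  refine lintegral_volume_prod_le_of_antidiagonal (by fun_prop) (by fun_prop)
    fun p q p' q' hpq ↦ ?_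
  have density := mul_le_mul' (hF p p') (hF q q')
  have kernel := H (L p) (L q) (L p') (L q') (by rw [← map_add, hpq, map_add])
  simp only [map_smul, map_add, mul_pow]
  calc F p * F q * f (L p, L q) * (F q' * F p' * f (L q', L p'))
      = F p * F p' * (F q * F q') * (f (L p, L q) * f (L q', L p')) := by ring
    _ ≤ _ := mul_le_mul' density kernel

end IsLogConcaveLaw

lemma IsLogConcaveFn.isLogConcaveLaw {ι : Type} [Fintype ι] {f : EuclideanSpace ℝ ι → ℝ}
    (hf : IsLogConcaveFn f) :
    IsLogConcaveLaw (volume.withDensity fun x ↦ ENNReal.ofReal (f x)) := by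
  let e := (EuclideanSpace.equiv ι ℝ).symm
  have he : MeasurePreserving e volume volume := PiLp.volume_preserving_toLp ι
  let F := lscRegularization fun x ↦ ENNReal.ofReal (f x)
  have F_measurable : Measurable F := (lowerSemicontinuous_lscRegularization _).measurable
  refine ⟨ι, inferInstance, F ∘ e, e.toLinearMap, F_measurable.comp he.measurable, fun x y ↦ ?_, ?_⟩
  · simpa using hf.midpointLogConcave.lscRegularization (e x) (e y)
  · rw [withDensity_congr_ae (lscRegularization_ae_eq volume hf).symm]
    conv_lhs => rw [← he.map_eq]
    exact (map_withDensity_comp he.measurable F_measurable).symm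

end Law

end LogConcave

/-! ### The kernel of a product of Gaussian bumps -/

section GaussianKernel

lemma lintegral_exp_quadratic_gaussianReal {P : ℝ} (hP : 0 < P) (Q R : ℝ) :
    ∫⁻ t, ENNReal.ofReal (exp (-((P - 1) * t ^ 2 - 2 * Q * t + R) / 2)) ∂(gaussianReal 0 1)
      = ENNReal.ofReal ((√P)⁻¹ * exp (-(R - Q ^ 2 / P) / 2)) := by
  have variance_eq : ((P⁻¹).toNNReal : ℝ) = P⁻¹ := Real.coe_toNNReal _ (by positivity)
  have complete_square (t : ℝ) :
      gaussianPDFReal 0 1 t * exp (-((P - 1) * t ^ 2 - 2 * Q * t + R) / 2)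
        = (√P)⁻¹ * exp (-(R - Q ^ 2 / P) / 2) * gaussianPDFReal (Q / P) (P⁻¹).toNNReal t := by
    have exponent : exp (-t ^ 2 / 2) * exp (-((P - 1) * t ^ 2 - 2 * Q * t + R) / 2)
        = exp (-(R - Q ^ 2 / P) / 2) * exp (-(t - Q / P) ^ 2 / (2 * P⁻¹)) := by
      rw [← exp_add, ← exp_add]
      congr 1
      field_simp
      ring
    have sqrt_eq : √(2 * π * P⁻¹) = √(2 * π) * (√P)⁻¹ := by
      rw [Real.sqrt_mul (by positivity), Real.sqrt_inv]
    simp only [gaussianPDFReal, variance_eq, NNReal.coe_one, mul_one, sub_zero, sqrt_eq]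
    rw [mul_assoc, exponent]
    have := Real.sqrt_pos.2 hP
    field_simp
  rw [gaussianReal_of_var_ne_zero 0 one_ne_zero,
    lintegral_withDensity_eq_lintegral_mul _ (by fun_prop) (by fun_prop)]
  simp only [Pi.mul_apply, gaussianPDF, ← ENNReal.ofReal_mul (gaussianPDFReal_nonneg _ _ _),
    complete_square]
  simp_rw [ENNReal.ofReal_mul (by positivity : 0 ≤ (√P)⁻¹ * exp (-(R - Q ^ 2 / P) / 2))]
  rw [lintegral_const_mul _ (by fun_prop),
    lintegral_gaussianPDFReal_eq_one _ (by simpa using hP), mul_one]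

/-- The bump `exp (-t² / 2)`, i.e. the standard Gaussian density up to normalization. -/
def gaussBump (t : ℝ) : ℝ≥0∞ := ENNReal.ofReal (exp (-t ^ 2 / 2))

@[fun_prop]
lemma measurable_gaussBump : Measurable gaussBump := by unfold gaussBump; fun_prop

lemma midpointLogConcave_gaussBump : MidpointLogConcave gaussBump := by
  intro a b
  rw [gaussBump, gaussBump, gaussBump, ← ENNReal.ofReal_mul (by positivity),
    ← ENNReal.ofReal_pow (by positivity), ← exp_add, ← exp_nat_mul]
  refine ENNReal.ofReal_le_ofReal (exp_le_exp.2 ?_)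
  simp only [smul_eq_mul, Nat.cast_ofNat]
  nlinarith [sq_nonneg (a - b)]

section SmoothedNorm

variable {V : Type*} [NormedAddCommGroup V]

/-- The standard deviation `√(1 + ‖x‖²)` of `ξ + ⟪x, g⟫` for independent standard Gaussians `ξ` on
`ℝ` and `g` on `V`. -/
def smoothedNorm (x : V) : ℝ := √(1 + ‖x‖ ^ 2)

lemma smoothedNorm_sq (x : V) : smoothedNorm x ^ 2 = 1 + ‖x‖ ^ 2 := Real.sq_sqrt (by positivity)

lemma one_le_smoothedNorm (x : V) : 1 ≤ smoothedNorm x :=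
  Real.one_le_sqrt.2 (by nlinarith [sq_nonneg ‖x‖])

lemma smoothedNorm_pos (x : V) : 0 < smoothedNorm x := one_pos.trans_le (one_le_smoothedNorm x)

lemma norm_le_smoothedNorm (x : V) : ‖x‖ ≤ smoothedNorm x :=
  Real.le_sqrt_of_sq_le (by linarith)

lemma norm_le_norm_of_smoothedNorm_le {x y : V} (h : smoothedNorm x ≤ smoothedNorm y) :
    ‖x‖ ≤ ‖y‖ := by
  have sq_le := pow_le_pow_left₀ (smoothedNorm_pos x).le h 2
  rw [smoothedNorm_sq, smoothedNorm_sq] at sq_le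
  exact (sq_le_sq₀ (norm_nonneg x) (norm_nonneg y)).1 (by linarith)

@[fun_prop]
lemma continuous_smoothedNorm : Continuous (smoothedNorm : V → ℝ) := by
  unfold smoothedNorm; fun_prop

end SmoothedNorm

variable {V : Type*} [NormedAddCommGroup V] [InnerProductSpace ℝ V]

/-- The correlation of `ξ + ⟪x, g⟫` and `ξ' + ⟪y, g⟫`, where `ξ`, `ξ'` and `g` are independent
standard Gaussians. -/
def smoothedCorrelation (x y : V) : ℝ := ⟪x, y⟫ / (smoothedNorm x * smoothedNorm y)

/-- The density at `(a, b)` of a centred Gaussian pair with unit variances and correlation `ϱ`,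
without the factor `(2π)⁻¹`. -/
def bivariateGaussian (ϱ a b : ℝ) : ℝ :=
  (√(1 - ϱ ^ 2))⁻¹ * exp (-((a ^ 2 + b ^ 2 - 2 * ϱ * (a * b)) / (1 - ϱ ^ 2)) / 2)

/-- The density at `(l₁, l₂)` of the pair `(ξ + ⟪x, g⟫, ξ' + ⟪y, g⟫)` for independent standard
Gaussians `ξ`, `ξ'`, `g`, without the factor `(2π)⁻¹`. -/
def bumpKernel (x y : V) (l₁ l₂ : ℝ) : ℝ :=
  (smoothedNorm x * smoothedNorm y)⁻¹ *
    bivariateGaussian (smoothedCorrelation x y) (l₁ / smoothedNorm x) (l₂ / smoothedNorm y)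

lemma norm_inv_smoothedNorm_smul_le (x : V) : ‖(smoothedNorm x)⁻¹ • x‖ ≤ 1 := by
  rw [norm_smul, norm_inv, Real.norm_of_nonneg (smoothedNorm_pos x).le,
    inv_mul_le_iff₀ (smoothedNorm_pos x), mul_one]
  exact norm_le_smoothedNorm x

lemma smoothedCorrelation_comm (x y : V) : smoothedCorrelation x y = smoothedCorrelation y x := by
  rw [smoothedCorrelation, smoothedCorrelation, real_inner_comm, mul_comm]

lemma abs_smoothedCorrelation_le_abs_inner (x y : V) :
    |smoothedCorrelation x y| ≤ |⟪x, (smoothedNorm y)⁻¹ • y⟫| := by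
  have hx := smoothedNorm_pos x
  have hy := smoothedNorm_pos y
  rw [inner_smul_right, smoothedCorrelation, ← div_eq_inv_mul, abs_div, abs_div, abs_of_pos hy,
    abs_of_pos (mul_pos hx hy)]
  gcongr
  exact le_mul_of_one_le_left hy.le (one_le_smoothedNorm x)

lemma inner_sq_lt_one_add_norm_sq_mul (x y : V) :
    ⟪x, y⟫ ^ 2 < (1 + ‖x‖ ^ 2) * (1 + ‖y‖ ^ 2) := by
  have := sq_le_sq.2 ((abs_real_inner_le_norm x y).trans (le_abs_self _))
  nlinarith [sq_nonneg ‖x‖, sq_nonneg ‖y‖]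

lemma bumpKernel_eq (x y : V) (l₁ l₂ : ℝ) :
    bumpKernel x y l₁ l₂ = (√((1 + ‖x‖ ^ 2) * (1 + ‖y‖ ^ 2) - ⟪x, y⟫ ^ 2))⁻¹ *
      exp (-((l₁ ^ 2 * (1 + ‖y‖ ^ 2) + l₂ ^ 2 * (1 + ‖x‖ ^ 2) - 2 * ⟪x, y⟫ * l₁ * l₂)
        / ((1 + ‖x‖ ^ 2) * (1 + ‖y‖ ^ 2) - ⟪x, y⟫ ^ 2)) / 2) := by
  have hx := smoothedNorm_pos x
  have hy := smoothedNorm_pos y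
  have D_pos : 0 < (smoothedNorm x * smoothedNorm y) ^ 2 - ⟪x, y⟫ ^ 2 := by
    rw [mul_pow, smoothedNorm_sq, smoothedNorm_sq]
    exact sub_pos.2 (inner_sq_lt_one_add_norm_sq_mul x y)
  have one_sub : 1 - smoothedCorrelation x y ^ 2
      = ((smoothedNorm x * smoothedNorm y) ^ 2 - ⟪x, y⟫ ^ 2)
        / (smoothedNorm x * smoothedNorm y) ^ 2 := by
    rw [smoothedCorrelation]
    field_simp
  rw [bumpKernel, bivariateGaussian, one_sub, ← mul_assoc, ← mul_inv, Real.sqrt_div D_pos.le,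
    Real.sqrt_sq (by positivity), mul_div_cancel₀ _ (by positivity), smoothedCorrelation,
    ← smoothedNorm_sq, ← smoothedNorm_sq, ← mul_pow]
  congr 4
  field_simp

lemma exists_coordinates_of_pair (x y : V) :
    ∃ β γ : ℝ, ‖y‖ ^ 2 = β ^ 2 + γ ^ 2 ∧ ⟪x, y⟫ = ‖x‖ * β := by
  suffices ∃ β : ℝ, ⟪x, y⟫ = ‖x‖ * β ∧ β ^ 2 ≤ ‖y‖ ^ 2 by
    obtain ⟨β, inner_eq, β_le⟩ := this
    refine ⟨β, √(‖y‖ ^ 2 - β ^ 2), ?_, inner_eq⟩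
    rw [Real.sq_sqrt (by linarith), add_sub_cancel]
  rcases eq_or_ne x 0 with rfl | hx
  · exact ⟨0, by simp, by simp⟩
  · have x_pos : 0 < ‖x‖ := norm_pos_iff.2 hx
    refine ⟨⟪x, y⟫ / ‖x‖, by field_simp, sq_le_sq.2 ?_⟩
    rw [abs_div, abs_norm, abs_norm, div_le_iff₀ x_pos, mul_comm]
    exact abs_real_inner_le_norm x y

variable [FiniteDimensional ℝ V] [MeasurableSpace V] [BorelSpace V]

lemma charFunDual_gaussianReal_zero_one (L : StrongDual ℝ ℝ) :
    charFunDual (gaussianReal 0 1) L = Complex.exp (-((L 1 ^ 2 : ℝ) : ℂ) / 2) := by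
  have L_one : (InnerProductSpace.toDual ℝ ℝ).symm L = L 1 := by
    simpa using InnerProductSpace.toDual_symm_apply (𝕜 := ℝ) (x := (1 : ℝ)) (y := L)
  rw [← charFun_toDual_symm_eq_charFunDual, L_one, charFun_gaussianReal]
  simp [neg_div]

lemma map_inner_pair_stdGaussian (x y : V) {β γ : ℝ} (norm_sq_eq : ‖y‖ ^ 2 = β ^ 2 + γ ^ 2)
    (inner_eq : ⟪x, y⟫ = ‖x‖ * β) :
    (stdGaussian V).map (fun g ↦ ((⟪x, g⟫ : ℝ), (⟪y, g⟫ : ℝ)))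
      = ((gaussianReal 0 1).prod (gaussianReal 0 1)).map
        fun p : ℝ × ℝ ↦ (‖x‖ * p.1, β * p.1 + γ * p.2) := by
  let A : V →L[ℝ] ℝ × ℝ := (innerSL ℝ x).prod (innerSL ℝ y)
  let B : ℝ × ℝ →L[ℝ] ℝ × ℝ := (‖x‖ • ContinuousLinearMap.fst ℝ ℝ ℝ).prod
    (β • ContinuousLinearMap.fst ℝ ℝ ℝ + γ • ContinuousLinearMap.snd ℝ ℝ ℝ)
  change (stdGaussian V).map A = ((gaussianReal 0 1).prod (gaussianReal 0 1)).map B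
  refine Measure.ext_of_charFunDual (funext fun L ↦ ?_)
  have L_apply (a b : ℝ) : L (a, b) = a * L (1, 0) + b * L (0, 1) := by
    have : ((a, b) : ℝ × ℝ) = a • (1, 0) + b • (0, 1) := by simp
    rw [this, map_add, map_smul, map_smul, smul_eq_mul, smul_eq_mul]
  have comp_A : L.comp A = innerSL ℝ (L (1, 0) • x + L (0, 1) • y) := by
    ext g
    simp only [A, ContinuousLinearMap.comp_apply, ContinuousLinearMap.prod_apply,
      innerSL_apply_apply, L_apply ⟪x, g⟫, inner_add_left, real_inner_smul_left]
    ring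
  have norm_comp_sq : ‖L (1, 0) • x + L (0, 1) • y‖ ^ 2
      = (L (1, 0) * ‖x‖ + L (0, 1) * β) ^ 2 + (L (0, 1) * γ) ^ 2 := by
    rw [norm_add_sq_real, norm_smul, norm_smul, inner_smul_left, inner_smul_right, mul_pow,
      mul_pow, norm_sq_eq, inner_eq]
    simp only [Real.norm_eq_abs, sq_abs, conj_trivial]
    ring
  rw [charFunDual_map, charFunDual_map, charFunDual_prod, charFunDual_gaussianReal_zero_one,
    charFunDual_gaussianReal_zero_one, charFunDual_stdGaussian, ← Complex.exp_add, comp_A,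
    innerSL_apply_norm, ← Complex.ofReal_pow, norm_comp_sq]
  have comp_B_inl : L.comp B (1, 0) = L (1, 0) * ‖x‖ + L (0, 1) * β := by
    simp [B, L_apply ‖x‖, mul_comm]
  have comp_B_inr : L.comp B (0, 1) = L (0, 1) * γ := by
    rw [ContinuousLinearMap.comp_apply, show B (0, 1) = (0, γ) by simp [B], L_apply]
    ring
  simp only [ContinuousLinearMap.comp_apply, ContinuousLinearMap.inl_apply,
    ContinuousLinearMap.inr_apply] at comp_B_inl comp_B_inr ⊢
  rw [comp_B_inl, comp_B_inr]
  push_cast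
  ring_nf

lemma lintegral_gaussBump_affine (a γ : ℝ) :
    ∫⁻ t, gaussBump (a - γ * t) ∂(gaussianReal 0 1)
      = ENNReal.ofReal ((√(1 + γ ^ 2))⁻¹ * exp (-(a ^ 2 / (1 + γ ^ 2)) / 2)) := by
  convert lintegral_exp_quadratic_gaussianReal (P := 1 + γ ^ 2) (by positivity) (γ * a) (a ^ 2)
    using 5 with t
  · unfold gaussBump
    congr 2
    ring
  · field_simp
    ring

theorem lintegral_gaussBump_inner_mul_gaussBump_inner (x y : V) (l₁ l₂ : ℝ) :
    ∫⁻ g, gaussBump (l₁ - ⟪x, g⟫) * gaussBump (l₂ - ⟪y, g⟫) ∂(stdGaussian V)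
      = ENNReal.ofReal (bumpKernel x y l₁ l₂) := by
  obtain ⟨β, γ, norm_sq_eq, inner_eq⟩ := exists_coordinates_of_pair x y
  have w_pos : 0 < 1 + γ ^ 2 := by positivity
  calc ∫⁻ g, gaussBump (l₁ - ⟪x, g⟫) * gaussBump (l₂ - ⟪y, g⟫) ∂(stdGaussian V)
      = ∫⁻ p : ℝ × ℝ, gaussBump (l₁ - p.1) * gaussBump (l₂ - p.2)
          ∂((stdGaussian V).map fun g ↦ ((⟪x, g⟫ : ℝ), (⟪y, g⟫ : ℝ))) := by
        rw [lintegral_map (by fun_prop) (by fun_prop)]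
    _ = ∫⁻ s, gaussBump (l₁ - ‖x‖ * s) *
          ENNReal.ofReal ((√(1 + γ ^ 2))⁻¹ * exp (-((l₂ - β * s) ^ 2 / (1 + γ ^ 2)) / 2))
          ∂(gaussianReal 0 1) := by
        rw [map_inner_pair_stdGaussian x y norm_sq_eq inner_eq,
          lintegral_map (by fun_prop) (by fun_prop), lintegral_prod _ (by fun_prop)]
        refine lintegral_congr fun s ↦ ?_
        simp only [sub_add_eq_sub_sub]
        rw [lintegral_const_mul _ (by fun_prop), lintegral_gaussBump_affine]
    _ = ∫⁻ s, ENNReal.ofReal (√(1 + γ ^ 2))⁻¹ *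
          ENNReal.ofReal (exp (-((1 + ‖x‖ ^ 2 + β ^ 2 / (1 + γ ^ 2) - 1) * s ^ 2
            - 2 * (l₁ * ‖x‖ + l₂ * β / (1 + γ ^ 2)) * s + (l₁ ^ 2 + l₂ ^ 2 / (1 + γ ^ 2))) / 2))
          ∂(gaussianReal 0 1) := by
        refine lintegral_congr fun s ↦ ?_
        rw [gaussBump, ENNReal.ofReal_mul (by positivity), mul_left_comm,
          ← ENNReal.ofReal_mul (by positivity), ← exp_add]
        congr 3
        field_simp
        ring
    _ = ENNReal.ofReal (bumpKernel x y l₁ l₂) := by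
        rw [lintegral_const_mul _ (by fun_prop),
          lintegral_exp_quadratic_gaussianReal (by positivity),
          ← ENNReal.ofReal_mul (by positivity)]
        have D_eq : (1 + ‖x‖ ^ 2) * (1 + ‖y‖ ^ 2) - ⟪x, y⟫ ^ 2
            = (1 + γ ^ 2) * (1 + ‖x‖ ^ 2 + β ^ 2 / (1 + γ ^ 2)) := by
          rw [norm_sq_eq, inner_eq]
          field_simp
          ring
        rw [bumpKernel_eq, D_eq, Real.sqrt_mul w_pos.le, mul_inv, mul_assoc, norm_sq_eq, inner_eq]
        congr 5
        have : 0 < (1 + γ ^ 2) * (1 + ‖x‖ ^ 2) + β ^ 2 := by positivity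
        field_simp
        ring

theorem lintegral_prod_gaussBump_inner_mul (x y : V) (k : ℕ) (l₁ l₂ : ℝ) :
    ∫⁻ g : Fin k → V, (∏ i, gaussBump (l₁ - ⟪x, g i⟫)) * ∏ i, gaussBump (l₂ - ⟪y, g i⟫)
        ∂(Measure.pi fun _ ↦ stdGaussian V)
      = ENNReal.ofReal (bumpKernel x y l₁ l₂) ^ k := by
  have measurable_bumps : Measurable fun g : V ↦
    gaussBump (l₁ - ⟪x, g⟫) * gaussBump (l₂ - ⟪y, g⟫) := by fun_prop
  simp_rw [← Finset.prod_mul_distrib]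
  rw [lintegral_prod_eq_prod_lintegral_of_indepFun Finset.univ
    (fun (i : Fin k) (g : Fin k → V) ↦ gaussBump (l₁ - ⟪x, g i⟫) * gaussBump (l₂ - ⟪y, g i⟫))
    (iIndepFun_pi fun _ ↦ measurable_bumps.aemeasurable)
    (fun i ↦ measurable_bumps.comp (measurable_pi_apply i))]
  simp [(measurePreserving_eval (fun _ : Fin k ↦ stdGaussian V) _).lintegral_comp measurable_bumps,
    lintegral_gaussBump_inner_mul_gaussBump_inner]

lemma lintegral_bumpKernel_pow (ρ : Measure V) [SFinite ρ] (k : ℕ) (l₁ l₂ : ℝ) :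
    ∫⁻ p, ENNReal.ofReal (bumpKernel p.1 p.2 l₁ l₂) ^ k ∂(ρ.prod ρ)
      = ∫⁻ g : Fin k → V, (∫⁻ x, ∏ i, gaussBump (l₁ - ⟪x, g i⟫) ∂ρ) *
          (∫⁻ x, ∏ i, gaussBump (l₂ - ⟪x, g i⟫) ∂ρ) ∂(Measure.pi fun _ ↦ stdGaussian V) := by
  simp_rw [← lintegral_prod_gaussBump_inner_mul]
  rw [lintegral_lintegral_swap (by fun_prop)]
  exact lintegral_congr fun g ↦ lintegral_prod_mul (μ := ρ) (ν := ρ)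
    (f := fun x ↦ ∏ i, gaussBump (l₁ - ⟪x, g i⟫)) (g := fun y ↦ ∏ i, gaussBump (l₂ - ⟪y, g i⟫))
    (by fun_prop) (by fun_prop)

theorem PrekopaLeindler.lintegral_bumpKernel_pow_le {ρ : Measure V} [SFinite ρ]
    (hρ : PrekopaLeindler ρ) (k : ℕ) (l₁ l₂ : ℝ) :
    ∫⁻ p, ENNReal.ofReal (bumpKernel p.1 p.2 l₁ l₂) ^ k ∂(ρ.prod ρ)
      ≤ ∫⁻ p, ENNReal.ofReal (bumpKernel p.1 p.2 ((l₁ + l₂) / 2) ((l₁ + l₂) / 2)) ^ k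
          ∂(ρ.prod ρ) := by
  rw [lintegral_bumpKernel_pow, lintegral_bumpKernel_pow]
  refine lintegral_mono fun g ↦ ?_
  rw [← sq]
  refine hρ _ _ _ (by fun_prop) (by fun_prop) (by fun_prop) fun x y ↦ ?_
  rw [← Finset.prod_mul_distrib, ← Finset.prod_pow]
  refine Finset.prod_le_prod' fun i _ ↦ (midpointLogConcave_gaussBump _ _).trans_eq ?_
  congr 2
  rw [inner_smul_left, inner_add_left, smul_eq_mul, conj_trivial]
  ring

end GaussianKernel

/-! ### Two-sided bounds for the kernel -/

section KernelBounds

lemma exp_neg_le_exp_neg_one_div {u : ℝ} (hu : 0 < u) : exp (-u) ≤ exp (-1) / u := by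
  rw [le_div_iff₀ hu, show -1 = -u + (u - 1) by ring, exp_add]
  gcongr
  linarith [Real.add_one_le_exp (u - 1)]

lemma inv_one_sub_sq_le_exp {ϱ : ℝ} (hϱ : |ϱ| ≤ 49 / 50) : (1 - ϱ ^ 2)⁻¹ ≤ exp (49 * |ϱ|) := by
  have ϱ_nonneg := abs_nonneg ϱ
  have pos : 0 < 1 - |ϱ| ^ 2 := by nlinarith
  rw [← sq_abs]
  refine le_trans ?_ (Real.add_one_le_exp _)
  rw [inv_le_iff_one_le_mul₀ pos]
  nlinarith [mul_nonneg ϱ_nonneg (sub_nonneg.2 hϱ),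
    mul_nonneg (mul_nonneg ϱ_nonneg ϱ_nonneg) (sub_nonneg.2 hϱ)]

lemma bivariateGaussian_le {ϱ a b : ℝ} (hϱ : |ϱ| ≤ 49 / 50) (ha : 0 < a) (hb : 0 < b) :
    bivariateGaussian ϱ a b ≤ (exp 1 * (a * b))⁻¹ * exp (50 * |ϱ|) := by
  obtain ⟨neg_le_ϱ, ϱ_le⟩ := abs_le.1 hϱ
  have one_add_pos : 0 < 1 + ϱ := by linarith
  have one_sub_ne : 1 - ϱ ≠ 0 := by linarith
  have one_sub_sq_pos : 0 < 1 - ϱ ^ 2 := by nlinarith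
  have exponent_le : -((a ^ 2 + b ^ 2 - 2 * ϱ * (a * b)) / (1 - ϱ ^ 2)) / 2
      ≤ -(a * b / (1 + ϱ)) := by
    have : a * b / (1 + ϱ) = 2 * (a * b) * (1 - ϱ) / (1 - ϱ ^ 2) / 2 := by
      rw [show 1 - ϱ ^ 2 = (1 - ϱ) * (1 + ϱ) by ring]
      field_simp
    rw [this, neg_div, neg_le_neg_iff]
    gcongr
    linarith [two_mul_le_add_sq a b]
  have le_sqrt : 1 - ϱ ^ 2 ≤ √(1 - ϱ ^ 2) :=
    Real.le_sqrt_of_sq_le (by nlinarith [sq_nonneg ϱ])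
  calc bivariateGaussian ϱ a b
      ≤ (1 - ϱ ^ 2)⁻¹ * (exp (-1) / (a * b / (1 + ϱ))) := by
        unfold bivariateGaussian
        gcongr
        exact (exp_le_exp.2 exponent_le).trans (exp_neg_le_exp_neg_one_div (by positivity))
    _ = (exp 1 * (a * b))⁻¹ * ((1 + ϱ) * (1 - ϱ ^ 2)⁻¹) := by
        rw [exp_neg]
        field_simp
    _ ≤ (exp 1 * (a * b))⁻¹ * (exp |ϱ| * exp (49 * |ϱ|)) := by
        gcongr
        · linarith [Real.add_one_le_exp |ϱ|, le_abs_self ϱ]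
        · exact inv_one_sub_sq_le_exp hϱ
    _ = (exp 1 * (a * b))⁻¹ * exp (50 * |ϱ|) := by
        rw [← exp_add]
        ring_nf

lemma exp_sub_sq_le_one_add {d : ℝ} (hd : -(1 / 2) ≤ d) : exp (d - d ^ 2) ≤ 1 + d := by
  have pos : 0 < 1 + d := by linarith
  rw [← neg_sub, exp_neg]
  refine inv_le_of_inv_le₀ pos ?_
  rcases le_or_gt 0 d with d_nonneg | d_neg
  · refine le_trans ?_ (Real.add_one_le_exp _)
    rw [inv_le_iff_one_le_mul₀ pos]
    nlinarith [pow_nonneg d_nonneg 3]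
  · refine le_trans ?_ (Real.quadratic_le_exp_of_nonneg (by nlinarith))
    rw [inv_le_iff_one_le_mul₀ pos]
    nlinarith [sq_nonneg d, mul_nonneg (sq_nonneg d) pos.le, mul_nonneg (sq_nonneg (d ^ 2)) pos.le]

lemma exp_le_mul_exp_neg_sq_div_two {a τ : ℝ} (hτ : τ ≤ 1 / 2) (ha : |a - 1| ≤ τ) :
    exp (-1 / 2 - 3 / 2 * τ ^ 2) ≤ a * exp (-a ^ 2 / 2) := by
  obtain ⟨neg_le, le⟩ := abs_le.1 ha
  calc exp (-1 / 2 - 3 / 2 * τ ^ 2) ≤ exp ((a - 1) - (a - 1) ^ 2 + -a ^ 2 / 2) :=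
        exp_le_exp.2 (by nlinarith [sq_le_sq' neg_le le])
    _ = exp ((a - 1) - (a - 1) ^ 2) * exp (-a ^ 2 / 2) := exp_add _ _
    _ ≤ a * exp (-a ^ 2 / 2) := by
        gcongr
        exact (exp_sub_sq_le_one_add (by linarith)).trans_eq (by ring)

lemma bivariateGaussian_exponent_le {ϱ a b : ℝ} (hϱ : |ϱ| ≤ 1 / 2) (ha : |a| ≤ 3 / 2)
    (hb : |b| ≤ 3 / 2) :
    (a ^ 2 + b ^ 2 - 2 * ϱ * (a * b)) / (1 - ϱ ^ 2) ≤ a ^ 2 + b ^ 2 + 10 * |ϱ| := by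
  have ϱ_nonneg := abs_nonneg ϱ
  have one_sub_sq : 3 / 4 ≤ 1 - |ϱ| ^ 2 := by nlinarith
  have cross_le : -(ϱ * (a * b)) ≤ |ϱ| * (9 / 4) := by
    calc -(ϱ * (a * b)) ≤ |ϱ * (a * b)| := neg_le_abs _
      _ = |ϱ| * (|a| * |b|) := by rw [abs_mul, abs_mul]
      _ ≤ |ϱ| * (3 / 2 * (3 / 2)) := by gcongr
      _ = |ϱ| * (9 / 4) := by ring
  have a_sq_le : a ^ 2 ≤ 9 / 4 := by nlinarith [sq_abs a, abs_nonneg a]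
  have b_sq_le : b ^ 2 ≤ 9 / 4 := by nlinarith [sq_abs b, abs_nonneg b]
  have square_le : |ϱ| ^ 2 * (a ^ 2 + b ^ 2) ≤ |ϱ| * (9 / 4) := by
    nlinarith [mul_nonneg ϱ_nonneg (sub_nonneg.2 hϱ), mul_nonneg ϱ_nonneg ϱ_nonneg]
  rw [← sq_abs ϱ, div_le_iff₀ (by linarith)]
  nlinarith [mul_nonneg ϱ_nonneg (sub_nonneg.2 one_sub_sq)]

lemma le_bivariateGaussian {ϱ a b τ : ℝ} (hϱ : |ϱ| ≤ 1 / 2) (hτ : τ ≤ 1 / 2)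
    (ha : |a - 1| ≤ τ) (hb : |b - 1| ≤ τ) :
    (exp 1 * (a * b))⁻¹ * exp (-3 * τ ^ 2 - 5 * |ϱ|) ≤ bivariateGaussian ϱ a b := by
  obtain ⟨neg_le_a, a_le⟩ := abs_le.1 ha
  obtain ⟨neg_le_b, b_le⟩ := abs_le.1 hb
  have a_pos : 0 < a := by linarith
  have b_pos : 0 < b := by linarith
  have one_sub_sq_pos : 0 < 1 - ϱ ^ 2 := by
    nlinarith [sq_abs ϱ, abs_nonneg ϱ]
  have one_le_inv_sqrt : 1 ≤ (√(1 - ϱ ^ 2))⁻¹ := by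
    rw [one_le_inv₀ (Real.sqrt_pos.2 one_sub_sq_pos), Real.sqrt_le_one]
    linarith [sq_nonneg ϱ]
  calc (exp 1 * (a * b))⁻¹ * exp (-3 * τ ^ 2 - 5 * |ϱ|)
      = (a * b)⁻¹ * (exp (-1 / 2 - 3 / 2 * τ ^ 2) * exp (-1 / 2 - 3 / 2 * τ ^ 2))
          * exp (-5 * |ϱ|) := by
        rw [mul_inv, ← exp_neg, ← exp_add, mul_comm (exp (-1)), mul_assoc, mul_assoc, ← exp_add,
          ← exp_add]
        ring_nf
    _ ≤ (a * b)⁻¹ * ((a * exp (-a ^ 2 / 2)) * (b * exp (-b ^ 2 / 2))) * exp (-5 * |ϱ|) := by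
        gcongr
        · exact exp_le_mul_exp_neg_sq_div_two hτ ha
        · exact exp_le_mul_exp_neg_sq_div_two hτ hb
    _ = 1 * exp (-(a ^ 2 + b ^ 2 + 10 * |ϱ|) / 2) := by
        rw [show -(a ^ 2 + b ^ 2 + 10 * |ϱ|) / 2 = -a ^ 2 / 2 + -b ^ 2 / 2 + -5 * |ϱ| by ring,
          exp_add, exp_add]
        field_simp
    _ ≤ bivariateGaussian ϱ a b := by
        unfold bivariateGaussian
        gcongr
        exact bivariateGaussian_exponent_le hϱ (abs_le.2 ⟨by linarith, by linarith⟩)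
          (abs_le.2 ⟨by linarith, by linarith⟩)

variable {V : Type*} [NormedAddCommGroup V] [InnerProductSpace ℝ V]

lemma abs_smoothedCorrelation_le {x y : V} (hx : ‖x‖ ≤ 7) (hy : ‖y‖ ≤ 7) :
    |smoothedCorrelation x y| ≤ 49 / 50 := by
  have norm_sq_le {z : V} (hz : ‖z‖ ≤ 7) : ‖z‖ ^ 2 ≤ 49 / 50 * smoothedNorm z ^ 2 := by
    rw [smoothedNorm_sq]
    nlinarith [norm_nonneg z]
  have := smoothedNorm_pos x
  have := smoothedNorm_pos y
  rw [smoothedCorrelation, abs_div, abs_of_pos (by positivity : 0 < smoothedNorm x * _),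
    div_le_iff₀ (by positivity)]
  refine (abs_real_inner_le_norm x y).trans (le_of_sq_le_sq ?_ (by positivity))
  calc (‖x‖ * ‖y‖) ^ 2 = ‖x‖ ^ 2 * ‖y‖ ^ 2 := mul_pow _ _ _
    _ ≤ (49 / 50 * smoothedNorm x ^ 2) * (49 / 50 * smoothedNorm y ^ 2) := by
        gcongr
        exacts [norm_sq_le hx, norm_sq_le hy]
    _ = (49 / 50 * (smoothedNorm x * smoothedNorm y)) ^ 2 := by ring

lemma bumpKernel_le {x y : V} (hx : ‖x‖ ≤ 7) (hy : ‖y‖ ≤ 7) {l₁ l₂ : ℝ} (hl₁ : 0 < l₁)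
    (hl₂ : 0 < l₂) :
    bumpKernel x y l₁ l₂ ≤ (exp 1 * (l₁ * l₂))⁻¹ * exp (50 * |smoothedCorrelation x y|) := by
  have := smoothedNorm_pos x
  have := smoothedNorm_pos y
  refine (mul_le_mul_of_nonneg_left (bivariateGaussian_le (abs_smoothedCorrelation_le hx hy)
    (by positivity) (by positivity)) (by positivity)).trans_eq ?_
  field_simp

lemma le_bumpKernel {x y : V} {l₁ l₂ τ : ℝ} (hϱ : |smoothedCorrelation x y| ≤ 1 / 2)
    (hτ : τ ≤ 1 / 2) (hl₁ : |l₁ / smoothedNorm x - 1| ≤ τ)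
    (hl₂ : |l₂ / smoothedNorm y - 1| ≤ τ) :
    (exp 1 * (l₁ * l₂))⁻¹ * exp (-3 * τ ^ 2 - 5 * |smoothedCorrelation x y|)
      ≤ bumpKernel x y l₁ l₂ := by
  have := smoothedNorm_pos x
  have := smoothedNorm_pos y
  refine le_of_eq_of_le ?_
    (mul_le_mul_of_nonneg_left (le_bivariateGaussian hϱ hτ hl₁ hl₂) (by positivity))
  field_simp

lemma bumpKernel_nonneg (x y : V) (l₁ l₂ : ℝ) : 0 ≤ bumpKernel x y l₁ l₂ := by
  have := smoothedNorm_pos x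
  have := smoothedNorm_pos y
  unfold bumpKernel bivariateGaussian
  positivity

lemma bumpKernel_self_pow_le {x y : V} (hx : ‖x‖ ≤ 7) (hy : ‖y‖ ≤ 7) {l : ℝ} (hl : 0 < l)
    (k : ℕ) :
    bumpKernel x y l l ^ k ≤ (exp 1 * (l * l))⁻¹ ^ k *
      exp (50 * k * |⟪x, (smoothedNorm y)⁻¹ • y⟫|) := by
  calc bumpKernel x y l l ^ k
      ≤ ((exp 1 * (l * l))⁻¹ * exp (50 * |⟪x, (smoothedNorm y)⁻¹ • y⟫|)) ^ k := by
        refine pow_le_pow_left₀ (bumpKernel_nonneg x y l l) ((bumpKernel_le hx hy hl hl).trans ?_) k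
        exact mul_le_mul_of_nonneg_left
          (exp_le_exp.2 (by linarith [abs_smoothedCorrelation_le_abs_inner x y])) (by positivity)
    _ = (exp 1 * (l * l))⁻¹ ^ k * exp (50 * k * |⟪x, (smoothedNorm y)⁻¹ • y⟫|) := by
        rw [mul_pow, ← Real.exp_nat_mul]
        ring_nf

end KernelBounds

/-! ### Exponential moments -/

section ExponentialMoments

lemma one_div_factorial_le {m : ℕ} (hm : 1 ≤ m) :
    (1 : ℝ) / Nat.factorial m ≤ (3 / m) ^ m := by
  have m_pos : (0 : ℝ) < m := by exact_mod_cast hm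
  have exp_le : exp m ≤ 3 ^ m := by
    rw [← Real.exp_one_rpow, Real.rpow_natCast]
    gcongr
    exact Real.exp_one_lt_three.le
  rw [div_pow, le_div_iff₀ (by positivity), one_div_mul_eq_div]
  exact (Real.pow_div_factorial_le_exp _ m_pos.le m).trans exp_le

variable {K α g k : ℝ}

lemma mul_rpow_one_div_le_max (hα₁ : 1 ≤ α) (hα₂ : α ≤ 2) {t : ℝ} (ht : 0 < t) :
    t * t⁻¹ ^ (1 / α) ≤ max 1 √t := by
  have α_pos : 0 < α := by linarith
  have eq_rpow : t * t⁻¹ ^ (1 / α) = t ^ (1 - 1 / α) := by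
    rw [Real.inv_rpow ht.le, Real.rpow_sub ht, Real.rpow_one, div_eq_mul_inv t]
  have le_one : 1 / α ≤ 1 := by rwa [div_le_one α_pos]
  have half_le : 1 / 2 ≤ 1 / α := one_div_le_one_div_of_le α_pos hα₂
  rw [eq_rpow]
  rcases le_total t 1 with h | h
  · exact le_max_of_le_left (Real.rpow_le_one ht.le h (by linarith))
  · refine le_max_of_le_right ?_
    rw [Real.sqrt_eq_rpow]
    exact Real.rpow_le_rpow_of_exponent_le h (by linarith)

lemma rpow_one_div_div_le (hK : 0 < K) (hα₁ : 1 ≤ α) (hα₂ : α ≤ 2) (hg : 0 < g) (hk : 0 < k)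
    (hkK : k ≤ 1e-8 * K * g ^ α) {q : ℝ} (hq : 0 < q) :
    k * (q / K) ^ (1 / α) / q ≤ 1e-4 * g * max 1 √(k / q) := by
  have α_pos : 0 < α := by linarith
  have root_const : (1e-8 : ℝ) ^ (1 / α) ≤ 1e-4 := by
    calc (1e-8 : ℝ) ^ (1 / α) ≤ (1e-8 : ℝ) ^ (1 / 2 : ℝ) :=
          Real.rpow_le_rpow_of_exponent_ge (by norm_num) (by norm_num)
            (one_div_le_one_div_of_le α_pos hα₂)
      _ = 1e-4 := by
          rw [← Real.sqrt_eq_rpow, show (1e-8 : ℝ) = 1e-4 ^ 2 by norm_num,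
            Real.sqrt_sq (by norm_num)]
  have quotient_le : q / K ≤ 1e-8 * g ^ α * (k / q)⁻¹ := by
    rw [div_le_iff₀ hK, inv_div]
    calc q = (q / k) * k := by field_simp
      _ ≤ (q / k) * (1e-8 * K * g ^ α) := by gcongr
      _ = 1e-8 * g ^ α * (q / k) * K := by ring
  have root_le : (q / K) ^ (1 / α) ≤ 1e-4 * g * (k / q)⁻¹ ^ (1 / α) := by
    calc (q / K) ^ (1 / α) ≤ (1e-8 * g ^ α * (k / q)⁻¹) ^ (1 / α) := by gcongr
      _ = (1e-8 : ℝ) ^ (1 / α) * g * (k / q)⁻¹ ^ (1 / α) := by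
          rw [Real.mul_rpow (by positivity) (by positivity),
            Real.mul_rpow (by positivity) (by positivity), ← Real.rpow_mul hg.le,
            mul_one_div_cancel α_pos.ne', Real.rpow_one]
      _ ≤ 1e-4 * g * (k / q)⁻¹ ^ (1 / α) := by gcongr
  calc k * (q / K) ^ (1 / α) / q ≤ k * (1e-4 * g * (k / q)⁻¹ ^ (1 / α)) / q := by gcongr
    _ = 1e-4 * g * ((k / q) * (k / q)⁻¹ ^ (1 / α)) := by ring
    _ ≤ 1e-4 * g * max 1 √(k / q) := by
        gcongr
        exact mul_rpow_one_div_le_max hα₁ hα₂ (by positivity)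

lemma cosh_term_le (hK : 0 < K) (hα₁ : 1 ≤ α) (hα₂ : α ≤ 2) (hg : 0 < g) (hg1 : g ≤ 1)
    (hk : 0 < k) (hkK : k ≤ 1e-8 * K * g ^ α) {j : ℕ} (hj : 1 ≤ j) :
    (50 * k) ^ (2 * j) / Nat.factorial (2 * j) * ((((2 * j : ℕ) : ℝ) / K) ^ (1 / α)) ^ (2 * j)
      ≤ (0.015 ^ 2) ^ j + (0.015 ^ 2 * g ^ 2 * k / 2) ^ j / Nat.factorial j := by
  set q : ℝ := ((2 * j : ℕ) : ℝ) with q_def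
  have q_eq : q = 2 * j := by simp [q_def]
  have j_pos : (0 : ℝ) < j := by exact_mod_cast hj
  have q_pos : 0 < q := by linarith
  have term_le : (50 * k) ^ (2 * j) / Nat.factorial (2 * j) * ((q / K) ^ (1 / α)) ^ (2 * j)
      ≤ (0.015 ^ 2 * g ^ 2 * max 1 √(k / q) ^ 2) ^ j := by
    calc (50 * k) ^ (2 * j) / Nat.factorial (2 * j) * ((q / K) ^ (1 / α)) ^ (2 * j)
        = (50 * k) ^ (2 * j) * (1 / Nat.factorial (2 * j)) * ((q / K) ^ (1 / α)) ^ (2 * j) := by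
          ring
      _ ≤ (50 * k) ^ (2 * j) * (3 / q) ^ (2 * j) * ((q / K) ^ (1 / α)) ^ (2 * j) := by
          gcongr
          exact one_div_factorial_le (by omega)
      _ = (150 * (k * (q / K) ^ (1 / α) / q)) ^ (2 * j) := by
          rw [← mul_pow, ← mul_pow]
          ring_nf
      _ ≤ (150 * (1e-4 * g * max 1 √(k / q))) ^ (2 * j) := by
          gcongr
          exact rpow_one_div_div_le hK hα₁ hα₂ hg hk hkK q_pos
      _ = (0.015 ^ 2 * g ^ 2 * max 1 √(k / q) ^ 2) ^ j := by
          rw [pow_mul]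
          ring_nf
  refine term_le.trans ?_
  rcases le_total (√(k / q)) 1 with h | h
  · rw [max_eq_left h, one_pow, mul_one]
    refine le_add_of_le_of_nonneg (pow_le_pow_left₀ (by positivity) ?_ j) (by positivity)
    exact mul_le_of_le_one_right (by positivity) (pow_le_one₀ hg.le hg1)
  · rw [max_eq_right h, Real.sq_sqrt (by positivity), q_eq,
      show (0.015 : ℝ) ^ 2 * g ^ 2 * (k / (2 * j)) = (0.015 ^ 2 * g ^ 2 * k / 2) / j by ring,
      div_pow]
    refine le_add_of_nonneg_of_le (by positivity) ?_
    gcongr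
    exact_mod_cast Nat.factorial_le_pow j

lemma ofReal_exp_mul_abs_le_tsum {b : ℝ} (hb : 0 ≤ b) (u : ℝ) :
    ENNReal.ofReal (exp (b * |u|)) ≤ 2 * ∑' j : ℕ,
      ENNReal.ofReal (b ^ (2 * j) / Nat.factorial (2 * j)) * ENNReal.ofReal (u ^ (2 * j)) := by
  have term_eq (j : ℕ) :
      ENNReal.ofReal (b ^ (2 * j) / Nat.factorial (2 * j)) * ENNReal.ofReal (u ^ (2 * j))
        = ENNReal.ofReal ((b * u) ^ (2 * j) / Nat.factorial (2 * j)) := by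
    rw [← ENNReal.ofReal_mul (by positivity), mul_pow]
    ring_nf
  have hasSum_cosh := Real.hasSum_cosh (b * u)
  have term_nonneg (j : ℕ) : 0 ≤ (b * u) ^ (2 * j) / Nat.factorial (2 * j) := by
    rw [pow_mul]
    positivity
  simp_rw [term_eq]
  rw [← ENNReal.ofReal_tsum_of_nonneg term_nonneg hasSum_cosh.summable, hasSum_cosh.tsum_eq,
    ← ENNReal.ofReal_ofNat, ← ENNReal.ofReal_mul (by norm_num)]
  refine ENNReal.ofReal_le_ofReal ?_
  rw [← Real.cosh_abs, abs_mul, abs_of_nonneg hb, Real.cosh_eq]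
  linarith [exp_pos (-(b * |u|))]

lemma lintegral_exp_mul_abs_le_tsum {Ω : Type*} [MeasurableSpace Ω] (μ : Measure Ω) {u : Ω → ℝ}
    (hu : Measurable u) {c : ℝ} (hc : 0 ≤ c) :
    ∫⁻ ω, ENNReal.ofReal (exp (c * |u ω|)) ∂μ
      ≤ 2 * ∑' j : ℕ, ENNReal.ofReal (c ^ (2 * j) / Nat.factorial (2 * j)) *
          ∫⁻ ω, ENNReal.ofReal (u ω ^ (2 * j)) ∂μ := by
  refine (lintegral_mono fun ω ↦ ofReal_exp_mul_abs_le_tsum hc _).trans_eq ?_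
  rw [lintegral_const_mul' _ _ (by simp), lintegral_tsum fun j ↦ by fun_prop]
  simp_rw [lintegral_const_mul' _ _ ENNReal.ofReal_ne_top]

theorem lintegral_exp_abs_le_of_lintegral_pow_le {Ω : Type*} [MeasurableSpace Ω] {μ : Measure Ω}
    [IsProbabilityMeasure μ] {u : Ω → ℝ} (hu : Measurable u) (hK : 0 < K) (hα₁ : 1 ≤ α)
    (hα₂ : α ≤ 2) (moment_le : ∀ j : ℕ, 1 ≤ j → ∫⁻ ω, ENNReal.ofReal (u ω ^ (2 * j)) ∂μ
      ≤ ENNReal.ofReal ((((2 * j : ℕ) : ℝ) / K) ^ (1 / α)) ^ (2 * j))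
    (hg : 0 < g) (hg1 : g ≤ 1) (hk : 0 < k) (hkK : k ≤ 1e-8 * K * g ^ α) :
    ∫⁻ ω, ENNReal.ofReal (exp (50 * k * |u ω|)) ∂μ
      ≤ ENNReal.ofReal (6 * exp (k * g ^ 2 / 1000)) := by
  set s : ℝ := 0.015 ^ 2 * g ^ 2 * k / 2 with s_def
  have term_le (j : ℕ) : ENNReal.ofReal ((50 * k) ^ (2 * j) / Nat.factorial (2 * j)) *
      ∫⁻ ω, ENNReal.ofReal (u ω ^ (2 * j)) ∂μ
        ≤ ENNReal.ofReal ((0.015 ^ 2) ^ j + s ^ j / Nat.factorial j) := by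
    rcases Nat.eq_zero_or_pos j with rfl | hj
    · simp
    refine (mul_le_mul_right (moment_le j hj) _).trans ?_
    rw [← ENNReal.ofReal_pow (by positivity), ← ENNReal.ofReal_mul (by positivity)]
    exact ENNReal.ofReal_le_ofReal (cosh_term_le hK hα₁ hα₂ hg hg1 hk hkK hj)
  have hasSum_bound : HasSum (fun j : ℕ ↦ (0.015 ^ 2 : ℝ) ^ j + s ^ j / Nat.factorial j)
      ((1 - 0.015 ^ 2)⁻¹ + exp s) := by
    refine (hasSum_geometric_of_lt_one (by norm_num) (by norm_num)).add ?_
    rw [Real.exp_eq_exp_ℝ]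
    exact NormedSpace.expSeries_div_hasSum_exp s
  calc ∫⁻ ω, ENNReal.ofReal (exp (50 * k * |u ω|)) ∂μ
      ≤ 2 * ∑' j : ℕ, ENNReal.ofReal ((50 * k) ^ (2 * j) / Nat.factorial (2 * j)) *
          ∫⁻ ω, ENNReal.ofReal (u ω ^ (2 * j)) ∂μ :=
        lintegral_exp_mul_abs_le_tsum μ hu (by positivity)
    _ ≤ 2 * ∑' j : ℕ, ENNReal.ofReal ((0.015 ^ 2) ^ j + s ^ j / Nat.factorial j) := by
        gcongr with j
        exact term_le j
    _ = ENNReal.ofReal (2 * ((1 - 0.015 ^ 2)⁻¹ + exp s)) := by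
        rw [← ENNReal.ofReal_tsum_of_nonneg (fun j ↦ by positivity) hasSum_bound.summable,
          hasSum_bound.tsum_eq, ENNReal.ofReal_mul (by norm_num), ENNReal.ofReal_ofNat]
    _ ≤ ENNReal.ofReal (6 * exp (k * g ^ 2 / 1000)) := by
        refine ENNReal.ofReal_le_ofReal ?_
        have exp_s_le : exp s ≤ exp (k * g ^ 2 / 1000) := by
          refine exp_le_exp.2 ?_
          nlinarith [mul_pos hk (pow_pos hg 2)]
        have one_le_exp : 1 ≤ exp (k * g ^ 2 / 1000) := Real.one_le_exp (by positivity)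
        norm_num
        linarith

end ExponentialMoments

/-! ### Separation of distant level sets of the norm -/

section CellMeasure

variable {V : Type*} [NormedAddCommGroup V] [InnerProductSpace ℝ V] [MeasurableSpace V]
  [BorelSpace V]

/-- The data of the theorem in terms of the law of the normalized vector `AX / √n`: a log-concave
law with second moment `1` whose marginals have `2j`-th moments at most `(2j / K) ^ (2j / α)`.
The parameter `K` is `ñ ^ (α / 2)`. -/
structure IsPsiAlphaLaw (ν : Measure V) (K α : ℝ) : Prop where
  isProbabilityMeasure : IsProbabilityMeasure ν
  isLogConcaveLaw : IsLogConcaveLaw ν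
  lintegral_norm_sq : ∫⁻ x, ENNReal.ofReal (‖x‖ ^ 2) ∂ν = 1
  lintegral_inner_pow_le : ∀ j : ℕ, 1 ≤ j → ∀ y : V, ‖y‖ ≤ 1 →
    ∫⁻ x, ENNReal.ofReal (⟪x, y⟫ ^ (2 * j)) ∂ν
      ≤ ENNReal.ofReal ((((2 * j : ℕ) : ℝ) / K) ^ (1 / α)) ^ (2 * j)
  one_le : 1 ≤ α
  le_two : α ≤ 2
  pos : 0 < K

variable [FiniteDimensional ℝ V] {ν : Measure V} {K α g : ℝ} {k : ℕ}

namespace IsPsiAlphaLaw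

lemma lintegral_exp_inner_le (S : IsPsiAlphaLaw ν K α) (hg : 0 < g) (hg1 : g ≤ 1) (hk : 1 ≤ k)
    (hkK : (k : ℝ) ≤ 1e-8 * K * g ^ α) {y : V} (hy : ‖y‖ ≤ 1) :
    ∫⁻ x, ENNReal.ofReal (exp (50 * k * |⟪x, y⟫|)) ∂ν
      ≤ ENNReal.ofReal (6 * exp (k * g ^ 2 / 1000)) :=
  have := S.isProbabilityMeasure
  lintegral_exp_abs_le_of_lintegral_pow_le (by fun_prop) S.pos S.one_le S.le_two
    (fun j hj ↦ S.lintegral_inner_pow_le j hj y hy) hg hg1 (by exact_mod_cast hk) hkK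

lemma lintegral_bumpKernel_self_pow_le (S : IsPsiAlphaLaw ν K α) (hg : 0 < g) (hg1 : g ≤ 1)
    (hk : 1 ≤ k) (hkK : (k : ℝ) ≤ 1e-8 * K * g ^ α) {l : ℝ} (hl : 0 < l) :
    ∫⁻ p in Metric.closedBall 0 7 ×ˢ Metric.closedBall 0 7,
        ENNReal.ofReal (bumpKernel p.1 p.2 l l) ^ k ∂(ν.prod ν)
      ≤ ENNReal.ofReal ((exp 1 * (l * l))⁻¹ ^ k * (6 * exp (k * g ^ 2 / 1000))) := by
  have := S.isProbabilityMeasure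
  have measurable_exp : Measurable fun p : V × V ↦
      ENNReal.ofReal (exp (50 * k * |⟪p.1, (smoothedNorm p.2)⁻¹ • p.2⟫|)) := by fun_prop
  calc ∫⁻ p in Metric.closedBall 0 7 ×ˢ Metric.closedBall 0 7,
        ENNReal.ofReal (bumpKernel p.1 p.2 l l) ^ k ∂(ν.prod ν)
      ≤ ∫⁻ p in Metric.closedBall 0 7 ×ˢ Metric.closedBall 0 7,
          ENNReal.ofReal ((exp 1 * (l * l))⁻¹ ^ k) *
          ENNReal.ofReal (exp (50 * k * |⟪p.1, (smoothedNorm p.2)⁻¹ • p.2⟫|)) ∂(ν.prod ν) := by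
        refine setLIntegral_mono' (measurableSet_closedBall.prod measurableSet_closedBall) ?_
        rintro ⟨x, y⟩ ⟨hx, hy⟩
        rw [← ENNReal.ofReal_mul (by positivity),
          ← ENNReal.ofReal_pow (bumpKernel_nonneg x y l l)]
        exact ENNReal.ofReal_le_ofReal (bumpKernel_self_pow_le (mem_closedBall_zero_iff.1 hx)
          (mem_closedBall_zero_iff.1 hy) hl k)
    _ ≤ ∫⁻ p, ENNReal.ofReal ((exp 1 * (l * l))⁻¹ ^ k) *
          ENNReal.ofReal (exp (50 * k * |⟪p.1, (smoothedNorm p.2)⁻¹ • p.2⟫|)) ∂(ν.prod ν) :=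
        setLIntegral_le_lintegral _ _
    _ = ENNReal.ofReal ((exp 1 * (l * l))⁻¹ ^ k) * ∫⁻ y, ∫⁻ x,
          ENNReal.ofReal (exp (50 * k * |⟪x, (smoothedNorm y)⁻¹ • y⟫|)) ∂ν ∂ν := by
        rw [lintegral_const_mul' _ _ ENNReal.ofReal_ne_top,
          lintegral_prod_symm _ measurable_exp.aemeasurable]
    _ ≤ ENNReal.ofReal ((exp 1 * (l * l))⁻¹ ^ k) *
          ∫⁻ _, ENNReal.ofReal (6 * exp (k * g ^ 2 / 1000)) ∂ν := by
        gcongr with y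
        exact S.lintegral_exp_inner_le hg hg1 hk hkK (norm_inv_smoothedNorm_smul_le y)
    _ = ENNReal.ofReal ((exp 1 * (l * l))⁻¹ ^ k * (6 * exp (k * g ^ 2 / 1000))) := by
        rw [lintegral_const, measure_univ, mul_one, ← ENNReal.ofReal_mul (by positivity)]

end IsPsiAlphaLaw

lemma inv_sq_midpoint_le {l₁ l₂ : ℝ} (hl₁ : 0 < l₁) (hl₂ : 0 < l₂)
    (h50 : ((l₁ + l₂) / 2) ^ 2 ≤ 50) :
    (exp 1 * ((l₁ + l₂) / 2 * ((l₁ + l₂) / 2)))⁻¹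
      ≤ exp (-((l₂ - l₁) ^ 2 / 200)) * (exp 1 * (l₁ * l₂))⁻¹ := by
  have mul_le : l₁ * l₂ ≤ exp (-((l₂ - l₁) ^ 2 / 200)) * ((l₁ + l₂) / 2 * ((l₁ + l₂) / 2)) := by
    have exp_ge := Real.add_one_le_exp (-((l₂ - l₁) ^ 2 / 200))
    have := mul_le_mul_of_nonneg_right exp_ge (sq_nonneg ((l₁ + l₂) / 2))
    nlinarith [sq_nonneg (l₂ - l₁)]
  rw [← div_eq_mul_inv, le_div_iff₀ (by positivity), inv_mul_le_iff₀ (by positivity)]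
  linarith [mul_le_mul_of_nonneg_left mul_le (exp_pos 1).le]

/-- The gain `(l₂ - l₁)² / 200` from the midpoint beats all the error terms. -/
lemma kernel_upper_le_exp_mul_kernel_lower {l₁ l₂ : ℝ} (hl₁ : 0 < l₁) (hg : 0 < g)
    (hgap : g ≤ l₂ - l₁) (h50 : ((l₁ + l₂) / 2) ^ 2 ≤ 50) :
    (exp 1 * ((l₁ + l₂) / 2 * ((l₁ + l₂) / 2)))⁻¹ ^ k * (6 * exp (k * g ^ 2 / 1000))
      ≤ 6 * exp (-(k * (l₂ - l₁) ^ 2 / 400)) *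
        ((exp 1 * (l₁ * l₂))⁻¹ * exp (-3 * (g / 100) ^ 2 - 5 * (g ^ 2 / 8000))) ^ k := by
  have hl₂ : 0 < l₂ := by linarith
  have gap_sq : (k : ℝ) * g ^ 2 ≤ k * (l₂ - l₁) ^ 2 := by gcongr
  have : (0 : ℝ) ≤ k * g ^ 2 := by positivity
  calc (exp 1 * ((l₁ + l₂) / 2 * ((l₁ + l₂) / 2)))⁻¹ ^ k * (6 * exp (k * g ^ 2 / 1000))
      ≤ (exp (-((l₂ - l₁) ^ 2 / 200)) * (exp 1 * (l₁ * l₂))⁻¹) ^ k *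
          (6 * exp (k * g ^ 2 / 1000)) := by
        gcongr
        exact inv_sq_midpoint_le hl₁ hl₂ h50
    _ = 6 * ((exp 1 * (l₁ * l₂))⁻¹ ^ k *
          exp (k * (-((l₂ - l₁) ^ 2 / 200)) + k * g ^ 2 / 1000)) := by
        rw [mul_pow, ← Real.exp_nat_mul, Real.exp_add]
        ring
    _ ≤ 6 * ((exp 1 * (l₁ * l₂))⁻¹ ^ k * exp (-(k * (l₂ - l₁) ^ 2 / 400)
          + k * (-3 * (g / 100) ^ 2 - 5 * (g ^ 2 / 8000)))) := by
        refine mul_le_mul_of_nonneg_left (mul_le_mul_of_nonneg_left (exp_le_exp.2 ?_)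
          (by positivity)) (by norm_num)
        linarith
    _ = _ := by
        rw [mul_pow, ← Real.exp_nat_mul, Real.exp_add]
        ring

lemma abs_div_sub_one_le {l r τ : ℝ} (hr : 1 ≤ r) (h : |l - r| ≤ τ) : |l / r - 1| ≤ τ := by
  have r_pos : 0 < r := by linarith
  rw [div_sub_one r_pos.ne', abs_div, abs_of_pos r_pos]
  exact (div_le_self (abs_nonneg _) hr).trans h

theorem IsPsiAlphaLaw.measure_cell_le (S : IsPsiAlphaLaw ν K α) (hg : 0 < g) (hg1 : g ≤ 1)
    (hk : 1 ≤ k) (hkK : (k : ℝ) ≤ 1e-8 * K * g ^ α) {l₁ l₂ : ℝ} (hl₁ : 0 < l₁)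
    (hgap : g ≤ l₂ - l₁) (h50 : ((l₁ + l₂) / 2) ^ 2 ≤ 50) {D : Set (V × V)} (hD : MeasurableSet D)
    (hD7 : D ⊆ Metric.closedBall 0 7 ×ˢ Metric.closedBall 0 7)
    (hDϱ : ∀ p ∈ D, |smoothedCorrelation p.1 p.2| ≤ g ^ 2 / 8000)
    (hD₁ : ∀ p ∈ D, |l₁ - smoothedNorm p.1| ≤ g / 100)
    (hD₂ : ∀ p ∈ D, |l₂ - smoothedNorm p.2| ≤ g / 100) :
    (ν.prod ν) D ≤ ENNReal.ofReal (6 * exp (-(k * (l₂ - l₁) ^ 2 / 400))) := by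
  have := S.isProbabilityMeasure
  set low : ℝ := (exp 1 * (l₁ * l₂))⁻¹ * exp (-3 * (g / 100) ^ 2 - 5 * (g ^ 2 / 8000))
  have hl₂ : 0 < l₂ := by linarith
  have low_pow_pos : 0 < low ^ k := by positivity
  have low_le {p : V × V} (hp : p ∈ D) : low ≤ bumpKernel p.1 p.2 l₁ l₂ := by
    have ϱ_le := hDϱ p hp
    refine le_trans ?_ (le_bumpKernel (by nlinarith) (by linarith)
      (abs_div_sub_one_le (one_le_smoothedNorm p.1) (hD₁ p hp))
      (abs_div_sub_one_le (one_le_smoothedNorm p.2) (hD₂ p hp)))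
    exact mul_le_mul_of_nonneg_left (exp_le_exp.2 (by linarith)) (by positivity)
  refine (ENNReal.mul_le_mul_iff_right (a := ENNReal.ofReal (low ^ k)) (by simpa using low_pow_pos)
    ENNReal.ofReal_ne_top).1 ?_
  calc ENNReal.ofReal (low ^ k) * (ν.prod ν) D
      = ∫⁻ _ in D, ENNReal.ofReal (low ^ k) ∂(ν.prod ν) := (setLIntegral_const _ _).symm
    _ ≤ ∫⁻ p in D, ENNReal.ofReal (bumpKernel p.1 p.2 l₁ l₂) ^ k ∂(ν.prod ν) := by
        refine setLIntegral_mono' hD fun p hp ↦ ?_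
        rw [ENNReal.ofReal_pow (by positivity)]
        gcongr
        exact low_le hp
    _ ≤ ∫⁻ p in Metric.closedBall 0 7 ×ˢ Metric.closedBall 0 7,
          ENNReal.ofReal (bumpKernel p.1 p.2 l₁ l₂) ^ k ∂(ν.prod ν) := lintegral_mono_set hD7
    _ ≤ ∫⁻ p in Metric.closedBall 0 7 ×ˢ Metric.closedBall 0 7,
          ENNReal.ofReal (bumpKernel p.1 p.2 ((l₁ + l₂) / 2) ((l₁ + l₂) / 2)) ^ k
          ∂(ν.prod ν) := by
        rw [← Measure.prod_restrict]
        exact (S.isLogConcaveLaw.prekopaLeindler.restrict measurableSet_closedBall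
          (convex_closedBall 0 7)).lintegral_bumpKernel_pow_le k l₁ l₂
    _ ≤ ENNReal.ofReal ((exp 1 * ((l₁ + l₂) / 2 * ((l₁ + l₂) / 2)))⁻¹ ^ k *
          (6 * exp (k * g ^ 2 / 1000))) :=
        S.lintegral_bumpKernel_self_pow_le hg hg1 hk hkK (by positivity)
    _ ≤ ENNReal.ofReal (6 * exp (-(k * (l₂ - l₁) ^ 2 / 400)) * low ^ k) :=
        ENNReal.ofReal_le_ofReal (kernel_upper_le_exp_mul_kernel_lower hl₁ hg hgap h50)
    _ = ENNReal.ofReal (low ^ k) * ENNReal.ofReal (6 * exp (-(k * (l₂ - l₁) ^ 2 / 400))) := by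
        rw [mul_comm, ENNReal.ofReal_mul low_pow_pos.le]

end CellMeasure

section Cells

variable {V : Type*} [NormedAddCommGroup V] [InnerProductSpace ℝ V]

/-- The pairs `(x, y)` of small smoothed correlation with `‖y‖ ≤ 7` for which `smoothedNorm x` lies
in the `a`-th interval of length `g / 100` below `r` and `smoothedNorm y` in the `b`-th such
interval above `r + g`. On a cell both smoothed norms are known up to `g / 100`. -/
def separationCell (r g : ℝ) (a b : ℕ) : Set (V × V) :=
  {p | (smoothedNorm p.1 ≤ r - a * (g / 100) ∧ r - a * (g / 100) ≤ smoothedNorm p.1 + g / 100) ∧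
    (r + g + b * (g / 100) ≤ smoothedNorm p.2 ∧
      smoothedNorm p.2 ≤ r + g + b * (g / 100) + g / 100) ∧
    ‖p.2‖ ≤ 7 ∧ |smoothedCorrelation p.1 p.2| ≤ g ^ 2 / 8000}

/-- The pairs `(x, y)` of small smoothed correlation with `smoothedNorm x ≤ r`,
`r + g ≤ smoothedNorm y` and `‖y‖ ≤ 7`. -/
def separatedPairs (V : Type*) [NormedAddCommGroup V] [InnerProductSpace ℝ V] (r g : ℝ) :
    Set (V × V) :=
  {p | smoothedNorm p.1 ≤ r ∧ r + g ≤ smoothedNorm p.2 ∧ ‖p.2‖ ≤ 7 ∧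
    |smoothedCorrelation p.1 p.2| ≤ g ^ 2 / 8000}

lemma continuous_smoothedCorrelation :
    Continuous fun p : V × V ↦ smoothedCorrelation p.1 p.2 := by
  have continuous_inner : Continuous fun p : V × V ↦ ⟪p.1, p.2⟫ := by fun_prop
  refine continuous_inner.div ?_ fun p ↦
    (mul_pos (smoothedNorm_pos p.1) (smoothedNorm_pos p.2)).ne'
  exact (continuous_smoothedNorm.comp continuous_fst).mul
    (continuous_smoothedNorm.comp continuous_snd)

lemma isClosed_separationCell (r g : ℝ) (a b : ℕ) :
    IsClosed (separationCell r g a b : Set (V × V)) := by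
  have continuous₁ : Continuous fun p : V × V ↦ smoothedNorm p.1 :=
    continuous_smoothedNorm.comp continuous_fst
  have continuous₂ : Continuous fun p : V × V ↦ smoothedNorm p.2 :=
    continuous_smoothedNorm.comp continuous_snd
  refine ((isClosed_le continuous₁ continuous_const).inter
    (isClosed_le continuous_const (continuous₁.add continuous_const))).inter
    (((isClosed_le continuous_const continuous₂).inter
    (isClosed_le continuous₂ continuous_const)).inter
    ((isClosed_le (continuous_norm.comp continuous_snd) continuous_const).inter
    (isClosed_le continuous_smoothedCorrelation.abs continuous_const)))

lemma isClosed_separatedPairs (r g : ℝ) : IsClosed (separatedPairs V r g) :=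
  (isClosed_le (continuous_smoothedNorm.comp continuous_fst) continuous_const).inter
    ((isClosed_le continuous_const (continuous_smoothedNorm.comp continuous_snd)).inter
    ((isClosed_le (continuous_norm.comp continuous_snd) continuous_const).inter
    (isClosed_le continuous_smoothedCorrelation.abs continuous_const)))

lemma separatedPairs_subset_iUnion_separationCell {r g : ℝ} (hg : 0 < g) :
    separatedPairs V r g ⊆ ⋃ n : ℕ × ℕ, separationCell r g n.1 n.2 := by
  have floor_mul_le {t : ℝ} (ht : 0 ≤ t) : ⌊t / (g / 100)⌋₊ * (g / 100) ≤ t :=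
    (le_div_iff₀ (by positivity)).1 (Nat.floor_le (by positivity))
  have le_floor_add_one_mul (t : ℝ) : t ≤ (⌊t / (g / 100)⌋₊ + 1) * (g / 100) :=
    (div_le_iff₀ (by positivity)).1 (Nat.lt_floor_add_one _).le
  rintro ⟨x, y⟩ ⟨hx, hy, hy7, hϱ⟩
  refine Set.mem_iUnion.2 ⟨(⌊(r - smoothedNorm x) / (g / 100)⌋₊,
    ⌊(smoothedNorm y - r - g) / (g / 100)⌋₊), ⟨?_, ?_⟩, ⟨?_, ?_⟩, hy7, hϱ⟩
  · linarith [floor_mul_le (t := r - smoothedNorm x) (by linarith)]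
  · linarith [le_floor_add_one_mul (r - smoothedNorm x)]
  · linarith [floor_mul_le (t := smoothedNorm y - r - g) (by linarith)]
  · linarith [le_floor_add_one_mul (smoothedNorm y - r - g)]

lemma separationCell_subset_closedBall_prod {r g : ℝ} (hg : 0 < g) (a b : ℕ) :
    (separationCell r g a b : Set (V × V)) ⊆
      Metric.closedBall 0 7 ×ˢ Metric.closedBall 0 7 := by
  rintro ⟨x, y⟩ ⟨⟨hx, -⟩, ⟨hy, -⟩, hy7, -⟩
  have : 0 ≤ (a + b : ℝ) * (g / 100) := by positivity
  have norm_le : ‖x‖ ≤ ‖y‖ := norm_le_norm_of_smoothedNorm_le (by dsimp only at hx hy; linarith)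
  exact ⟨mem_closedBall_zero_iff.2 (norm_le.trans hy7), mem_closedBall_zero_iff.2 hy7⟩

variable [MeasurableSpace V] [BorelSpace V] [FiniteDimensional ℝ V] {ν : Measure V} {K α g : ℝ}
  {k : ℕ}

namespace IsPsiAlphaLaw

lemma measure_separationCell_le (S : IsPsiAlphaLaw ν K α) (hg : 0 < g) (hg1 : g ≤ 1)
    (hk : 1 ≤ k) (hkK : (k : ℝ) ≤ 1e-8 * K * g ^ α) (r : ℝ) (a b : ℕ) :
    (ν.prod ν) (separationCell r g a b)
      ≤ ENNReal.ofReal (6 * exp (-(k * (g + (a + b) * (g / 100)) ^ 2 / 400))) := by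
  obtain cell_empty | ⟨⟨x, y⟩, hxy⟩ :=
    (separationCell r g a b : Set (V × V)).eq_empty_or_nonempty
  · simp [cell_empty]
  have : 0 ≤ (a + b : ℝ) * (g / 100) := by positivity
  have levels_gap : r + g + b * (g / 100) - (r - a * (g / 100)) = g + (a + b) * (g / 100) := by
    ring
  have y_le : ‖y‖ ≤ 7 := hxy.2.2.1
  have one_le_low : 1 ≤ r - a * (g / 100) := (one_le_smoothedNorm x).trans hxy.1.1
  have high_le : r + g + b * (g / 100) ≤ smoothedNorm y := hxy.2.1.1
  have mid_sq_le : ((r - a * (g / 100) + (r + g + b * (g / 100))) / 2) ^ 2 ≤ 50 := by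
    refine (pow_le_pow_left₀ (by linarith) (by linarith) 2 : _ ≤ smoothedNorm y ^ 2).trans ?_
    rw [smoothedNorm_sq]
    nlinarith [norm_nonneg y]
  rw [← levels_gap]
  refine S.measure_cell_le hg hg1 hk hkK (by linarith) (by linarith) mid_sq_le
    (isClosed_separationCell r g a b).measurableSet (separationCell_subset_closedBall_prod hg a b)
    (fun p hp ↦ hp.2.2.2) (fun p hp ↦ abs_le.2 ?_) fun p hp ↦ abs_le.2 ?_
  · exact ⟨by linarith [hp.1.1], by linarith [hp.1.2]⟩
  · exact ⟨by linarith [hp.2.1.2], by linarith [hp.2.1.1]⟩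

end IsPsiAlphaLaw

lemma exp_gap_sq_le (hkg : 20000 ≤ k * g ^ 2) (a b : ℕ) :
    exp (-(k * (g + (a + b) * (g / 100)) ^ 2 / 400))
      ≤ exp (-(k * g ^ 2 / 400)) * ((1 / 2) ^ a * (1 / 2) ^ b) := by
  have exp_neg_one_le : exp (-1) ≤ 1 / 2 := by linarith [Real.exp_neg_one_lt_half]
  have exponent_le : (a + b : ℝ) * 20000 ≤ (a + b) * (k * g ^ 2) := by gcongr
  have : 0 ≤ k * ((a + b) * (g / 100)) ^ 2 := by positivity
  calc exp (-(k * (g + (a + b) * (g / 100)) ^ 2 / 400))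
      ≤ exp (-(k * g ^ 2 / 400) + (a + b : ℕ) * (-1)) := by
        refine exp_le_exp.2 ?_
        push_cast
        nlinarith
    _ = exp (-(k * g ^ 2 / 400)) * exp (-1) ^ (a + b) := by rw [Real.exp_add, Real.exp_nat_mul]
    _ ≤ exp (-(k * g ^ 2 / 400)) * (1 / 2) ^ (a + b) := by gcongr
    _ = exp (-(k * g ^ 2 / 400)) * ((1 / 2) ^ a * (1 / 2) ^ b) := by rw [pow_add]

lemma tsum_ofReal_one_half_pow_mul :
    ∑' n : ℕ × ℕ, ENNReal.ofReal ((1 / 2) ^ n.1 * (1 / 2) ^ n.2) = ENNReal.ofReal 4 := by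
  have hasSum := summable_geometric_two.mul_of_nonneg summable_geometric_two
    (fun _ ↦ by positivity) fun _ ↦ by positivity
  rw [← ENNReal.ofReal_tsum_of_nonneg (fun _ ↦ by positivity) hasSum,
    ← summable_geometric_two.tsum_mul_tsum summable_geometric_two hasSum, tsum_geometric_two]
  norm_num

theorem IsPsiAlphaLaw.measure_separatedPairs_le (S : IsPsiAlphaLaw ν K α) (hg : 0 < g)
    (hg1 : g ≤ 1) (hk : 1 ≤ k) (hkK : (k : ℝ) ≤ 1e-8 * K * g ^ α) (hkg : 20000 ≤ k * g ^ 2)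
    (r : ℝ) :
    (ν.prod ν) (separatedPairs V r g) ≤ ENNReal.ofReal (24 * exp (-(k * g ^ 2 / 400))) := by
  calc (ν.prod ν) (separatedPairs V r g)
      ≤ ∑' n : ℕ × ℕ, (ν.prod ν) (separationCell r g n.1 n.2) :=
        (measure_mono (separatedPairs_subset_iUnion_separationCell hg)).trans
          (measure_iUnion_le _)
    _ ≤ ∑' n : ℕ × ℕ, ENNReal.ofReal (6 * exp (-(k * g ^ 2 / 400))) *
          ENNReal.ofReal ((1 / 2) ^ n.1 * (1 / 2) ^ n.2) := by
        refine ENNReal.tsum_le_tsum fun n ↦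
          (S.measure_separationCell_le hg hg1 hk hkK r n.1 n.2).trans ?_
        rw [← ENNReal.ofReal_mul (by positivity), mul_assoc]
        exact ENNReal.ofReal_le_ofReal
          (mul_le_mul_of_nonneg_left (exp_gap_sq_le hkg n.1 n.2) (by norm_num))
    _ = ENNReal.ofReal (24 * exp (-(k * g ^ 2 / 400))) := by
        rw [ENNReal.tsum_mul_left, tsum_ofReal_one_half_pow_mul,
          ← ENNReal.ofReal_mul (by positivity)]
        ring_nf

end Cells

section Separation

lemma sq_rpow_two_div_le {K α g : ℝ} (hK : 0 < K) (hα1 : 1 ≤ α) (hα2 : α ≤ 2) (hg : 0 < g)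
    (hg1 : g ≤ 1) (hKg : 4e12 ≤ K * g ^ (2 + α)) :
    ((2 / K) ^ (1 / α)) ^ 2 ≤ 1 / 8 * (g ^ 2 / 8000) ^ 2 := by
  have two_div_le : 2 / K ≤ 5e-13 * g ^ (2 + α) := by
    rw [div_le_iff₀ hK]
    linarith
  have one_le_two_div : 1 ≤ 2 / α := by rwa [one_le_div₀ (by linarith)]
  calc ((2 / K) ^ (1 / α)) ^ 2 = (2 / K) ^ (2 / α) := by
        rw [← Real.rpow_mul_natCast (by positivity)]
        push_cast
        ring_nf
    _ ≤ (5e-13 * g ^ (2 + α)) ^ (2 / α) := by gcongr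
    _ = 5e-13 ^ (2 / α) * g ^ ((2 + α) * (2 / α)) := by
        rw [Real.mul_rpow (by positivity) (by positivity), ← Real.rpow_mul hg.le]
    _ ≤ 5e-13 ^ (1 : ℝ) * g ^ (4 : ℝ) := by
        have four_le : 4 ≤ (2 + α) * (2 / α) := by
          have : (2 + α) * (2 / α) = 2 * (2 / α) + 2 := by field_simp
          linarith
        exact mul_le_mul (Real.rpow_le_rpow_of_exponent_ge (by norm_num) (by norm_num)
          one_le_two_div) (Real.rpow_le_rpow_of_exponent_ge hg hg1 four_le) (by positivity)
          (by positivity)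
    _ = 5e-13 * g ^ 4 := by
        rw [Real.rpow_one]
        norm_cast
    _ ≤ 1 / 8 * (g ^ 2 / 8000) ^ 2 := by
        have : 0 < g ^ 4 := by positivity
        ring_nf at this ⊢
        linarith

lemma exists_number_of_bumps {K α g : ℝ} (hK : 0 < K) (hg : 0 < g) (hg1 : g ≤ 1)
    (hKg : 4e12 ≤ K * g ^ (2 + α)) :
    ∃ k : ℕ, 1 ≤ k ∧ (k : ℝ) ≤ 1e-8 * K * g ^ α ∧ 20000 ≤ k * g ^ 2 ∧
      1.25e-11 * (K * g ^ (2 + α)) ≤ k * g ^ 2 / 400 := by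
  have rpow_eq : g ^ (2 + α) = g ^ 2 * g ^ α := by
    rw [Real.rpow_add hg]
    norm_cast
  have : 0 < K * g ^ α := by positivity
  have g_sq_le : g ^ 2 ≤ 1 := pow_le_one₀ hg.le hg1
  set x := 1e-8 * K * g ^ α with x_def
  have x_mul : x * g ^ 2 = 1e-8 * (K * g ^ (2 + α)) := by
    rw [x_def, rpow_eq]
    ring
  have two_le_x : 2 ≤ x := by nlinarith
  have floor_ge : x / 2 ≤ ⌊x⌋₊ := by linarith [Nat.lt_floor_add_one x]
  have floor_mul_ge : x / 2 * g ^ 2 ≤ ⌊x⌋₊ * g ^ 2 := by gcongr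
  refine ⟨⌊x⌋₊, Nat.floor_pos.2 (by linarith), Nat.floor_le (by linarith), ?_, ?_⟩ <;> linarith

lemma measure_le_eight_mul_measure_prod_diff {X : Type*} [MeasurableSpace X] {μ : Measure X}
    [SFinite μ] {P Q : Set X} {bad : Set (X × X)} (hP : MeasurableSet P) (hQ : MeasurableSet Q)
    (hbad : MeasurableSet bad) (hP4 : 1 / 4 ≤ μ P) (hbad8 : ∀ y, μ {x | (x, y) ∈ bad} ≤ 1 / 8) :
    μ Q ≤ 8 * (μ.prod μ) (P ×ˢ Q \ bad) := by
  have section_ge (y : X) :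
      Q.indicator (fun _ ↦ (1 / 8 : ℝ≥0∞)) y ≤ μ ((fun x ↦ (x, y)) ⁻¹' (P ×ˢ Q \ bad)) := by
    refine Set.indicator_apply_le' (fun hy ↦ ?_) fun _ ↦ zero_le
    have P_subset : P ⊆ (fun x ↦ (x, y)) ⁻¹' (P ×ˢ Q \ bad) ∪ {x | (x, y) ∈ bad} := fun x hx ↦
      or_iff_not_imp_right.2 fun hxy ↦ ⟨⟨hx, hy⟩, hxy⟩
    have quarter_le : (1 / 8 + 1 / 8 : ℝ≥0∞) ≤
        μ ((fun x ↦ (x, y)) ⁻¹' (P ×ˢ Q \ bad)) + 1 / 8 := by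
      have : (1 / 4 : ℝ≥0∞) = 1 / 8 + 1 / 8 := by
        rw [ENNReal.div_add_div_same, ENNReal.div_eq_div_iff] <;> norm_num
      rw [← this]
      exact hP4.trans ((measure_mono P_subset).trans ((measure_union_le _ _).trans
        (add_le_add_right (hbad8 y) _)))
    exact (ENNReal.add_le_add_iff_right (by simp)).1 quarter_le
  have lintegral_le := lintegral_mono (μ := μ) section_ge
  rw [lintegral_indicator_const hQ,
    ← Measure.prod_apply_symm ((hP.prod hQ).diff hbad)] at lintegral_le
  calc μ Q = 8 * (1 / 8 * μ Q) := by
        rw [← mul_assoc, ENNReal.mul_div_cancel (by norm_num) (by norm_num), one_mul]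
    _ ≤ 8 * (μ.prod μ) (P ×ˢ Q \ bad) := by gcongr

variable {V : Type*} [NormedAddCommGroup V] [MeasurableSpace V] [BorelSpace V]

lemma measurableSet_smoothedNorm_le (r : ℝ) : MeasurableSet {x : V | smoothedNorm x ≤ r} :=
  (isClosed_le continuous_smoothedNorm continuous_const).measurableSet

lemma measurableSet_le_smoothedNorm (r : ℝ) :
    MeasurableSet {x : V | r ≤ smoothedNorm x ∧ ‖x‖ ≤ 7} :=
  ((isClosed_le continuous_const continuous_smoothedNorm).and
    (isClosed_le continuous_norm continuous_const)).measurableSet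

variable [InnerProductSpace ℝ V] [FiniteDimensional ℝ V] {ν : Measure V} {K α g r : ℝ}

lemma measurableSet_smoothedCorrelation_gt :
    MeasurableSet {p : V × V | g ^ 2 / 8000 < |smoothedCorrelation p.1 p.2|} :=
  (isOpen_lt continuous_const continuous_smoothedCorrelation.abs).measurableSet

namespace IsPsiAlphaLaw

lemma measure_smoothedCorrelation_gt_le (S : IsPsiAlphaLaw ν K α) (hg : 0 < g) (hg1 : g ≤ 1)
    (hKg : 4e12 ≤ K * g ^ (2 + α)) (y : V) :
    ν {x | g ^ 2 / 8000 < |smoothedCorrelation x y|} ≤ 1 / 8 := by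
  set u := (smoothedNorm y)⁻¹ • y
  have subset : {x | g ^ 2 / 8000 < |smoothedCorrelation x y|} ⊆
      {x | ENNReal.ofReal ((g ^ 2 / 8000) ^ 2) ≤ ENNReal.ofReal (⟪x, u⟫ ^ (2 * 1))} := by
    intro x hx
    refine ENNReal.ofReal_le_ofReal ?_
    rw [mul_one, ← sq_abs ⟪x, u⟫]
    exact pow_le_pow_left₀ (by positivity)
      (hx.le.trans (abs_smoothedCorrelation_le_abs_inner x y)) 2
  refine (measure_mono subset).trans ((meas_ge_le_lintegral_div (by fun_prop) (by simp [hg.ne'])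
    ENNReal.ofReal_ne_top).trans (ENNReal.div_le_of_le_mul ?_))
  refine (S.lintegral_inner_pow_le 1 le_rfl u (norm_inv_smoothedNorm_smul_le y)).trans ?_
  have one_div_eight : (1 / 8 : ℝ≥0∞) = ENNReal.ofReal (1 / 8) := by
    rw [ENNReal.ofReal_div_of_pos (by norm_num)]
    simp
  have := S.pos
  rw [one_div_eight, ← ENNReal.ofReal_mul (by norm_num), ← ENNReal.ofReal_pow (by positivity)]
  exact ENNReal.ofReal_le_ofReal
    (by simpa using sq_rpow_two_div_le S.pos S.one_le S.le_two hg hg1 hKg)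

lemma eight_mul_measure_separatedPairs_le (S : IsPsiAlphaLaw ν K α) (hg : 0 < g) (hg1 : g ≤ 1)
    (hKg : 4e12 ≤ K * g ^ (2 + α)) (r : ℝ) :
    8 * (ν.prod ν) (separatedPairs V r g)
      ≤ ENNReal.ofReal (192 * exp (-(1.25e-11 * (K * g ^ (2 + α))))) := by
  obtain ⟨k, hk, hkK, hkg, le_kg⟩ := exists_number_of_bumps S.pos hg hg1 hKg
  calc 8 * (ν.prod ν) (separatedPairs V r g)
      ≤ 8 * ENNReal.ofReal (24 * exp (-(k * g ^ 2 / 400))) := by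
        gcongr
        exact S.measure_separatedPairs_le hg hg1 hk hkK hkg r
    _ = ENNReal.ofReal (192 * exp (-(k * g ^ 2 / 400))) := by
        rw [← ENNReal.ofReal_ofNat 8, ← ENNReal.ofReal_mul (by norm_num), ← mul_assoc]
        norm_num
    _ ≤ ENNReal.ofReal (192 * exp (-(1.25e-11 * (K * g ^ (2 + α))))) := by gcongr

theorem measure_le_smoothedNorm_le (S : IsPsiAlphaLaw ν K α) (hg : 0 < g) (hg1 : g ≤ 1)
    (hKg : 4e12 ≤ K * g ^ (2 + α)) (h4 : 1 / 4 ≤ ν {x | smoothedNorm x ≤ r}) :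
    ν {x | r + g ≤ smoothedNorm x ∧ ‖x‖ ≤ 7}
      ≤ ENNReal.ofReal (192 * exp (-(1.25e-11 * (K * g ^ (2 + α))))) := by
  have := S.isProbabilityMeasure
  refine (measure_le_eight_mul_measure_prod_diff (measurableSet_smoothedNorm_le r)
    (measurableSet_le_smoothedNorm (r + g)) measurableSet_smoothedCorrelation_gt h4
    (S.measure_smoothedCorrelation_gt_le hg hg1 hKg)).trans
    (le_trans ?_ (S.eight_mul_measure_separatedPairs_le hg hg1 hKg r))
  gcongr
  rintro ⟨x, y⟩ ⟨⟨hx, hy⟩, hϱ⟩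
  exact ⟨hx, hy.1, hy.2, not_lt.1 hϱ⟩

theorem measure_smoothedNorm_le_le (S : IsPsiAlphaLaw ν K α) (hg : 0 < g) (hg1 : g ≤ 1)
    (hKg : 4e12 ≤ K * g ^ (2 + α)) (h4 : 1 / 4 ≤ ν {x | r + g ≤ smoothedNorm x ∧ ‖x‖ ≤ 7}) :
    ν {x | smoothedNorm x ≤ r}
      ≤ ENNReal.ofReal (192 * exp (-(1.25e-11 * (K * g ^ (2 + α))))) := by
  have := S.isProbabilityMeasure
  refine (measure_le_eight_mul_measure_prod_diff (measurableSet_le_smoothedNorm (r + g))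
    (measurableSet_smoothedNorm_le r) measurableSet_smoothedCorrelation_gt h4
    (S.measure_smoothedCorrelation_gt_le hg hg1 hKg)).trans
    (le_trans ?_ (S.eight_mul_measure_separatedPairs_le hg hg1 hKg r))
  rw [← (Measure.measurePreserving_swap (μ := ν) (ν := ν)).measure_preimage
    (isClosed_separatedPairs r g).measurableSet.nullMeasurableSet]
  gcongr
  rintro ⟨x, y⟩ ⟨⟨hx, hy⟩, hϱ⟩
  exact ⟨hy, hx.1, hx.2, by rw [smoothedCorrelation_comm]; exact not_lt.1 hϱ⟩

end IsPsiAlphaLaw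

end Separation

/-! ### Deviation below the mean square -/

lemma norm_le_two_mul_norm_midpoint_add {V : Type*} [NormedAddCommGroup V] [NormedSpace ℝ V]
    (x y : V) : ‖y‖ ≤ 2 * ‖(1 / 2 : ℝ) • (x + y)‖ + ‖x‖ := by
  rw [norm_smul, Real.norm_of_nonneg (by norm_num)]
  have := norm_sub_le (x + y) x
  rw [add_sub_cancel_left] at this
  linarith

section NormTail

variable {V : Type*} [NormedAddCommGroup V] [MeasurableSpace V] [OpensMeasurableSpace V]
  {ν : Measure V}

lemma measure_norm_gt_le (h2 : ∫⁻ x, ENNReal.ofReal (‖x‖ ^ 2) ∂ν = 1) {a : ℝ} (ha : 0 < a) :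
    ν {x | a < ‖x‖} ≤ ENNReal.ofReal (1 / a ^ 2) := by
  have subset : {x : V | a < ‖x‖} ⊆
      {x | ENNReal.ofReal (a ^ 2) ≤ ENNReal.ofReal (‖x‖ ^ 2)} := fun x hx ↦
    ENNReal.ofReal_le_ofReal (pow_le_pow_left₀ ha.le (le_of_lt hx) 2)
  refine (measure_mono subset).trans ((meas_ge_le_lintegral_div (by fun_prop) (by simp [ha.ne'])
    ENNReal.ofReal_ne_top).trans_eq ?_)
  rw [h2, ENNReal.ofReal_div_of_pos (by positivity), ENNReal.ofReal_one]

lemma half_le_measure_norm_le [IsProbabilityMeasure ν]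
    (h2 : ∫⁻ x, ENNReal.ofReal (‖x‖ ^ 2) ∂ν = 1) :
    ENNReal.ofReal (1 / 2) ≤ ν {x | ‖x‖ ≤ 3 / 2} := by
  have compl_eq : {x : V | ‖x‖ ≤ 3 / 2} = {x | 3 / 2 < ‖x‖}ᶜ := by
    ext x
    simp
  rw [compl_eq, prob_compl_eq_one_sub (measurableSet_lt measurable_const measurable_norm)]
  calc ENNReal.ofReal (1 / 2) ≤ ENNReal.ofReal (1 - 1 / (3 / 2) ^ 2) :=
        ENNReal.ofReal_le_ofReal (by norm_num)
    _ = 1 - ENNReal.ofReal (1 / (3 / 2) ^ 2) := by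
        rw [ENNReal.ofReal_sub _ (by positivity), ENNReal.ofReal_one]
    _ ≤ 1 - ν {x | 3 / 2 < ‖x‖} := by
        gcongr
        exact measure_norm_gt_le h2 (by norm_num)

lemma setLIntegral_linear_le (ν : Measure V) :
    ∫⁻ x in {x | 11 / 4 ≤ ‖x‖}, ENNReal.ofReal (2 * ‖x‖ + 3 / 2) ∂ν
      ≤ 18 * ν {x | 11 / 4 ≤ ‖x‖ ∧ ‖x‖ ≤ 7}
        + ENNReal.ofReal (0.365) * ∫⁻ x in {x | 7 < ‖x‖}, ENNReal.ofReal (‖x‖ ^ 2) ∂ν := by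
  have measurable_mid : MeasurableSet {x : V | 11 / 4 ≤ ‖x‖ ∧ ‖x‖ ≤ 7} :=
    (measurableSet_le measurable_const measurable_norm).inter
      (measurableSet_le measurable_norm measurable_const)
  have measurable_far : MeasurableSet {x : V | 7 < ‖x‖} :=
    measurableSet_lt measurable_const measurable_norm
  have subset_union : {x : V | 11 / 4 ≤ ‖x‖} ⊆
      {x | 11 / 4 ≤ ‖x‖ ∧ ‖x‖ ≤ 7} ∪ {x | 7 < ‖x‖} := fun x hx ↦
    (le_or_gt ‖x‖ 7).imp (fun h ↦ ⟨hx, h⟩) id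
  refine (lintegral_mono_set subset_union).trans ((lintegral_union_le _ _ _).trans
    (add_le_add ?_ ?_))
  · rw [← setLIntegral_const]
    refine setLIntegral_mono' measurable_mid fun x hx ↦ ENNReal.ofReal_le_of_le_toReal ?_
    norm_num
    linarith [hx.2]
  · rw [← lintegral_const_mul' _ _ ENNReal.ofReal_ne_top]
    refine setLIntegral_mono' measurable_far fun x (hx : 7 < ‖x‖) ↦ ?_
    rw [← ENNReal.ofReal_mul (by norm_num)]
    exact ENNReal.ofReal_le_ofReal (by nlinarith)

variable [NormedSpace ℝ V]

/-- If `‖x‖ ≤ 3 / 2` and `7 < ‖y‖`, the midpoint `z` of `x` and `y` has `11 / 4 ≤ ‖z‖` and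
`‖y‖ ≤ 2 ‖z‖ + 3 / 2`. -/
lemma PrekopaLeindler.measure_mul_setLIntegral_norm_sq_le (hν : PrekopaLeindler ν) :
    ν {x | ‖x‖ ≤ 3 / 2} * ∫⁻ x in {x | 7 < ‖x‖}, ENNReal.ofReal (‖x‖ ^ 2) ∂ν
      ≤ (∫⁻ x in {x | 11 / 4 ≤ ‖x‖}, ENNReal.ofReal (2 * ‖x‖ + 3 / 2) ∂ν) ^ 2 := by
  rw [← setLIntegral_one]
  refine hν.setLIntegral_mul_setLIntegral_le (measurableSet_le measurable_norm measurable_const)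
    (measurableSet_lt measurable_const measurable_norm)
    (measurableSet_le measurable_const measurable_norm) (by fun_prop) (by fun_prop) (by fun_prop)
    fun x (hx : ‖x‖ ≤ 3 / 2) y (hy : 7 < ‖y‖) ↦ ?_
  have norm_le := norm_le_two_mul_norm_midpoint_add x y
  refine ⟨Set.mem_ofPred_eq.symm ▸ by linarith, ?_⟩
  rw [one_mul, ← ENNReal.ofReal_pow (by positivity)]
  exact ENNReal.ofReal_le_ofReal (pow_le_pow_left₀ (norm_nonneg y) (by linarith) 2)

theorem PrekopaLeindler.setLIntegral_norm_sq_le (hν : PrekopaLeindler ν) [IsProbabilityMeasure ν]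
    (h2 : ∫⁻ x, ENNReal.ofReal (‖x‖ ^ 2) ∂ν = 1) {ε : ℝ} (hε : 0 ≤ ε)
    (h : ν {x | 11 / 4 ≤ ‖x‖ ∧ ‖x‖ ≤ 7} ≤ ENNReal.ofReal ε) :
    ∫⁻ x in {x | 7 < ‖x‖}, ENNReal.ofReal (‖x‖ ^ 2) ∂ν ≤ ENNReal.ofReal (2800 * ε ^ 2) := by
  set Q := ∫⁻ x in {x | 7 < ‖x‖}, ENNReal.ofReal (‖x‖ ^ 2) ∂ν
  have Q_le_one : Q ≤ 1 := h2 ▸ setLIntegral_le_lintegral _ _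
  have half_mul_le : ENNReal.ofReal (1 / 2) * Q
      ≤ (ENNReal.ofReal 18 * ENNReal.ofReal ε + ENNReal.ofReal 0.365 * Q) ^ 2 := by
    calc ENNReal.ofReal (1 / 2) * Q ≤ ν {x | ‖x‖ ≤ 3 / 2} * Q := by
          gcongr
          exact half_le_measure_norm_le h2
      _ ≤ _ := hν.measure_mul_setLIntegral_norm_sq_le
      _ ≤ _ := by
          gcongr
          refine (setLIntegral_linear_le ν).trans ?_
          rw [ENNReal.ofReal_ofNat]
          gcongr
  lift Q to ℝ≥0 using (Q_le_one.trans_lt ENNReal.one_lt_top).ne with q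
  rw [← ENNReal.ofReal_coe_nnreal] at half_mul_le ⊢
  rw [← ENNReal.ofReal_mul (by norm_num), ← ENNReal.ofReal_mul (by norm_num),
    ← ENNReal.ofReal_mul (by norm_num), ← ENNReal.ofReal_add (by positivity) (by positivity),
    ← ENNReal.ofReal_pow (by positivity),
    ENNReal.ofReal_le_ofReal_iff (by positivity)] at half_mul_le
  have : (q : ℝ) ≤ 1 := by exact_mod_cast Q_le_one
  exact ENNReal.ofReal_le_ofReal
    (by nlinarith [sq_nonneg (18 * ε - 0.365 * q), q.coe_nonneg])

end NormTail

section LayerCake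

lemma setLIntegral_Ioi_ofReal_mul_sq_div (c : ℝ) {a : ℝ} (ha : 0 < a) (hc : 0 ≤ c) :
    ∫⁻ t in Set.Ioi a, ENNReal.ofReal (c * (a / t) ^ 2) = ENNReal.ofReal (c * a) := by
  have rpow_eq : Set.EqOn (fun t ↦ c * a ^ 2 * t ^ (-2 : ℝ)) (fun t ↦ c * (a / t) ^ 2)
      (Set.Ioi a) := fun t ht ↦ by
    have t_pos : 0 < t := ha.trans ht
    dsimp only
    rw [Real.rpow_neg t_pos.le, Real.rpow_ofNat]
    field_simp
  rw [← ofReal_integral_eq_lintegral_ofReal, ← setIntegral_congr_fun measurableSet_Ioi rpow_eq,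
    integral_const_mul, integral_Ioi_rpow_of_lt (by norm_num) ha]
  · norm_num [Real.rpow_neg_one]
    field_simp
  · exact (integrableOn_congr_fun rpow_eq measurableSet_Ioi).1
      ((integrableOn_Ioi_rpow_of_lt (by norm_num) ha).const_mul _)
  · exact .of_forall fun t ↦ by positivity

theorem lintegral_ofReal_le_of_measure_le_sq_div {X : Type*} [MeasurableSpace X] {μ : Measure X}
    (hμ : μ Set.univ ≤ 1) {f : X → ℝ} (hf : Measurable f) {a c : ℝ} (ha : 0 < a) (hc : 0 ≤ c)
    (h : ∀ t, a ≤ t → μ {x | t ≤ f x} ≤ ENNReal.ofReal (c * (a / t) ^ 2)) :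
    ∫⁻ x, ENNReal.ofReal (f x) ∂μ ≤ ENNReal.ofReal ((1 + c) * a) := by
  calc ∫⁻ x, ENNReal.ofReal (f x) ∂μ = ∫⁻ x, ENNReal.ofReal (max (f x) 0) ∂μ := by
        simp only [ENNReal.ofReal_max, ENNReal.ofReal_zero, zero_le, max_eq_left]
    _ = ∫⁻ t in Set.Ioc 0 a ∪ Set.Ioi a, μ {x | t ≤ max (f x) 0} := by
        rw [lintegral_eq_lintegral_meas_le μ (f := fun x ↦ max (f x) 0)
          (.of_forall fun x ↦ le_max_right _ _) (by fun_prop), Set.Ioc_union_Ioi_eq_Ioi ha.le]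
    _ ≤ (∫⁻ _ in Set.Ioc 0 a, 1) + ∫⁻ t in Set.Ioi a, ENNReal.ofReal (c * (a / t) ^ 2) := by
        refine (lintegral_union_le _ _ _).trans (add_le_add
          (lintegral_mono fun _ ↦ (measure_mono (Set.subset_univ _)).trans hμ)
          (setLIntegral_mono' measurableSet_Ioi fun t ht ↦
            (measure_mono fun x hx ↦ ?_).trans (h t (le_of_lt ht))))
        exact (le_max_iff.1 hx).resolve_right (ha.trans ht).not_ge
    _ = ENNReal.ofReal ((1 + c) * a) := by
        rw [setLIntegral_one, Real.volume_Ioc, sub_zero, setLIntegral_Ioi_ofReal_mul_sq_div c ha hc,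
          ← ENNReal.ofReal_add ha.le (by positivity)]
        ring_nf

end LayerCake

section DeviationBelow

lemma mul_div_sq_le_mul_rpow {K α c g₀ g : ℝ} (hα : 0 ≤ α) (hc : 0 ≤ c) (hg₀ : 0 < g₀)
    (hg : g₀ ≤ g) (h : c ≤ K * g₀ ^ (2 + α)) : c * (g / g₀) ^ 2 ≤ K * g ^ (2 + α) := by
  have g_pos : 0 < g := hg₀.trans_le hg
  have sq_le_rpow : (g / g₀) ^ 2 ≤ (g / g₀) ^ (2 + α) := by
    rw [← Real.rpow_two]
    exact Real.rpow_le_rpow_of_exponent_le ((one_le_div hg₀).2 hg) (by linarith)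
  calc c * (g / g₀) ^ 2 ≤ K * g₀ ^ (2 + α) * (g / g₀) ^ (2 + α) := by
        gcongr
        exact hc.trans h
    _ = K * (g₀ * (g / g₀)) ^ (2 + α) := by
        rw [Real.mul_rpow hg₀.le (by positivity), mul_assoc]
    _ = K * g ^ (2 + α) := by rw [mul_div_cancel₀ g hg₀.ne']

lemma mul_rpow_le_pow_four_mul {K α c t : ℝ} (hα : α ≤ 2) (hK : 0 ≤ K) (ht : 0 ≤ t) (hc : 1 ≤ c) :
    K * t ^ (2 + α) ≤ c ^ 4 * (K * (t / c) ^ (2 + α)) := by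
  have c_pos : 0 < c := one_pos.trans_le hc
  have rpow_le : c ^ (2 + α) ≤ c ^ 4 := by
    rw [← Real.rpow_ofNat]
    exact Real.rpow_le_rpow_of_exponent_le hc (by linarith)
  calc K * t ^ (2 + α) = K * (c * (t / c)) ^ (2 + α) := by rw [mul_div_cancel₀ t c_pos.ne']
    _ = c ^ (2 + α) * (K * (t / c) ^ (2 + α)) := by
        rw [Real.mul_rpow c_pos.le (by positivity), mul_left_comm]
    _ ≤ _ := by gcongr

variable {V : Type*} [NormedAddCommGroup V]

lemma smoothedNorm_lt_of_norm_le_seven {x : V} (h : ‖x‖ ≤ 7) : smoothedNorm x < 7.1 :=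
  lt_of_pow_lt_pow_left₀ 2 (by norm_num) (by nlinarith [smoothedNorm_sq x, norm_nonneg x])

lemma smoothedNorm_le_of_norm_le_one_sub {x : V} {t : ℝ} (ht : 0 ≤ t) (h : ‖x‖ ≤ 1 - t) :
    smoothedNorm x ≤ √2 - t / 6 - t / 6 := by
  have sqrt_two_sq : √2 ^ 2 = 2 := Real.sq_sqrt zero_le_two
  have le_sqrt_two : 1.41 ≤ √2 := Real.le_sqrt_of_sq_le (by norm_num)
  have sqrt_two_le : √2 ≤ 1.42 := Real.sqrt_le_iff.2 (by norm_num)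
  refine le_of_sq_le_sq ?_ (by linarith [norm_nonneg x])
  have norm_sq_le : ‖x‖ ^ 2 ≤ (1 - t) ^ 2 := by gcongr
  nlinarith [smoothedNorm_sq x, norm_nonneg x]

variable [MeasurableSpace V]

lemma lintegral_smoothedNorm_sq {ν : Measure V} [IsProbabilityMeasure ν]
    (h2 : ∫⁻ x, ENNReal.ofReal (‖x‖ ^ 2) ∂ν = 1) :
    ∫⁻ x, ENNReal.ofReal (smoothedNorm x ^ 2) ∂ν = 2 := by
  simp_rw [smoothedNorm_sq, ENNReal.ofReal_add zero_le_one (sq_nonneg _), ENNReal.ofReal_one]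
  rw [lintegral_add_left measurable_const, h2, lintegral_one, measure_univ, one_add_one_eq_two]

variable [BorelSpace V]

lemma setLIntegral_smoothedNorm_sq_far_le (ν : Measure V) :
    ∫⁻ x in {x | 7 < ‖x‖}, ENNReal.ofReal (smoothedNorm x ^ 2) ∂ν
      ≤ 2 * ∫⁻ x in {x | 7 < ‖x‖}, ENNReal.ofReal (‖x‖ ^ 2) ∂ν := by
  rw [← lintegral_const_mul' _ _ ENNReal.ofNat_ne_top]
  refine setLIntegral_mono' (measurableSet_lt measurable_const measurable_norm)
    fun x (hx : 7 < ‖x‖) ↦ ?_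
  rw [← ENNReal.ofReal_ofNat, ← ENNReal.ofReal_mul zero_le_two, smoothedNorm_sq]
  exact ENNReal.ofReal_le_ofReal (by nlinarith)

lemma setLIntegral_smoothedNorm_sq_near_le (ν : Measure V) [IsProbabilityMeasure ν]
    (r : ℝ) :
    ∫⁻ x in {x | ‖x‖ ≤ 7}, ENNReal.ofReal (smoothedNorm x ^ 2) ∂ν ≤ ENNReal.ofReal (r ^ 2)
      + 15 * ∫⁻ x in {x | ‖x‖ ≤ 7}, ENNReal.ofReal (smoothedNorm x - r) ∂ν := by
  have pointwise {x : V} (hx : ‖x‖ ≤ 7) : ENNReal.ofReal (smoothedNorm x ^ 2)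
      ≤ ENNReal.ofReal (r ^ 2) + 15 * ENNReal.ofReal (smoothedNorm x - r) := by
    have := smoothedNorm_lt_of_norm_le_seven hx
    have := one_le_smoothedNorm x
    rw [← ENNReal.ofReal_ofNat, ← ENNReal.ofReal_mul (by norm_num)]
    rcases le_total r (smoothedNorm x) with h | h
    · rw [← ENNReal.ofReal_add (by positivity) (by linarith)]
      exact ENNReal.ofReal_le_ofReal (by nlinarith)
    · exact (ENNReal.ofReal_le_ofReal (by gcongr)).trans le_self_add
  calc ∫⁻ x in {x | ‖x‖ ≤ 7}, ENNReal.ofReal (smoothedNorm x ^ 2) ∂ν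
      ≤ ∫⁻ x in {x | ‖x‖ ≤ 7},
          (ENNReal.ofReal (r ^ 2) + 15 * ENNReal.ofReal (smoothedNorm x - r)) ∂ν :=
        setLIntegral_mono' (measurableSet_le measurable_norm measurable_const) fun x ↦ pointwise
    _ = ENNReal.ofReal (r ^ 2) * ν {x | ‖x‖ ≤ 7}
          + 15 * ∫⁻ x in {x | ‖x‖ ≤ 7}, ENNReal.ofReal (smoothedNorm x - r) ∂ν := by
        rw [lintegral_add_left measurable_const, setLIntegral_const,
          lintegral_const_mul' _ _ ENNReal.ofNat_ne_top]
    _ ≤ _ := by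
        gcongr
        exact mul_le_of_le_one_right' prob_le_one

variable [InnerProductSpace ℝ V] {ν : Measure V} {K α g₀ g r s t : ℝ}

namespace IsPsiAlphaLaw

lemma quarter_le_measure_of_le (S : IsPsiAlphaLaw ν K α)
    (h4 : ν {x | smoothedNorm x ≤ r} ≤ 1 / 4) :
    1 / 4 ≤ ν {x | r ≤ smoothedNorm x ∧ ‖x‖ ≤ 7} := by
  have := S.isProbabilityMeasure
  have cover : (Set.univ : Set V) ⊆ {x | r ≤ smoothedNorm x ∧ ‖x‖ ≤ 7}
      ∪ ({x | smoothedNorm x ≤ r} ∪ {x | 7 < ‖x‖}) := fun x _ ↦ by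
    rcases le_total r (smoothedNorm x) with h | h
    · exact (le_or_gt ‖x‖ 7).imp (⟨h, ·⟩) Or.inr
    · exact .inr (.inl h)
  have far_le : ν {x | 7 < ‖x‖} ≤ ENNReal.ofReal (1 / 2) :=
    (measure_norm_gt_le S.lintegral_norm_sq (by norm_num)).trans
      (ENNReal.ofReal_le_ofReal (by norm_num))
  have quarter_eq : (1 / 4 : ℝ≥0∞) = ENNReal.ofReal (1 / 4) := by
    rw [ENNReal.ofReal_div_of_pos (by norm_num), ENNReal.ofReal_one, ENNReal.ofReal_ofNat]
  rw [quarter_eq] at h4 ⊢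
  have add_le : ENNReal.ofReal (1 / 4) + ENNReal.ofReal (3 / 4)
      ≤ ν {x | r ≤ smoothedNorm x ∧ ‖x‖ ≤ 7} + ENNReal.ofReal (3 / 4) :=
    calc ENNReal.ofReal (1 / 4) + ENNReal.ofReal (3 / 4) = ν Set.univ := by
          rw [← ENNReal.ofReal_add (by norm_num) (by norm_num), measure_univ]
          norm_num
      _ ≤ ν {x | r ≤ smoothedNorm x ∧ ‖x‖ ≤ 7}
            + (ν {x | smoothedNorm x ≤ r} + ν {x | 7 < ‖x‖}) :=
          (measure_mono cover).trans ((measure_union_le _ _).trans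
            (add_le_add_right (measure_union_le _ _) _))
      _ ≤ ν {x | r ≤ smoothedNorm x ∧ ‖x‖ ≤ 7}
            + (ENNReal.ofReal (1 / 4) + ENNReal.ofReal (1 / 2)) := by gcongr
      _ = ν {x | r ≤ smoothedNorm x ∧ ‖x‖ ≤ 7} + ENNReal.ofReal (3 / 4) := by
          rw [← ENNReal.ofReal_add (by norm_num) (by norm_num)]
          norm_num
  exact (ENNReal.add_le_add_iff_right ENNReal.ofReal_ne_top).1 add_le

variable [FiniteDimensional ℝ V]

lemma measure_le_smoothedNorm_le_sq (S : IsPsiAlphaLaw ν K α) (hg₀ : 0 < g₀)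
    (hKg : 4e12 ≤ K * g₀ ^ (2 + α)) (h4 : 1 / 4 ≤ ν {x | smoothedNorm x ≤ r}) (hg : g₀ ≤ g)
    (hg1 : g ≤ 1) :
    ν {x | r + g ≤ smoothedNorm x ∧ ‖x‖ ≤ 7} ≤ ENNReal.ofReal (4 * (g₀ / g) ^ 2) := by
  have g_pos : 0 < g := hg₀.trans_le hg
  have scaled : 4e12 * (g / g₀) ^ 2 ≤ K * g ^ (2 + α) :=
    mul_div_sq_le_mul_rpow (zero_le_one.trans S.one_le) (by norm_num) hg₀ hg hKg
  have one_le_sq : 1 ≤ (g / g₀) ^ 2 := one_le_pow₀ ((one_le_div hg₀).2 hg)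
  refine (S.measure_le_smoothedNorm_le g_pos hg1 (by linarith) h4).trans
    (ENNReal.ofReal_le_ofReal ?_)
  calc 192 * exp (-(1.25e-11 * (K * g ^ (2 + α)))) ≤ 192 * (50 * (g / g₀) ^ 2)⁻¹ := by
        rw [Real.exp_neg]
        gcongr
        linarith [Real.add_one_le_exp (1.25e-11 * (K * g ^ (2 + α)))]
    _ = 192 / 50 * (g₀ / g) ^ 2 := by
        field_simp
    _ ≤ 4 * (g₀ / g) ^ 2 := by
        gcongr
        norm_num

lemma measure_le_smoothedNorm_le_sq_of_le (S : IsPsiAlphaLaw ν K α) (hg₀ : 0 < g₀) (hg₀1 : g₀ ≤ 1)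
    (hKg : 4e12 ≤ K * g₀ ^ (2 + α)) (hr : 0 ≤ r) (h4 : 1 / 4 ≤ ν {x | smoothedNorm x ≤ r})
    (hg : g₀ ≤ g) :
    ν {x | r + g ≤ smoothedNorm x ∧ ‖x‖ ≤ 7} ≤ ENNReal.ofReal (256 * (g₀ / g) ^ 2) := by
  have g_pos : 0 < g := hg₀.trans_le hg
  rcases le_or_gt g 1 with hg1 | hg1
  · refine (S.measure_le_smoothedNorm_le_sq hg₀ hKg h4 hg hg1).trans (ENNReal.ofReal_le_ofReal ?_)
    gcongr
    norm_num
  rcases le_or_gt g 8 with hg8 | hg8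
  · calc ν {x | r + g ≤ smoothedNorm x ∧ ‖x‖ ≤ 7}
        ≤ ν {x | r + 1 ≤ smoothedNorm x ∧ ‖x‖ ≤ 7} :=
          measure_mono fun x hx ↦ ⟨by linarith [hx.1], hx.2⟩
      _ ≤ ENNReal.ofReal (4 * (g₀ / 1) ^ 2) :=
          S.measure_le_smoothedNorm_le_sq hg₀ hKg h4 hg₀1 le_rfl
      _ = ENNReal.ofReal (256 * (g₀ / 8) ^ 2) := by ring_nf
      _ ≤ ENNReal.ofReal (256 * (g₀ / g) ^ 2) := by gcongr
  · refine (measure_mono_null (fun x hx ↦ ?_) measure_empty).trans_le zero_le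
    linarith [hx.1, smoothedNorm_lt_of_norm_le_seven hx.2]

lemma setLIntegral_smoothedNorm_sub_le (S : IsPsiAlphaLaw ν K α) (hg₀ : 0 < g₀) (hg₀1 : g₀ ≤ 1)
    (hKg : 4e12 ≤ K * g₀ ^ (2 + α)) (hr : 0 ≤ r) (h4 : 1 / 4 ≤ ν {x | smoothedNorm x ≤ r}) :
    ∫⁻ x in {x | ‖x‖ ≤ 7}, ENNReal.ofReal (smoothedNorm x - r) ∂ν ≤ ENNReal.ofReal (257 * g₀) := by
  have := S.isProbabilityMeasure
  refine (lintegral_ofReal_le_of_measure_le_sq_div (by simpa using prob_le_one) (by fun_prop) hg₀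
    (c := 256) (by norm_num) fun g hg ↦ ?_).trans_eq (by norm_num)
  rw [Measure.restrict_apply (measurableSet_le measurable_const (by fun_prop))]
  refine (measure_mono fun x hx ↦ ?_).trans
    (S.measure_le_smoothedNorm_le_sq_of_le hg₀ hg₀1 hKg hr h4 hg)
  exact ⟨le_sub_iff_add_le'.1 hx.1, hx.2⟩

lemma measure_norm_mid_le (S : IsPsiAlphaLaw ν K α) (hg₀ : 0 < g₀) (hg₀1 : g₀ ≤ 1)
    (hKg : 4e12 ≤ K * g₀ ^ (2 + α)) (hr : 0 ≤ r) (hr2 : r ≤ √2)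
    (h4 : 1 / 4 ≤ ν {x | smoothedNorm x ≤ r}) :
    ν {x | 11 / 4 ≤ ‖x‖ ∧ ‖x‖ ≤ 7} ≤ ENNReal.ofReal (256 * g₀ ^ 2) := by
  have sqrt_two_le : √2 ≤ 1.42 := Real.sqrt_le_iff.2 (by norm_num)
  have subset : {x : V | 11 / 4 ≤ ‖x‖ ∧ ‖x‖ ≤ 7} ⊆ {x | r + 1 ≤ smoothedNorm x ∧ ‖x‖ ≤ 7} :=
    fun x hx ↦ ⟨by linarith [hx.1, norm_le_smoothedNorm x], hx.2⟩
  exact (measure_mono subset).trans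
    ((S.measure_le_smoothedNorm_le_sq_of_le hg₀ hg₀1 hKg hr h4 hg₀1).trans_eq (by rw [div_one]))

/-- If a quarter of the mass had `smoothedNorm x ≤ √2 - s`, concentration would push the second
moment of `smoothedNorm` strictly below its actual value `2`. -/
lemma two_le_of_quarter_le (S : IsPsiAlphaLaw ν K α) (hg₀ : 0 < g₀) (hg₀1 : g₀ ≤ 1)
    (hKg : 4e12 ≤ K * g₀ ^ (2 + α)) (hr : 0 ≤ r) (hr2 : r ≤ √2)
    (h4 : 1 / 4 ≤ ν {x | smoothedNorm x ≤ r}) :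
    2 ≤ r ^ 2 + 15 * (257 * g₀) + 2 * (2800 * (256 * g₀ ^ 2) ^ 2) := by
  have := S.isProbabilityMeasure
  have measurable_near : MeasurableSet {x : V | ‖x‖ ≤ 7} :=
    measurableSet_le measurable_norm measurable_const
  have compl_near : {x : V | ‖x‖ ≤ 7}ᶜ = {x | 7 < ‖x‖} := by
    ext x
    simp
  have near_le : ∫⁻ x in {x | ‖x‖ ≤ 7}, ENNReal.ofReal (smoothedNorm x ^ 2) ∂ν
      ≤ ENNReal.ofReal (r ^ 2) + 15 * ENNReal.ofReal (257 * g₀) := by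
    grw [setLIntegral_smoothedNorm_sq_near_le ν r,
      S.setLIntegral_smoothedNorm_sub_le hg₀ hg₀1 hKg hr h4]
  have far_le : ∫⁻ x in {x | 7 < ‖x‖}, ENNReal.ofReal (smoothedNorm x ^ 2) ∂ν
      ≤ 2 * ENNReal.ofReal (2800 * (256 * g₀ ^ 2) ^ 2) := by
    grw [setLIntegral_smoothedNorm_sq_far_le ν,
      S.isLogConcaveLaw.prekopaLeindler.setLIntegral_norm_sq_le S.lintegral_norm_sq (by positivity)
        (S.measure_norm_mid_le hg₀ hg₀1 hKg hr hr2 h4)]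
  have two_le := (lintegral_smoothedNorm_sq S.lintegral_norm_sq).symm.trans_le
    ((lintegral_add_compl _ measurable_near).symm.trans_le
      (add_le_add near_le (compl_near ▸ far_le)))
  rw [← ENNReal.ofReal_ofNat 2, ← ENNReal.ofReal_ofNat 15, ← ENNReal.ofReal_mul (by norm_num),
    ← ENNReal.ofReal_mul (by norm_num), ← ENNReal.ofReal_add (by positivity) (by positivity),
    ← ENNReal.ofReal_add (by positivity) (by positivity),
    ENNReal.ofReal_le_ofReal_iff (by positivity)] at two_le
  exact two_le

lemma measure_smoothedNorm_le_sqrt_two_sub_le (S : IsPsiAlphaLaw ν K α) (hs : 0 < s)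
    (hs1 : s ≤ 1 / 6) (hKs : 4e12 ≤ K * (s / 200000) ^ (2 + α)) :
    ν {x | smoothedNorm x ≤ √2 - s} ≤ 1 / 4 := by
  by_contra! h4
  have sqrt_two_sq : √2 ^ 2 = 2 := Real.sq_sqrt zero_le_two
  have le_sqrt_two : 1.41 ≤ √2 := Real.le_sqrt_of_sq_le (by norm_num)
  have two_le := S.two_le_of_quarter_le (by positivity) (by linarith) hKs (by linarith)
    (by linarith) h4.le
  have pow_four_le : s ^ 4 ≤ s * (1 / 6) ^ 3 := by
    rw [pow_succ' s 3]
    gcongr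
  nlinarith

theorem measure_norm_le_one_sub_le (S : IsPsiAlphaLaw ν K α) (ht : 0 ≤ t) (ht1 : t ≤ 1) :
    ν {x | ‖x‖ ≤ 1 - t} ≤ ENNReal.ofReal (192 * exp (-(1e-37 * (K * t ^ (2 + α))))) := by
  have := S.isProbabilityMeasure
  rcases le_or_gt (K * t ^ (2 + α)) 1e37 with small | large
  · refine prob_le_one.trans (ENNReal.one_le_ofReal.2 ?_)
    have : exp (-1) ≤ exp (-(1e-37 * (K * t ^ (2 + α)))) := Real.exp_le_exp.2 (by linarith)
    linarith [Real.exp_neg_one_gt_d9]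
  have t_pos : 0 < t := ht.lt_of_ne' fun h ↦ by
    rw [h, Real.zero_rpow (by linarith [S.one_le])] at large
    norm_num at large
  have scale_median := mul_rpow_le_pow_four_mul S.le_two S.pos.le ht (c := 6 * 200000) (by norm_num)
  have scale_gap := mul_rpow_le_pow_four_mul S.le_two S.pos.le ht (c := 6) (by norm_num)
  have median_le : ν {x | smoothedNorm x ≤ √2 - t / 6} ≤ 1 / 4 := by
    refine S.measure_smoothedNorm_le_sqrt_two_sub_le (by positivity) (by linarith) ?_
    rw [div_div]
    linarith
  have quarter_le := S.quarter_le_measure_of_le median_le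
  rw [← sub_add_cancel (√2 - t / 6) (t / 6)] at quarter_le
  refine (measure_mono fun x ↦ smoothedNorm_le_of_norm_le_one_sub ht).trans
    ((S.measure_smoothedNorm_le_le (by positivity) (by linarith) (by linarith) quarter_le).trans
      (ENNReal.ofReal_le_ofReal ?_))
  gcongr 192 * exp (-?_)
  linarith

end IsPsiAlphaLaw

end DeviationBelow

/-! ### The B-inequality -/

section ParallelogramInequalities

variable {V : Type*} [NormedAddCommGroup V] [InnerProductSpace ℝ V] {a b : ℝ}

lemma rotated_quadratic_midpoint_le (ha : 0 < a) (hb : 0 < b) {p q p' q' : V}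
    (h : p + q = p' + q') :
    (((a + b) / 2 * ‖(1 / 2 : ℝ) • (p + p') - (1 / 2 : ℝ) • (q + q')‖ ^ 2
        + 2 * a * b / (a + b) * ‖(1 / 2 : ℝ) • (p + p') + (1 / 2 : ℝ) • (q + q')‖ ^ 2) / 4) * 2
      ≤ (a * ‖p‖ ^ 2 + b * ‖q‖ ^ 2) / 2 + (a * ‖q'‖ ^ 2 + b * ‖p'‖ ^ 2) / 2 := by
  obtain rfl : q' = p + q - p' := eq_sub_of_add_eq' h.symm
  have defect : (a * ‖p‖ ^ 2 + b * ‖q‖ ^ 2) / 2 + (a * ‖p + q - p'‖ ^ 2 + b * ‖p'‖ ^ 2) / 2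
      - (((a + b) / 2 * ‖(1 / 2 : ℝ) • (p + p') - (1 / 2 : ℝ) • (q + (p + q - p'))‖ ^ 2
        + 2 * a * b / (a + b)
          * ‖(1 / 2 : ℝ) • (p + p') + (1 / 2 : ℝ) • (q + (p + q - p'))‖ ^ 2) / 4) * 2
      = ‖(a + b) • (p - p') + (a - b) • (p + q)‖ ^ 2 / (4 * (a + b)) := by
    simp only [← real_inner_self_eq_norm_sq, inner_add_left, inner_add_right, inner_sub_left,
      inner_sub_right, real_inner_smul_left, real_inner_smul_right]
    rw [real_inner_comm p q, real_inner_comm p p', real_inner_comm q p']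
    field_simp
    ring
  exact sub_nonneg.1 (defect.symm ▸ by positivity)

lemma quadratic_midpoint_le_rotated (ha : 0 < a) (hb : 0 < b) (x x' y : V) :
    (((a + b) / 2 * ‖(1 / 2 : ℝ) • (x + x')‖ ^ 2 + 2 * a * b / (a + b) * ‖y‖ ^ 2) / 2) * 2
      ≤ (a * ‖x - y‖ ^ 2 + b * ‖x + y‖ ^ 2) / 4 + (b * ‖x' - y‖ ^ 2 + a * ‖x' + y‖ ^ 2) / 4 := by
  have defect : (a * ‖x - y‖ ^ 2 + b * ‖x + y‖ ^ 2) / 4 + (b * ‖x' - y‖ ^ 2 + a * ‖x' + y‖ ^ 2) / 4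
      - (((a + b) / 2 * ‖(1 / 2 : ℝ) • (x + x')‖ ^ 2 + 2 * a * b / (a + b) * ‖y‖ ^ 2) / 2) * 2
      = ‖(a + b) • (x - x') - (2 * (a - b)) • y‖ ^ 2 / (8 * (a + b)) := by
    simp only [← real_inner_self_eq_norm_sq, inner_add_left, inner_add_right, inner_sub_left,
      inner_sub_right, real_inner_smul_left, real_inner_smul_right]
    rw [real_inner_comm x y, real_inner_comm x x', real_inner_comm y x']
    field_simp
    ring
  exact sub_nonneg.1 (defect.symm ▸ by positivity)

lemma ofReal_exp_neg_mul_le {x y z : ℝ} (h : z * 2 ≤ x + y) :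
    ENNReal.ofReal (exp (-x)) * ENNReal.ofReal (exp (-y)) ≤ ENNReal.ofReal (exp (-z)) ^ 2 := by
  rw [← ENNReal.ofReal_mul (by positivity), ← ENNReal.ofReal_pow (by positivity), ← Real.exp_add,
    ← Real.exp_nat_mul]
  exact ENNReal.ofReal_le_ofReal (Real.exp_le_exp.2 (by push_cast; linarith))

end ParallelogramInequalities

section NormSqLaplace

variable {V : Type*} [NormedAddCommGroup V]

lemma ofReal_exp_neg_normSq_le_one {s : ℝ} (hs : 0 ≤ s) (x : V) :
    ENNReal.ofReal (exp (-(s * ‖x‖ ^ 2 / 2))) ≤ 1 := by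
  rw [ENNReal.ofReal_le_one, Real.exp_le_one_iff, Left.neg_nonpos_iff]
  positivity

variable [MeasurableSpace V]

/-- The Laplace transform of `‖x‖ ^ 2 / 2` under `ν`. -/
def normSqLaplace (ν : Measure V) (s : ℝ) : ℝ≥0∞ :=
  ∫⁻ x, ENNReal.ofReal (exp (-(s * ‖x‖ ^ 2 / 2))) ∂ν

/-- The Laplace transform of the quadratic form `(a, b)` of the coordinates `(x - y) / √2` and
`(x + y) / √2` of a pair of independent points with law `ν`. -/
def rotatedLaplace (ν : Measure V) (a b : ℝ) : ℝ≥0∞ :=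
  ∫⁻ p, ENNReal.ofReal (exp (-((a * ‖p.1 - p.2‖ ^ 2 + b * ‖p.1 + p.2‖ ^ 2) / 4))) ∂(ν.prod ν)

lemma normSqLaplace_le_one (ν : Measure V) [IsProbabilityMeasure ν] {s : ℝ} (hs : 0 ≤ s) :
    normSqLaplace ν s ≤ 1 :=
  (lintegral_mono (ofReal_exp_neg_normSq_le_one hs)).trans (by simp)

lemma normSqLaplace_ne_top (ν : Measure V) [IsProbabilityMeasure ν] {s : ℝ} (hs : 0 ≤ s) :
    normSqLaplace ν s ≠ ∞ :=
  ((normSqLaplace_le_one ν hs).trans_lt ENNReal.one_lt_top).ne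

variable [OpensMeasurableSpace V]

lemma normSqLaplace_mul_normSqLaplace (ν : Measure V) [SFinite ν] (a b : ℝ) :
    normSqLaplace ν a * normSqLaplace ν b
      = ∫⁻ p, ENNReal.ofReal (exp (-((a * ‖p.1‖ ^ 2 + b * ‖p.2‖ ^ 2) / 2))) ∂(ν.prod ν) := by
  rw [normSqLaplace, normSqLaplace, ← lintegral_prod_mul (by fun_prop) (by fun_prop)]
  refine lintegral_congr fun p ↦ ?_
  rw [← ENNReal.ofReal_mul (by positivity), ← Real.exp_add]
  ring_nf

lemma tendsto_normSqLaplace (ν : Measure V) [IsProbabilityMeasure ν] {u : ℕ → ℝ} {s : ℝ}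
    (hu : ∀ k, 0 ≤ u k) (h : Filter.Tendsto u .atTop (nhds s)) :
    Filter.Tendsto (fun k ↦ normSqLaplace ν (u k)) .atTop (nhds (normSqLaplace ν s)) := by
  refine tendsto_lintegral_of_dominated_convergence (fun _ ↦ 1) (fun k ↦ by fun_prop)
    (fun k ↦ .of_forall (ofReal_exp_neg_normSq_le_one (hu k))) (by simp) (.of_forall fun x ↦ ?_)
  exact ENNReal.tendsto_ofReal ((Real.continuous_exp.tendsto _).comp
    ((h.mul_const _).div_const _).neg)

end NormSqLaplace

section BabylonianIteration

/-- One step of the Babylonian iteration for the square root of `r ^ 2`: the arithmetic mean of `a`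
and `r ^ 2 / a`, whose harmonic mean is `r ^ 2 / babylonianStep r a`. -/
def babylonianStep (r a : ℝ) : ℝ := (a + r ^ 2 / a) / 2

variable {r a : ℝ}

lemma babylonianStep_pos (ha : 0 < a) : 0 < babylonianStep r a := by
  unfold babylonianStep
  positivity

lemma harmonicMean_eq_div_babylonianStep (ha : 0 < a) :
    2 * a * (r ^ 2 / a) / (a + r ^ 2 / a) = r ^ 2 / babylonianStep r a := by
  unfold babylonianStep
  field_simp

lemma le_babylonianStep (ha : 0 < a) : r ≤ babylonianStep r a := by
  have gap : babylonianStep r a - r = (a - r) ^ 2 / (2 * a) := by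
    unfold babylonianStep
    field_simp
    ring
  exact sub_nonneg.1 (gap.symm ▸ by positivity)

lemma babylonianStep_sub_le (hr : 0 < r) (h : r ≤ a) : babylonianStep r a - r ≤ (a - r) / 2 := by
  have div_le : r ^ 2 / a ≤ r := (div_le_iff₀ (hr.trans_le h)).2 (by nlinarith)
  unfold babylonianStep
  linarith

lemma iterate_babylonianStep_pos (ha : 0 < a) (k : ℕ) : 0 < (babylonianStep r)^[k] a := by
  induction k with
  | zero => exact ha
  | succ k ih =>
    rw [Function.iterate_succ_apply']
    exact babylonianStep_pos ih

lemma iterate_babylonianStep_sub_le (ha : 0 < a) (hr : 0 < r) (k : ℕ) :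
    (babylonianStep r)^[k + 1] a - r ≤ (babylonianStep r a - r) * (1 / 2) ^ k := by
  induction k with
  | zero => simp
  | succ k ih =>
    have le_iterate : r ≤ (babylonianStep r)^[k + 1] a := by
      rw [Function.iterate_succ_apply']
      exact le_babylonianStep (iterate_babylonianStep_pos ha k)
    rw [Function.iterate_succ_apply', pow_succ]
    linarith [babylonianStep_sub_le hr le_iterate]

theorem tendsto_iterate_babylonianStep (ha : 0 < a) (hr : 0 < r) :
    Filter.Tendsto (fun k ↦ (babylonianStep r)^[k] a) .atTop (nhds r) := by
  rw [← Filter.tendsto_add_atTop_iff_nat 1, ← tendsto_sub_nhds_zero_iff]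
  refine squeeze_zero (fun k ↦ ?_) (iterate_babylonianStep_sub_le ha hr) ?_
  · rw [Function.iterate_succ_apply']
    exact sub_nonneg.2 (le_babylonianStep (iterate_babylonianStep_pos ha k))
  · simpa using (tendsto_pow_atTop_nhds_zero_of_lt_one (r := (1 / 2 : ℝ)) (by norm_num)
      (by norm_num)).const_mul (babylonianStep r a - r)

end BabylonianIteration

section BInequality

variable {V : Type*} [NormedAddCommGroup V] [InnerProductSpace ℝ V] [MeasurableSpace V]
  [BorelSpace V] {ν : Measure V} {a b r : ℝ}

lemma PrekopaLeindler.rotatedLaplace_le [SecondCountableTopology V] [SFinite ν]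
    [ν.IsNegInvariant] (hν : PrekopaLeindler ν) (ha : 0 < a) (hb : 0 < b) :
    rotatedLaplace ν a b
      ≤ normSqLaplace ν ((a + b) / 2) * normSqLaplace ν (2 * a * b / (a + b)) := by
  rw [normSqLaplace_mul_normSqLaplace, rotatedLaplace,
    lintegral_prod_symm _ (by fun_prop), lintegral_prod_symm _ (by fun_prop)]
  refine lintegral_mono fun y ↦ ?_
  have swap_coefficients :
      ∫⁻ x, ENNReal.ofReal (exp (-((b * ‖x - y‖ ^ 2 + a * ‖x + y‖ ^ 2) / 4))) ∂ν
        = ∫⁻ x, ENNReal.ofReal (exp (-((a * ‖x - y‖ ^ 2 + b * ‖x + y‖ ^ 2) / 4))) ∂ν := by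
    rw [← lintegral_neg_eq_self]
    refine lintegral_congr fun x ↦ ?_
    rw [← norm_neg (-x - y), ← norm_neg (-x + y), neg_sub', neg_neg, sub_neg_eq_add, neg_add,
      neg_neg, ← sub_eq_add_neg, add_comm (b * _)]
  rw [← ENNReal.pow_le_pow_left_iff two_ne_zero]
  nth_rw 1 [sq]
  nth_rw 2 [← swap_coefficients]
  exact hν _ _ _ (by fun_prop) (by fun_prop) (by fun_prop) fun x x' ↦
    ofReal_exp_neg_mul_le (quadratic_midpoint_le_rotated ha hb x x' y)

variable [FiniteDimensional ℝ V]

lemma IsLogConcaveLaw.normSqLaplace_mul_normSqLaplace_le (hν : IsLogConcaveLaw ν) [SFinite ν]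
    (ha : 0 < a) (hb : 0 < b) :
    normSqLaplace ν a * normSqLaplace ν b
      ≤ rotatedLaplace ν ((a + b) / 2) (2 * a * b / (a + b)) := by
  rw [normSqLaplace_mul_normSqLaplace]
  exact hν.lintegral_prod_le_of_antidiagonal (by fun_prop) (by fun_prop) fun p q p' q' h ↦
    ofReal_exp_neg_mul_le (rotated_quadratic_midpoint_le ha hb h)

lemma normSqLaplace_mul_le_babylonianStep (hν : IsLogConcaveLaw ν) [SFinite ν]
    [ν.IsNegInvariant] (ha : 0 < a) (hr : 0 < r) :
    normSqLaplace ν a * normSqLaplace ν (r ^ 2 / a)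
      ≤ normSqLaplace ν ((babylonianStep r)^[2] a)
        * normSqLaplace ν (r ^ 2 / (babylonianStep r)^[2] a) := by
  have step_pos : 0 < babylonianStep r a := babylonianStep_pos ha
  have rotate := hν.normSqLaplace_mul_normSqLaplace_le ha (b := r ^ 2 / a) (by positivity)
  have rotate_back := hν.prekopaLeindler.rotatedLaplace_le step_pos
    (b := r ^ 2 / babylonianStep r a) (by positivity)
  rw [harmonicMean_eq_div_babylonianStep ha] at rotate
  rw [harmonicMean_eq_div_babylonianStep step_pos] at rotate_back
  exact rotate.trans rotate_back

/-- A case of the B-inequality of Cordero-Erausquin, Fradelizi and Maurey. -/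
theorem IsLogConcaveLaw.normSqLaplace_mul_le_sq (hν : IsLogConcaveLaw ν) [IsProbabilityMeasure ν]
    [ν.IsNegInvariant] (ha : 0 < a) (hr : 0 < r) :
    normSqLaplace ν a * normSqLaplace ν (r ^ 2 / a) ≤ normSqLaplace ν r ^ 2 := by
  set u : ℕ → ℝ := fun k ↦ (babylonianStep r)^[2 * k] a
  have u_pos (k : ℕ) : 0 < u k := iterate_babylonianStep_pos ha _
  have le_iterate (k : ℕ) : normSqLaplace ν a * normSqLaplace ν (r ^ 2 / a)
      ≤ normSqLaplace ν (u k) * normSqLaplace ν (r ^ 2 / u k) := by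
    induction k with
    | zero => rfl
    | succ k ih =>
      have u_succ : u (k + 1) = (babylonianStep r)^[2] (u k) := by
        rw [← Function.iterate_add_apply, add_comm 2, ← mul_add_one]
      exact u_succ ▸ ih.trans (normSqLaplace_mul_le_babylonianStep hν (u_pos k) hr)
  have tendsto_u : Filter.Tendsto u .atTop (nhds r) :=
    (tendsto_iterate_babylonianStep ha hr).comp
      (Filter.tendsto_id.const_mul_atTop' (r := 2) two_pos)
  have tendsto_div : Filter.Tendsto (fun k ↦ r ^ 2 / u k) .atTop (nhds r) := by
    have limit_eq : r ^ 2 / r = r := by rw [sq, mul_self_div_self]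
    nth_rw 2 [← limit_eq]
    exact tendsto_const_nhds.div tendsto_u hr.ne'
  have ne_top : normSqLaplace ν r ≠ ∞ := normSqLaplace_ne_top ν hr.le
  rw [sq (normSqLaplace ν r)]
  exact ge_of_tendsto' (ENNReal.Tendsto.mul
    (tendsto_normSqLaplace ν (fun k ↦ (u_pos k).le) tendsto_u) (.inr ne_top)
    (tendsto_normSqLaplace ν (fun k ↦ div_nonneg (sq_nonneg r) (u_pos k).le) tendsto_div)
    (.inr ne_top)) le_iterate

end BInequality

/-! ### Small balls for even laws -/

section Moments

variable {V : Type*} [NormedAddCommGroup V] [NormedSpace ℝ V] [MeasurableSpace V]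
  [OpensMeasurableSpace V] {ν : Measure V} [IsProbabilityMeasure ν]

lemma PrekopaLeindler.half_mul_lintegral_norm_pow_le (hν : PrekopaLeindler ν)
    (h2 : ∫⁻ x, ENNReal.ofReal (‖x‖ ^ 2) ∂ν = 1) (q : ℕ) :
    ENNReal.ofReal (1 / 2) * ∫⁻ x, ENNReal.ofReal (‖x‖ ^ (2 * q)) ∂ν
      ≤ (∫⁻ x, ENNReal.ofReal ((2 * ‖x‖ + 3 / 2) ^ q) ∂ν) ^ 2 := by
  calc ENNReal.ofReal (1 / 2) * ∫⁻ x, ENNReal.ofReal (‖x‖ ^ (2 * q)) ∂ν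
      ≤ (∫⁻ _ in {x | ‖x‖ ≤ 3 / 2}, 1 ∂ν)
          * ∫⁻ x in Set.univ, ENNReal.ofReal (‖x‖ ^ (2 * q)) ∂ν := by
        rw [setLIntegral_one, setLIntegral_univ]
        gcongr
        exact half_le_measure_norm_le h2
    _ ≤ (∫⁻ x in Set.univ, ENNReal.ofReal ((2 * ‖x‖ + 3 / 2) ^ q) ∂ν) ^ 2 := by
        refine hν.setLIntegral_mul_setLIntegral_le (measurableSet_le measurable_norm
          measurable_const) .univ .univ (by fun_prop) (by fun_prop) (by fun_prop)
          fun x (hx : ‖x‖ ≤ 3 / 2) y _ ↦ ⟨trivial, ?_⟩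
        rw [one_mul, ← ENNReal.ofReal_pow (by positivity), ← pow_mul, mul_comm q 2]
        gcongr
        linarith [norm_le_two_mul_norm_midpoint_add x y]
    _ = (∫⁻ x, ENNReal.ofReal ((2 * ‖x‖ + 3 / 2) ^ q) ∂ν) ^ 2 := by rw [setLIntegral_univ]

lemma PrekopaLeindler.lintegral_norm_pow_four_le (hν : PrekopaLeindler ν)
    (h2 : ∫⁻ x, ENNReal.ofReal (‖x‖ ^ 2) ∂ν = 1) :
    ∫⁻ x, ENNReal.ofReal (‖x‖ ^ 4) ∂ν ≤ ENNReal.ofReal 313 := by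
  have quadratic_le : ∫⁻ x, ENNReal.ofReal ((2 * ‖x‖ + 3 / 2) ^ 2) ∂ν
      ≤ ENNReal.ofReal (25 / 2) := by
    calc ∫⁻ x, ENNReal.ofReal ((2 * ‖x‖ + 3 / 2) ^ 2) ∂ν
        ≤ ∫⁻ x, (ENNReal.ofReal 8 * ENNReal.ofReal (‖x‖ ^ 2) + ENNReal.ofReal (9 / 2)) ∂ν := by
          refine lintegral_mono fun x ↦ ?_
          rw [← ENNReal.ofReal_mul (by norm_num), ← ENNReal.ofReal_add (by positivity)
            (by norm_num)]
          exact ENNReal.ofReal_le_ofReal (by nlinarith [sq_nonneg (2 * ‖x‖ - 3 / 2)])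
      _ = ENNReal.ofReal (25 / 2) := by
          rw [lintegral_add_right _ measurable_const, lintegral_const_mul' _ _ (by simp), h2,
            lintegral_const, measure_univ, mul_one, mul_one, ← ENNReal.ofReal_add (by norm_num)
            (by norm_num)]
          norm_num
  refine (ENNReal.mul_le_mul_iff_right (a := ENNReal.ofReal (1 / 2)) (by simp) (by simp)).1 ?_
  calc ENNReal.ofReal (1 / 2) * ∫⁻ x, ENNReal.ofReal (‖x‖ ^ 4) ∂ν
      ≤ (∫⁻ x, ENNReal.ofReal ((2 * ‖x‖ + 3 / 2) ^ 2) ∂ν) ^ 2 :=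
        hν.half_mul_lintegral_norm_pow_le h2 2
    _ ≤ ENNReal.ofReal (25 / 2) ^ 2 := by gcongr
    _ ≤ ENNReal.ofReal (1 / 2) * ENNReal.ofReal 313 := by
        rw [← ENNReal.ofReal_pow (by norm_num), ← ENNReal.ofReal_mul (by norm_num)]
        exact ENNReal.ofReal_le_ofReal (by norm_num)

lemma PrekopaLeindler.lintegral_norm_pow_two_pow_ne_top (hν : PrekopaLeindler ν)
    (h2 : ∫⁻ x, ENNReal.ofReal (‖x‖ ^ 2) ∂ν = 1) (k : ℕ) :
    ∫⁻ x, ENNReal.ofReal (‖x‖ ^ 2 ^ (k + 1)) ∂ν ≠ ∞ := by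
  induction k with
  | zero => simp only [zero_add, pow_one, h2, ne_eq, ENNReal.one_ne_top, not_false_eq_true]
  | succ k ih =>
    set q := 2 ^ (k + 1)
    have shifted_ne_top : ∫⁻ x, ENNReal.ofReal ((2 * ‖x‖ + 3 / 2) ^ q) ∂ν ≠ ∞ := by
      refine ne_top_of_le_ne_top (b := ∫⁻ x, (ENNReal.ofReal (2 ^ (q - 1) * 2 ^ q)
        * ENNReal.ofReal (‖x‖ ^ q) + ENNReal.ofReal (2 ^ (q - 1) * (3 / 2) ^ q)) ∂ν) ?_ ?_
      · rw [lintegral_add_right _ measurable_const, lintegral_const_mul' _ _ ENNReal.ofReal_ne_top,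
          lintegral_const, measure_univ, mul_one]
        exact ENNReal.add_ne_top.2
          ⟨ENNReal.mul_ne_top ENNReal.ofReal_ne_top ih, ENNReal.ofReal_ne_top⟩
      · refine lintegral_mono fun x ↦ ?_
        rw [← ENNReal.ofReal_mul (by positivity), ← ENNReal.ofReal_add (by positivity)
          (by positivity), mul_assoc, ← mul_pow, ← mul_add]
        exact ENNReal.ofReal_le_ofReal (add_pow_le (by positivity) (by positivity) q)
    rw [pow_succ' 2 (k + 1)]
    refine (ENNReal.lt_top_of_mul_ne_top_right (ne_top_of_le_ne_top
      (ENNReal.pow_ne_top shifted_ne_top) (hν.half_mul_lintegral_norm_pow_le h2 q)) ?_).ne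
    simp

end Moments

section NormSqLaplaceBounds

variable {V : Type*} [NormedAddCommGroup V] [MeasurableSpace V] [OpensMeasurableSpace V]
  {ν : Measure V} {s : ℝ}

lemma measure_norm_le_le_exp_mul_normSqLaplace (ν : Measure V) (hs : 0 ≤ s) (e : ℝ) :
    ν {x | ‖x‖ ≤ e} ≤ ENNReal.ofReal (exp (s * e ^ 2 / 2)) * normSqLaplace ν s := by
  rw [normSqLaplace, ← lintegral_const_mul' _ _ ENNReal.ofReal_ne_top, ← setLIntegral_one]
  refine (setLIntegral_mono (by fun_prop) fun x (hx : ‖x‖ ≤ e) ↦ ?_).trans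
    (setLIntegral_le_lintegral _ _)
  rw [← ENNReal.ofReal_mul (by positivity), ← Real.exp_add, ENNReal.one_le_ofReal,
    Real.one_le_exp_iff]
  have norm_sq_le : ‖x‖ ^ 2 ≤ e ^ 2 := pow_le_pow_left₀ (norm_nonneg x) hx 2
  nlinarith

variable [IsProbabilityMeasure ν]

/-- Jensen's inequality, in the form of the tangent line of `exp` at `-s / 2`. -/
lemma ofReal_exp_le_normSqLaplace (h2 : ∫⁻ x, ENNReal.ofReal (‖x‖ ^ 2) ∂ν = 1) (hs : 0 ≤ s) :
    ENNReal.ofReal (exp (-(s / 2))) ≤ normSqLaplace ν s := by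
  refine (ENNReal.add_le_add_iff_right
    (ENNReal.ofReal_ne_top (r := exp (-(s / 2)) * (s / 2)))).1 ?_
  calc ENNReal.ofReal (exp (-(s / 2))) + ENNReal.ofReal (exp (-(s / 2)) * (s / 2))
      = ∫⁻ _, ENNReal.ofReal (exp (-(s / 2)) * (1 + s / 2)) ∂ν := by
        rw [← ENNReal.ofReal_add (by positivity) (by positivity), lintegral_const, measure_univ,
          mul_one, mul_one_add]
    _ ≤ ∫⁻ x, (ENNReal.ofReal (exp (-(s * ‖x‖ ^ 2 / 2)))
          + ENNReal.ofReal (exp (-(s / 2)) * (s / 2)) * ENNReal.ofReal (‖x‖ ^ 2)) ∂ν := by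
        refine lintegral_mono fun x ↦ ?_
        rw [← ENNReal.ofReal_mul (by positivity), ← ENNReal.ofReal_add (by positivity)
          (by positivity)]
        have exp_eq : exp (-(s * ‖x‖ ^ 2 / 2))
            = exp (-(s / 2)) * exp (s / 2 - s * ‖x‖ ^ 2 / 2) := by
          rw [← Real.exp_add]
          ring_nf
        have tangent := mul_le_mul_of_nonneg_left
          (Real.add_one_le_exp (s / 2 - s * ‖x‖ ^ 2 / 2)) (Real.exp_pos (-(s / 2))).le
        exact ENNReal.ofReal_le_ofReal (by linarith)
    _ = normSqLaplace ν s + ENNReal.ofReal (exp (-(s / 2)) * (s / 2)) := by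
        rw [lintegral_add_left (by fun_prop), lintegral_const_mul' _ _ (by simp), h2, mul_one,
          normSqLaplace]

lemma exp_neg_le_one_sub_add_sq {x : ℝ} (hx : 0 ≤ x) : exp (-x) ≤ 1 - x + x ^ 2 / 2 := by
  have poly_pos : 0 < 1 - x + x ^ 2 / 2 := by nlinarith [sq_nonneg (x - 1)]
  rw [Real.exp_neg, inv_le_comm₀ (Real.exp_pos _) poly_pos]
  refine le_trans ?_ (Real.quadratic_le_exp_of_nonneg hx)
  rw [inv_le_iff_one_le_mul₀ poly_pos]
  nlinarith [pow_nonneg hx 4]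

lemma normSqLaplace_inv_two_hundred_le (h2 : ∫⁻ x, ENNReal.ofReal (‖x‖ ^ 2) ∂ν = 1)
    (h4 : ∫⁻ x, ENNReal.ofReal (‖x‖ ^ 4) ∂ν ≤ ENNReal.ofReal 313) :
    normSqLaplace ν (1 / 200) ≤ ENNReal.ofReal (1 - 0.0015) := by
  refine (ENNReal.add_le_add_iff_right (ENNReal.ofReal_ne_top (r := 1 / 400))).1 ?_
  calc normSqLaplace ν (1 / 200) + ENNReal.ofReal (1 / 400)
      = ∫⁻ x, (ENNReal.ofReal (exp (-(1 / 200 * ‖x‖ ^ 2 / 2)))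
          + ENNReal.ofReal (1 / 400) * ENNReal.ofReal (‖x‖ ^ 2)) ∂ν := by
        rw [lintegral_add_left (by fun_prop), lintegral_const_mul' _ _ (by simp), h2, mul_one,
          normSqLaplace]
    _ ≤ ∫⁻ x, (1 + ENNReal.ofReal (1 / 320000) * ENNReal.ofReal (‖x‖ ^ 4)) ∂ν := by
        refine lintegral_mono fun x ↦ ?_
        rw [← ENNReal.ofReal_one, ← ENNReal.ofReal_mul (by positivity),
          ← ENNReal.ofReal_add (by positivity) (by positivity),
          ← ENNReal.ofReal_mul (by positivity), ← ENNReal.ofReal_add (by positivity)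
          (by positivity)]
        have := exp_neg_le_one_sub_add_sq (x := 1 / 200 * ‖x‖ ^ 2 / 2) (by positivity)
        exact ENNReal.ofReal_le_ofReal (by linarith)
    _ = 1 + ENNReal.ofReal (1 / 320000) * ∫⁻ x, ENNReal.ofReal (‖x‖ ^ 4) ∂ν := by
        rw [lintegral_add_left measurable_const, lintegral_const_mul' _ _ (by simp),
          lintegral_const, measure_univ, mul_one]
    _ ≤ 1 + ENNReal.ofReal (1 / 320000) * ENNReal.ofReal 313 := by gcongr
    _ ≤ ENNReal.ofReal (1 - 0.0015) + ENNReal.ofReal (1 / 400) := by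
        rw [← ENNReal.ofReal_one, ← ENNReal.ofReal_mul (by norm_num),
          ← ENNReal.ofReal_add (by norm_num) (by norm_num),
          ← ENNReal.ofReal_add (by norm_num) (by norm_num)]
        exact ENNReal.ofReal_le_ofReal (by norm_num)

lemma normSqLaplace_le_measure_add (hs : 0 ≤ s) :
    normSqLaplace ν s ≤ ν {x | ‖x‖ ≤ 1 / 2} + ENNReal.ofReal (exp (-(s / 8))) := by
  have measurable_ball : MeasurableSet {x : V | ‖x‖ ≤ 1 / 2} :=
    measurableSet_le measurable_norm measurable_const
  rw [normSqLaplace, ← lintegral_add_compl _ measurable_ball]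
  gcongr
  · exact (setLIntegral_mono measurable_const fun x _ ↦
      ofReal_exp_neg_normSq_le_one hs x).trans_eq (setLIntegral_one _)
  · calc ∫⁻ x in {x | ‖x‖ ≤ 1 / 2}ᶜ, ENNReal.ofReal (exp (-(s * ‖x‖ ^ 2 / 2))) ∂ν
        ≤ ∫⁻ _ in {x | ‖x‖ ≤ 1 / 2}ᶜ, ENNReal.ofReal (exp (-(s / 8))) ∂ν := by
          refine setLIntegral_mono measurable_const fun x hx ↦ ?_
          have norm_sq_ge : (1 / 2 : ℝ) ^ 2 ≤ ‖x‖ ^ 2 :=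
            pow_le_pow_left₀ (by norm_num) (not_le.1 (Set.notMem_ofPred_iff.1 hx)).le 2
          exact ENNReal.ofReal_le_ofReal (Real.exp_le_exp.2 (by nlinarith))
      _ ≤ ENNReal.ofReal (exp (-(s / 8))) := by
          rw [setLIntegral_const]
          exact mul_le_of_le_one_right' prob_le_one

end NormSqLaplaceBounds

section GeometricDecay

lemma le_pow_mul_of_mul_le_sq {p : ℕ → ℝ≥0∞} {q : ℝ≥0∞} (hp0 : ∀ k, p k ≠ 0)
    (hp : ∀ k, p k ≠ ∞) (h : ∀ k, p k * p (k + 2) ≤ p (k + 1) ^ 2) (h1 : p 1 ≤ q * p 0) (k : ℕ) :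
    p k ≤ q ^ k * p 0 := by
  have step (k : ℕ) : p (k + 1) ≤ q * p k := by
    induction k with
    | zero => exact h1
    | succ k ih =>
      refine (ENNReal.mul_le_mul_iff_right (hp0 k) (hp k)).1 ((h k).trans ?_)
      calc p (k + 1) ^ 2 ≤ q * p k * p (k + 1) := by
            rw [sq]
            gcongr
        _ = p k * (q * p (k + 1)) := by ring
  induction k with
  | zero => simp
  | succ k ih =>
    calc p (k + 1) ≤ q * (q ^ k * p 0) := (step k).trans (by gcongr)
      _ = q ^ (k + 1) * p 0 := by ring

lemma exists_sixteen_pow_mul_sq_le_one {e : ℝ} (he : 0 < e) (he1 : e ≤ (1 / 2) ^ 16) :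
    ∃ k : ℕ, 16 ^ k * e ^ 2 ≤ 1 ∧ log ((1 / 2) ^ 16 / e) / 2 + 8 ≤ k + 1 := by
  set L := log ((1 / 2) ^ 16 / e)
  have L_nonneg : 0 ≤ L := Real.log_nonneg (by rwa [one_le_div he])
  have : 0 < log 2 := Real.log_pos one_lt_two
  set u := L / (2 * log 2) + 8
  have u_ge : L / 2 + 8 ≤ u := by
    have := div_le_div_of_nonneg_left L_nonneg (by positivity)
      (show 2 * log 2 ≤ 2 by linarith [Real.log_two_lt_d9])
    linarith
  have u_mul_log : u * log 16 + 2 * log e = 0 := by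
    have log_sixteen : log 16 = 4 * log 2 := by
      rw [show (16 : ℝ) = 2 ^ 4 by norm_num, Real.log_pow, Nat.cast_ofNat]
    have L_eq : L = -(16 * log 2) - log e := by
      simp only [L]
      rw [Real.log_div (by positivity) he.ne', Real.log_pow, one_div, Real.log_inv, Nat.cast_ofNat,
        mul_neg]
    simp only [u, L_eq, log_sixteen]
    field_simp
    ring
  have floor_le : (⌊u⌋₊ : ℝ) ≤ u := Nat.floor_le (by positivity)
  refine ⟨⌊u⌋₊, ?_, u_ge.trans (Nat.lt_floor_add_one u).le⟩
  rw [← Real.log_nonpos_iff (by positivity), Real.log_mul (by positivity) (by positivity),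
    Real.log_pow, Real.log_pow, Nat.cast_ofNat, ← u_mul_log]
  gcongr

variable {V : Type*} [NormedAddCommGroup V] [InnerProductSpace ℝ V] [MeasurableSpace V]
  [BorelSpace V] [FiniteDimensional ℝ V] {ν : Measure V} [IsProbabilityMeasure ν]
  [ν.IsNegInvariant] {s η e : ℝ} {q : ℝ≥0∞}

lemma IsLogConcaveLaw.normSqLaplace_mul_pow_le (hν : IsLogConcaveLaw ν)
    (h2 : ∫⁻ x, ENNReal.ofReal (‖x‖ ^ 2) ∂ν = 1) (hs : 0 < s)
    (h : normSqLaplace ν s ≤ q * normSqLaplace ν (s / 16)) (k : ℕ) :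
    normSqLaplace ν (s * 16 ^ k) ≤ q ^ (k + 1) := by
  have decay := le_pow_mul_of_mul_le_sq (p := fun k ↦ normSqLaplace ν (s / 16 * 16 ^ k)) (q := q)
    (fun k ↦ ?_) (fun k ↦ normSqLaplace_ne_top ν (by positivity)) (fun k ↦ ?_) ?_ (k + 1)
  · rw [show s * 16 ^ k = s / 16 * 16 ^ (k + 1) by ring]
    exact decay.trans (mul_le_of_le_one_right' (normSqLaplace_le_one ν (by positivity)))
  · refine (lt_of_lt_of_le ?_ (ofReal_exp_le_normSqLaplace h2 (by positivity))).ne'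
    simpa using Real.exp_pos _
  · convert hν.normSqLaplace_mul_le_sq (a := s / 16 * 16 ^ k) (r := s / 16 * 16 ^ (k + 1))
      (by positivity) (by positivity) using 3
    field_simp
    ring
  · simpa using h

/-- Apply the geometric decay at `s * 16 ^ k ≈ s / e ^ 2`. -/
theorem IsLogConcaveLaw.measure_norm_le_le_of_normSqLaplace_le (hν : IsLogConcaveLaw ν)
    (h2 : ∫⁻ x, ENNReal.ofReal (‖x‖ ^ 2) ∂ν = 1) (hs : 0 < s) (hsη : s ≤ 16 * η)
    (h : normSqLaplace ν s ≤ ENNReal.ofReal (exp (-η)) * normSqLaplace ν (s / 16))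
    (he : 0 < e) (he1 : e ≤ (1 / 2) ^ 16) :
    ν {x | ‖x‖ ≤ e} ≤ ENNReal.ofReal (exp (-(η / 2 * log ((1 / 2) ^ 16 / e)))) := by
  obtain ⟨k, pow_mul_sq_le, k_ge⟩ := exists_sixteen_pow_mul_sq_le_one he he1
  calc ν {x | ‖x‖ ≤ e}
      ≤ ENNReal.ofReal (exp (s * 16 ^ k * e ^ 2 / 2)) * normSqLaplace ν (s * 16 ^ k) :=
        measure_norm_le_le_exp_mul_normSqLaplace ν (by positivity) e
    _ ≤ ENNReal.ofReal (exp (s / 2)) * ENNReal.ofReal (exp (-η)) ^ (k + 1) := by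
        gcongr
        · nlinarith
        · exact hν.normSqLaplace_mul_pow_le h2 hs h k
    _ = ENNReal.ofReal (exp (s / 2 - (k + 1) * η)) := by
        rw [← ENNReal.ofReal_pow (by positivity), ← ENNReal.ofReal_mul (by positivity),
          ← Real.exp_nat_mul, ← Real.exp_add]
        push_cast
        ring_nf
    _ ≤ ENNReal.ofReal (exp (-(η / 2 * log ((1 / 2) ^ 16 / e)))) := by
        refine ENNReal.ofReal_le_ofReal (Real.exp_le_exp.2 ?_)
        have η_nonneg : 0 ≤ η := by linarith
        linarith [mul_le_mul_of_nonneg_left k_ge η_nonneg]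

end GeometricDecay

namespace IsPsiAlphaLaw

variable {V : Type*} [NormedAddCommGroup V] [InnerProductSpace ℝ V] [MeasurableSpace V]
  [BorelSpace V] [FiniteDimensional ℝ V] {ν : Measure V} {K α e : ℝ}

lemma measure_norm_le_half_le (S : IsPsiAlphaLaw ν K α) :
    ν {x | ‖x‖ ≤ 1 / 2} ≤ ENNReal.ofReal (192 * exp (-(6.25e-39 * K))) := by
  have rpow_ge : (1 / 16 : ℝ) ≤ (1 / 2) ^ (2 + α) := by
    calc (1 / 16 : ℝ) = (1 / 2) ^ (4 : ℝ) := by norm_num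
      _ ≤ (1 / 2) ^ (2 + α) :=
        Real.rpow_le_rpow_of_exponent_ge (by norm_num) (by norm_num) (by linarith [S.le_two])
  have deviation := S.measure_norm_le_one_sub_le (t := 1 / 2) (by norm_num) (by norm_num)
  rw [show (1 : ℝ) - 1 / 2 = 1 / 2 by norm_num] at deviation
  refine deviation.trans (ENNReal.ofReal_le_ofReal ?_)
  have := mul_le_mul_of_nonneg_left rpow_ge S.pos.le
  exact mul_le_mul_of_nonneg_left (Real.exp_le_exp.2 (by linarith)) (by norm_num)

lemma exists_normSqLaplace_le (S : IsPsiAlphaLaw ν K α) :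
    ∃ s η : ℝ, 0 < s ∧ s ≤ 16 * η ∧ 2e-43 * K ≤ η ∧
      normSqLaplace ν s ≤ ENNReal.ofReal (exp (-η)) * normSqLaplace ν (s / 16) := by
  have := S.isProbabilityMeasure
  have K_pos := S.pos
  set κ := 6.25e-39 * K with hκ
  have : 0 < κ := by positivity
  rcases le_total 24 κ with large | small
  · refine ⟨8 * κ, κ / 2, by positivity, by linarith, by linarith, ?_⟩
    have exp_six : (193 : ℝ) ≤ exp 6 := by
      calc (193 : ℝ) ≤ 2.5 ^ 6 := by norm_num
        _ ≤ exp 1 ^ 6 := by gcongr; linarith [Real.exp_one_gt_d9]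
        _ = exp 6 := by rw [← Real.exp_nat_mul]; norm_num
    calc normSqLaplace ν (8 * κ)
        ≤ ENNReal.ofReal (192 * exp (-κ)) + ENNReal.ofReal (exp (-(8 * κ / 8))) :=
          (normSqLaplace_le_measure_add (by positivity)).trans (by
            gcongr
            exact S.measure_norm_le_half_le)
      _ = ENNReal.ofReal (193 * exp (-κ)) := by
          rw [← ENNReal.ofReal_add (by positivity) (by positivity)]
          ring_nf
      _ ≤ ENNReal.ofReal (exp (κ / 4) * exp (-κ)) := by
          gcongr
          exact exp_six.trans (Real.exp_le_exp.2 (by linarith))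
      _ = ENNReal.ofReal (exp (-(κ / 2))) * ENNReal.ofReal (exp (-(8 * κ / 16 / 2))) := by
          rw [← ENNReal.ofReal_mul (by positivity), ← Real.exp_add, ← Real.exp_add]
          ring_nf
      _ ≤ _ := by
          gcongr
          exact ofReal_exp_le_normSqLaplace S.lintegral_norm_sq (by positivity)
  · refine ⟨1 / 200, 0.001, by norm_num, by norm_num, by norm_num at hκ ⊢; linarith, ?_⟩
    calc normSqLaplace ν (1 / 200) ≤ ENNReal.ofReal (1 - 0.0015) :=
          normSqLaplace_inv_two_hundred_le S.lintegral_norm_sq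
            (S.isLogConcaveLaw.prekopaLeindler.lintegral_norm_pow_four_le S.lintegral_norm_sq)
      _ ≤ ENNReal.ofReal (exp (-0.001 + -(1 / 200 / 16 / 2))) := by
          refine ENNReal.ofReal_le_ofReal (le_trans ?_ (Real.add_one_le_exp _))
          norm_num
      _ = ENNReal.ofReal (exp (-0.001)) * ENNReal.ofReal (exp (-(1 / 200 / 16 / 2))) := by
          rw [Real.exp_add, ENNReal.ofReal_mul (by positivity)]
      _ ≤ _ := by
          gcongr
          exact ofReal_exp_le_normSqLaplace S.lintegral_norm_sq (by norm_num)

theorem measure_norm_le_le_of_isNegInvariant (S : IsPsiAlphaLaw ν K α) [ν.IsNegInvariant]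
    (he : 0 < e) (he1 : e ≤ (1 / 2) ^ 16) :
    ν {x | ‖x‖ ≤ e} ≤ ENNReal.ofReal (exp (-(1e-43 * K * log ((1 / 2) ^ 16 / e)))) := by
  have := S.isProbabilityMeasure
  obtain ⟨s, η, hs, hsη, hη, decay⟩ := S.exists_normSqLaplace_le
  have log_nonneg : 0 ≤ log ((1 / 2) ^ 16 / e) := Real.log_nonneg (by rwa [one_le_div he])
  refine (S.isLogConcaveLaw.measure_norm_le_le_of_normSqLaplace_le S.lintegral_norm_sq hs hsη decay
    he he1).trans (ENNReal.ofReal_le_ofReal (Real.exp_le_exp.2 (neg_le_neg ?_)))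
  gcongr
  linarith

end IsPsiAlphaLaw

/-! ### Symmetrization -/

section Symmetrization

variable {V : Type*} [NormedAddCommGroup V] [InnerProductSpace ℝ V]

lemma ofReal_inner_normalized_sub_pow_le (x x' y : V) {j : ℕ} :
    ENNReal.ofReal (⟪(√2)⁻¹ • (x - x'), y⟫ ^ (2 * j))
      ≤ ENNReal.ofReal (2 ^ (j - 1))
        * (ENNReal.ofReal (⟪x, y⟫ ^ (2 * j)) + ENNReal.ofReal (⟪x', y⟫ ^ (2 * j))) := by
  rw [real_inner_smul_left, inner_sub_left, ← ENNReal.ofReal_add (Even.pow_nonneg (by simp) _)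
    (Even.pow_nonneg (by simp) _), ← ENNReal.ofReal_mul (by positivity)]
  refine ENNReal.ofReal_le_ofReal ?_
  calc ((√2)⁻¹ * (⟪x, y⟫ - ⟪x', y⟫)) ^ (2 * j) = ((⟪x, y⟫ - ⟪x', y⟫) ^ 2 / 2) ^ j := by
        rw [pow_mul, mul_pow, inv_pow, Real.sq_sqrt zero_le_two, inv_mul_eq_div]
    _ ≤ (⟪x, y⟫ ^ 2 + ⟪x', y⟫ ^ 2) ^ j := by
        gcongr
        linarith [sq_nonneg (⟪x, y⟫ + ⟪x', y⟫)]
    _ ≤ 2 ^ (j - 1) * (⟪x, y⟫ ^ (2 * j) + ⟪x', y⟫ ^ (2 * j)) := by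
        simpa only [pow_mul] using add_pow_le (sq_nonneg ⟪x, y⟫) (sq_nonneg ⟪x', y⟫) j

variable [FiniteDimensional ℝ V] [MeasurableSpace V] {ν : Measure V}

lemma lintegral_norm_sq_normalized_sub [IsProbabilityMeasure ν] (hν : MemLp id 2 ν)
    (centered : ∫ x, x ∂ν = 0) (x : V) :
    ∫⁻ x', ENNReal.ofReal (‖(√2)⁻¹ • (x - x')‖ ^ 2) ∂ν
      = ENNReal.ofReal (1 / 2) * ENNReal.ofReal (‖x‖ ^ 2)
        + ENNReal.ofReal (1 / 2) * ∫⁻ x', ENNReal.ofReal (‖x'‖ ^ 2) ∂ν := by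
  have int_id : Integrable (fun x ↦ x) ν := hν.integrable one_le_two
  have int_sq : Integrable (fun x ↦ ‖x‖ ^ 2) ν := hν.integrable_norm_pow two_ne_zero
  have expand (x' : V) :
      ‖(√2)⁻¹ • (x - x')‖ ^ 2 = 1 / 2 * ‖x‖ ^ 2 + 1 / 2 * ‖x'‖ ^ 2 - ⟪x, x'⟫ := by
    rw [norm_smul, mul_pow, norm_inv, inv_pow, Real.norm_eq_abs, sq_abs,
      Real.sq_sqrt zero_le_two, norm_sub_sq_real]
    ring
  have int_add : Integrable (fun x' ↦ 1 / 2 * ‖x‖ ^ 2 + 1 / 2 * ‖x'‖ ^ 2) ν :=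
    (integrable_const _).add (int_sq.const_mul _)
  have int_sub := int_add.sub (int_id.const_inner x)
  have integral_eq : ∫ x', ‖(√2)⁻¹ • (x - x')‖ ^ 2 ∂ν
      = 1 / 2 * ‖x‖ ^ 2 + 1 / 2 * ∫ x', ‖x'‖ ^ 2 ∂ν := by
    rw [integral_congr_ae (.of_forall expand), integral_sub int_add (int_id.const_inner x),
      integral_add (integrable_const _) (int_sq.const_mul _), integral_const,
      integral_const_mul, integral_inner int_id, centered, inner_zero_right, sub_zero,
      probReal_univ, one_smul]
  rw [← ofReal_integral_eq_lintegral_ofReal (int_sub.congr (.of_forall fun x' ↦ (expand x').symm))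
      (.of_forall fun _ ↦ by positivity), integral_eq,
    ← ofReal_integral_eq_lintegral_ofReal int_sq (.of_forall fun _ ↦ by positivity),
    ← ENNReal.ofReal_mul (by norm_num), ← ENNReal.ofReal_mul (by norm_num),
    ← ENNReal.ofReal_add (by positivity)
      (mul_nonneg (by norm_num) (integral_nonneg fun _ ↦ by positivity))]

variable [BorelSpace V]

/-- The law of `(X - X') / √2` for independent `X`, `X'` with law `ν`: an even law with the
covariance of `ν`. -/
def symmetrization (ν : Measure V) : Measure V :=
  (ν.prod ν).map
    ((√2)⁻¹ • (ContinuousLinearMap.fst ℝ V V - ContinuousLinearMap.snd ℝ V V))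

lemma lintegral_symmetrization [SFinite ν] {f : V → ℝ≥0∞} (hf : Measurable f) :
    ∫⁻ z, f z ∂(symmetrization ν) = ∫⁻ x, ∫⁻ x', f ((√2)⁻¹ • (x - x')) ∂ν ∂ν := by
  rw [symmetrization, lintegral_map hf (ContinuousLinearMap.measurable _),
    lintegral_prod _ (by fun_prop)]
  rfl

instance symmetrization_isNegInvariant [SFinite ν] : (symmetrization ν).IsNegInvariant where
  neg_eq_self := by
    rw [Measure.neg, symmetrization, Measure.map_map measurable_neg
      (ContinuousLinearMap.measurable _)]
    nth_rewrite 2 [← Measure.prod_swap]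
    rw [Measure.map_map (ContinuousLinearMap.measurable _) measurable_swap]
    congr 1
    ext p
    simp [← smul_neg]

lemma lintegral_norm_sq_symmetrization [IsProbabilityMeasure ν] (hν : MemLp id 2 ν)
    (centered : ∫ x, x ∂ν = 0) :
    ∫⁻ z, ENNReal.ofReal (‖z‖ ^ 2) ∂(symmetrization ν) = ∫⁻ x, ENNReal.ofReal (‖x‖ ^ 2) ∂ν := by
  rw [lintegral_symmetrization (by fun_prop),
    lintegral_congr (lintegral_norm_sq_normalized_sub hν centered),
    lintegral_add_right _ measurable_const, lintegral_const_mul' _ _ ENNReal.ofReal_ne_top,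
    lintegral_const, measure_univ, mul_one, ← add_mul,
    ← ENNReal.ofReal_add (by norm_num) (by norm_num)]
  norm_num

lemma lintegral_inner_pow_symmetrization_le [IsProbabilityMeasure ν] (y : V) {j : ℕ}
    (hj : 1 ≤ j) :
    ∫⁻ z, ENNReal.ofReal (⟪z, y⟫ ^ (2 * j)) ∂(symmetrization ν)
      ≤ 2 ^ j * ∫⁻ x, ENNReal.ofReal (⟪x, y⟫ ^ (2 * j)) ∂ν := by
  rw [lintegral_symmetrization (by fun_prop)]
  set M := ∫⁻ x, ENNReal.ofReal (⟪x, y⟫ ^ (2 * j)) ∂ν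
  calc ∫⁻ x, ∫⁻ x', ENNReal.ofReal (⟪(√2)⁻¹ • (x - x'), y⟫ ^ (2 * j)) ∂ν ∂ν
      ≤ ∫⁻ x, ∫⁻ x', ENNReal.ofReal (2 ^ (j - 1)) * (ENNReal.ofReal (⟪x, y⟫ ^ (2 * j))
          + ENNReal.ofReal (⟪x', y⟫ ^ (2 * j))) ∂ν ∂ν :=
        lintegral_mono fun x ↦ lintegral_mono fun x' ↦ ofReal_inner_normalized_sub_pow_le x x' y
    _ = ∫⁻ x, ENNReal.ofReal (2 ^ (j - 1)) * (ENNReal.ofReal (⟪x, y⟫ ^ (2 * j)) + M) ∂ν := by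
        refine lintegral_congr fun x ↦ ?_
        rw [lintegral_const_mul' _ _ ENNReal.ofReal_ne_top, lintegral_add_left measurable_const,
          lintegral_const, measure_univ, mul_one]
    _ = ENNReal.ofReal (2 ^ (j - 1)) * (M + M) := by
        rw [lintegral_const_mul' _ _ ENNReal.ofReal_ne_top, lintegral_add_right _ measurable_const,
          lintegral_const, measure_univ, mul_one]
    _ = 2 ^ j * M := by
        rw [ENNReal.ofReal_pow zero_le_two, ENNReal.ofReal_ofNat, ← two_mul, ← mul_assoc,
          ← pow_succ, Nat.sub_add_cancel hj]

lemma measure_norm_le_sq_le_symmetrization [SFinite ν] (e : ℝ) :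
    ν {x | ‖x‖ ≤ e} ^ 2 ≤ symmetrization ν {z | ‖z‖ ≤ 2 * e} := by
  rw [sq, ← Measure.prod_prod]
  refine (measure_mono fun p hp ↦ ?_).trans (Measure.le_map_apply (by fun_prop) _)
  have inv_sqrt_two_le : ‖(√2)⁻¹‖ ≤ 1 := by
    rw [norm_inv, Real.norm_of_nonneg (Real.sqrt_nonneg 2)]
    exact inv_le_one_of_one_le₀ (Real.one_le_sqrt.2 one_le_two)
  calc ‖(√2)⁻¹ • (p.1 - p.2)‖ ≤ 1 * (‖p.1‖ + ‖p.2‖) := by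
        rw [norm_smul]
        gcongr
        exact norm_sub_le _ _
    _ ≤ 2 * e := by linarith [hp.1.out, hp.2.out]

namespace IsPsiAlphaLaw

variable {K α e : ℝ}

lemma memLp_id_two (S : IsPsiAlphaLaw ν K α) : MemLp id 2 ν := by
  refine (memLp_two_iff_integrable_sq_norm (by fun_prop)).2 ⟨by fun_prop, ?_⟩
  rw [hasFiniteIntegral_iff_ofReal (.of_forall fun _ ↦ by positivity)]
  simp only [id_eq, S.lintegral_norm_sq, ENNReal.one_lt_top]

theorem symmetrization (S : IsPsiAlphaLaw ν K α) (centered : ∫ x, x ∂ν = 0) :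
    IsPsiAlphaLaw (symmetrization ν) (K / 2) α where
  isProbabilityMeasure := by
    have := S.isProbabilityMeasure
    exact Measure.isProbabilityMeasure_map (by fun_prop)
  isLogConcaveLaw := (S.isLogConcaveLaw.prod S.isLogConcaveLaw).map _
  lintegral_norm_sq := by
    have := S.isProbabilityMeasure
    rw [lintegral_norm_sq_symmetrization S.memLp_id_two centered, S.lintegral_norm_sq]
  lintegral_inner_pow_le j hj y hy := by
    have := S.isProbabilityMeasure
    have K_pos := S.pos
    have two_le : (2 : ℝ) ≤ (2 ^ (1 / α)) ^ 2 := by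
      rw [← Real.rpow_mul_natCast zero_le_two]
      refine Real.self_le_rpow_of_one_le one_le_two ?_
      rw [Nat.cast_ofNat, one_div_mul_eq_div, one_le_div (by linarith [S.one_le])]
      exact S.le_two
    calc ∫⁻ z, ENNReal.ofReal (⟪z, y⟫ ^ (2 * j)) ∂(_root_.symmetrization ν)
        ≤ 2 ^ j * ENNReal.ofReal ((((2 * j : ℕ) : ℝ) / K) ^ (1 / α)) ^ (2 * j) :=
          (lintegral_inner_pow_symmetrization_le y hj).trans
            (by gcongr; exact S.lintegral_inner_pow_le j hj y hy)
      _ ≤ (ENNReal.ofReal ((2 ^ (1 / α)) ^ 2)) ^ j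
            * ENNReal.ofReal ((((2 * j : ℕ) : ℝ) / K) ^ (1 / α)) ^ (2 * j) := by
          gcongr
          exact ENNReal.ofNat_le_ofReal.2 two_le
      _ = ENNReal.ofReal ((((2 * j : ℕ) : ℝ) / (K / 2)) ^ (1 / α)) ^ (2 * j) := by
          rw [ENNReal.ofReal_pow (by positivity), ← pow_mul, ← mul_pow,
            ← ENNReal.ofReal_mul (by positivity), ← Real.mul_rpow zero_le_two (by positivity)]
          congr 3
          field_simp
  one_le := S.one_le
  le_two := S.le_two
  pos := half_pos S.pos

theorem measure_norm_le_le (S : IsPsiAlphaLaw ν K α) (centered : ∫ x, x ∂ν = 0) (he : 0 < e)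
    (he1 : e ≤ (1 / 2) ^ 17) :
    ν {x | ‖x‖ ≤ e} ≤ ENNReal.ofReal (exp (-(1e-44 * K * log ((1 / 2) ^ 17 / e)))) := by
  have := S.isProbabilityMeasure
  have even_case := (S.symmetrization centered).measure_norm_le_le_of_isNegInvariant
    (e := 2 * e) (by positivity) (by linarith)
  rw [show (1 / 2 : ℝ) ^ 16 / (2 * e) = (1 / 2) ^ 17 / e by field_simp] at even_case
  have log_nonneg : 0 ≤ log ((1 / 2) ^ 17 / e) := Real.log_nonneg (by rwa [one_le_div he])
  rw [← ENNReal.pow_le_pow_left_iff two_ne_zero, ← ENNReal.ofReal_pow (by positivity),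
    ← Real.exp_nat_mul]
  refine (measure_norm_le_sq_le_symmetrization e).trans
    (even_case.trans (ENNReal.ofReal_le_ofReal (Real.exp_le_exp.2 ?_)))
  have : 0 ≤ K * log ((1 / 2) ^ 17 / e) := mul_nonneg S.pos.le log_nonneg
  push_cast
  linarith

theorem measure_norm_le_one_sub_le_max (S : IsPsiAlphaLaw ν K α) (centered : ∫ x, x ∂ν = 0)
    {t : ℝ} (ht : 0 ≤ t) (ht1 : t < 1) :
    ν {x | ‖x‖ ≤ 1 - t} ≤ ENNReal.ofReal
      (192 * exp (-(1e-44 * K * max (t ^ (2 + α)) (log ((1 / 2) ^ 17 / (1 - t)))))) := by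
  have rpow_nonneg : 0 ≤ t ^ (2 + α) := by positivity
  rcases le_total (log ((1 / 2) ^ 17 / (1 - t))) (t ^ (2 + α)) with deviation | small_ball
  · rw [max_eq_left deviation]
    refine (S.measure_norm_le_one_sub_le ht ht1.le).trans (ENNReal.ofReal_le_ofReal ?_)
    have := mul_nonneg S.pos.le rpow_nonneg
    exact mul_le_mul_of_nonneg_left (Real.exp_le_exp.2 (by linarith)) (by norm_num)
  · have one_sub_le : 1 - t ≤ (1 / 2) ^ 17 := by
      have ratio_pos : (0 : ℝ) < (1 / 2) ^ 17 / (1 - t) := div_pos (by norm_num) (by linarith)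
      exact (one_le_div (by linarith)).1
        ((Real.log_nonneg_iff ratio_pos).1 (rpow_nonneg.trans small_ball))
    rw [max_eq_right small_ball]
    refine (S.measure_norm_le_le centered (by linarith) one_sub_le).trans
      (ENNReal.ofReal_le_ofReal ?_)
    exact le_mul_of_one_le_left (Real.exp_nonneg _) (by norm_num)

end IsPsiAlphaLaw

end Symmetrization

/-! ### Isotropic random vectors -/

section MomentIntegrability

variable {V : Type*} [NormedAddCommGroup V] [InnerProductSpace ℝ V] [MeasurableSpace V]
  [BorelSpace V] [FiniteDimensional ℝ V] {ν : Measure V} [IsProbabilityMeasure ν]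

lemma PrekopaLeindler.integrable_norm_pow (hν : PrekopaLeindler ν)
    (h2 : ∫⁻ x, ENNReal.ofReal (‖x‖ ^ 2) ∂ν = 1) (m : ℕ) : Integrable (fun x ↦ ‖x‖ ^ m) ν := by
  have dominating : Integrable (fun x ↦ ‖x‖ ^ 2 ^ (m + 1)) ν := by
    refine ⟨by fun_prop, ?_⟩
    rw [hasFiniteIntegral_iff_ofReal (.of_forall fun _ ↦ by positivity)]
    exact (hν.lintegral_norm_pow_two_pow_ne_top h2 m).lt_top
  have m_le : m ≤ 2 ^ (m + 1) :=
    Nat.lt_two_pow_self.le.trans (Nat.pow_le_pow_right two_pos m.le_succ)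
  refine ((integrable_const (1 : ℝ)).add dominating).mono' (by fun_prop) (.of_forall fun x ↦ ?_)
  rw [norm_pow, norm_norm, Pi.add_apply]
  rcases le_total ‖x‖ 1 with hx | hx
  · exact (pow_le_one₀ (norm_nonneg x) hx).trans (le_add_of_nonneg_right (by positivity))
  · exact (pow_le_pow_right₀ hx m_le).trans (le_add_of_nonneg_left zero_le_one)

lemma PrekopaLeindler.integrable_inner_pow (hν : PrekopaLeindler ν)
    (h2 : ∫⁻ x, ENNReal.ofReal (‖x‖ ^ 2) ∂ν = 1) (y : V) (m : ℕ) :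
    Integrable (fun x ↦ ⟪x, y⟫ ^ m) ν := by
  refine ((hν.integrable_norm_pow h2 m).mul_const (‖y‖ ^ m)).mono' (by fun_prop)
    (.of_forall fun x ↦ ?_)
  rw [norm_pow, ← mul_pow]
  gcongr
  exact norm_inner_le_norm x y

end MomentIntegrability

section Isotropic

variable {n : ℕ} {Ω : Type*} [MeasurableSpace Ω] {P : Measure Ω}
  {X : Ω → EuclideanSpace ℝ (Fin n)}

lemma Isotropic.integral_inner_sq (hX : Isotropic P X) (θ : EuclideanSpace ℝ (Fin n)) :
    ∫ ω, ⟪X ω, θ⟫ ^ 2 ∂P = ‖θ‖ ^ 2 := by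
  simpa only [← sq, real_inner_self_eq_norm_sq] using hX.2 θ θ

lemma Isotropic.integrable_inner_sq (hX : Isotropic P X) (θ : EuclideanSpace ℝ (Fin n)) :
    Integrable (fun ω ↦ ⟪X ω, θ⟫ ^ 2) P := by
  rcases eq_or_ne θ 0 with rfl | hθ
  · simp
  · refine not_imp_comm.1 integral_undef ?_
    rw [hX.integral_inner_sq]
    exact pow_ne_zero 2 (norm_ne_zero_iff.2 hθ)

lemma norm_mApp_sq (A : Matrix (Fin n) (Fin n) ℝ) (x : EuclideanSpace ℝ (Fin n)) :
    ‖mApp A x‖ ^ 2 = ∑ i, ⟪x, WithLp.toLp 2 (A i)⟫ ^ 2 := by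
  rw [EuclideanSpace.norm_sq_eq]
  refine Finset.sum_congr rfl fun i _ ↦ ?_
  rw [Real.norm_eq_abs, sq_abs]
  rfl

lemma sum_norm_row_sq (A : Matrix (Fin n) (Fin n) ℝ) :
    ∑ i, ‖(WithLp.toLp 2 (A i) : EuclideanSpace ℝ (Fin n))‖ ^ 2 = hsNorm A ^ 2 := by
  rw [hsNorm, Real.sq_sqrt (by positivity)]
  simp only [EuclideanSpace.norm_sq_eq, Real.norm_eq_abs, sq_abs]

lemma Isotropic.integrable_norm_mApp_sq (hX : Isotropic P X) (A : Matrix (Fin n) (Fin n) ℝ) :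
    Integrable (fun ω ↦ ‖mApp A (X ω)‖ ^ 2) P := by
  simp only [norm_mApp_sq]
  exact integrable_finsetSum _ fun i _ ↦ hX.integrable_inner_sq _

lemma Isotropic.integral_norm_mApp_sq (hX : Isotropic P X) (A : Matrix (Fin n) (Fin n) ℝ) :
    ∫ ω, ‖mApp A (X ω)‖ ^ 2 ∂P = hsNorm A ^ 2 := by
  simp only [norm_mApp_sq]
  rw [integral_finsetSum _ fun i _ ↦ hX.integrable_inner_sq _, ← sum_norm_row_sq]
  exact Finset.sum_congr rfl fun i _ ↦ hX.integral_inner_sq _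

lemma Isotropic.integrable [IsFiniteMeasure P] (hX : Isotropic P X) (hXm : Measurable X) :
    Integrable X P := by
  refine MemLp.integrable one_le_two
    ((memLp_two_iff_integrable_sq_norm hXm.aestronglyMeasurable).2 ?_)
  simpa [mApp] using hX.integrable_norm_mApp_sq 1

lemma IsPsiAlpha.pos {α b : ℝ} (hψ : IsPsiAlpha P X α b) (hX : Isotropic P X) (hn : 0 < n) :
    0 < b := by
  have second_moment := hψ 2 le_rfl (EuclideanSpace.single ⟨0, hn⟩ 1)
  simp only [Real.rpow_two, sq_abs, hX.integral_inner_sq] at second_moment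
  norm_num at second_moment
  exact pos_of_mul_pos_left (one_pos.trans_le second_moment) (by positivity)

lemma IsPsiAlpha.integral_inner_pow_le {α b : ℝ} (hψ : IsPsiAlpha P X α b) (hX : Isotropic P X)
    {j : ℕ} (hj : 1 ≤ j) (w : EuclideanSpace ℝ (Fin n)) :
    ∫ ω, ⟪X ω, w⟫ ^ (2 * j) ∂P ≤ (b * ((2 * j : ℕ) : ℝ) ^ (1 / α) * ‖w‖) ^ (2 * j) := by
  have moment := hψ ((2 * j : ℕ) : ℝ) (by exact_mod_cast (by omega : 2 ≤ 2 * j)) w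
  simp only [Real.rpow_natCast, (even_two_mul j).pow_abs, hX.integral_inner_sq,
    ← Real.sqrt_eq_rpow, Real.sqrt_sq (norm_nonneg w)] at moment
  have integral_nonneg : 0 ≤ ∫ ω, ⟪X ω, w⟫ ^ (2 * j) ∂P :=
    integral_nonneg fun _ ↦ (even_two_mul j).pow_nonneg _
  calc ∫ ω, ⟪X ω, w⟫ ^ (2 * j) ∂P
      = ((∫ ω, ⟪X ω, w⟫ ^ (2 * j) ∂P) ^ (1 / ((2 * j : ℕ) : ℝ))) ^ (2 * j) := by
        rw [one_div, Real.rpow_inv_natCast_pow integral_nonneg (by omega)]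
    _ ≤ (b * ((2 * j : ℕ) : ℝ) ^ (1 / α) * ‖w‖) ^ (2 * j) := by gcongr

end Isotropic

section NormalizedImage

variable {n : ℕ}

/-- The linear map `x ↦ A x / √n`, which maps isotropic vectors to vectors of second moment `1`
when the squared Hilbert–Schmidt norm of `A` is `n`. -/
def normalizedCLM (A : Matrix (Fin n) (Fin n) ℝ) :
    EuclideanSpace ℝ (Fin n) →L[ℝ] EuclideanSpace ℝ (Fin n) :=
  (√n)⁻¹ • LinearMap.toContinuousLinearMap (Matrix.toEuclideanLin A)

lemma norm_normalizedCLM_apply (A : Matrix (Fin n) (Fin n) ℝ) (x : EuclideanSpace ℝ (Fin n)) :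
    ‖normalizedCLM A x‖ = (√n)⁻¹ * ‖mApp A x‖ := by
  rw [normalizedCLM, smul_apply, norm_smul, norm_inv,
    Real.norm_of_nonneg (Real.sqrt_nonneg _)]
  rfl

lemma norm_normalizedCLM (A : Matrix (Fin n) (Fin n) ℝ) :
    ‖normalizedCLM A‖ = (√n)⁻¹ * opNorm A := by
  rw [normalizedCLM, norm_smul, norm_inv, Real.norm_of_nonneg (Real.sqrt_nonneg _), opNorm]

lemma opNorm_pos {A : Matrix (Fin n) (Fin n) ℝ} (hA : A ≠ 0) : 0 < opNorm A := by
  rw [opNorm, norm_pos_iff]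
  simpa using hA

lemma norm_mApp_le_iff (hn : 0 < n) {A : Matrix (Fin n) (Fin n) ℝ} {x : EuclideanSpace ℝ (Fin n)}
    {r : ℝ} : ‖mApp A x‖ ≤ r * √n ↔ ‖normalizedCLM A x‖ ≤ r := by
  rw [norm_normalizedCLM_apply, inv_mul_le_iff₀ (by positivity), mul_comm]

lemma rpow_one_div_effectiveDim {d o b α p : ℝ} (hd : 0 < d) (ho : 0 < o) (hb : 0 < b)
    (hα : α ≠ 0) (hp : 0 ≤ p) :
    (p / (d / (o ^ 2 * b ^ 2)) ^ (α / 2)) ^ (1 / α) = b * p ^ (1 / α) * ((√d)⁻¹ * o) := by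
  have effectiveDim_root : ((d / (o ^ 2 * b ^ 2)) ^ (α / 2)) ^ (1 / α) = √d / (o * b) := by
    rw [← Real.rpow_mul (by positivity), show α / 2 * (1 / α) = 1 / 2 by field_simp,
      ← Real.sqrt_eq_rpow, Real.sqrt_div hd.le, ← mul_pow, Real.sqrt_sq (by positivity)]
  rw [Real.div_rpow hp (by positivity), effectiveDim_root]
  field_simp

variable {Ω : Type*} [MeasurableSpace Ω] {P : Measure Ω} {X : Ω → EuclideanSpace ℝ (Fin n)}

lemma Isotropic.lintegral_norm_sq_normalizedCLM (hX : Isotropic P X) (hXm : Measurable X)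
    (hn : 0 < n) {A : Matrix (Fin n) (Fin n) ℝ} (hA : hsNorm A ^ 2 = n) :
    ∫⁻ x, ENNReal.ofReal (‖x‖ ^ 2) ∂((P.map X).map (normalizedCLM A)) = 1 := by
  rw [lintegral_map (by fun_prop) (by fun_prop), lintegral_map (by fun_prop) hXm]
  simp only [norm_normalizedCLM_apply, mul_pow]
  rw [← ofReal_integral_eq_lintegral_ofReal ((hX.integrable_norm_mApp_sq A).const_mul _)
    (.of_forall fun _ ↦ by positivity), integral_const_mul, hX.integral_norm_mApp_sq, hA, inv_pow,
    Real.sq_sqrt (by positivity), inv_mul_cancel₀ (by positivity), ENNReal.ofReal_one]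

lemma IsPsiAlpha.integral_inner_normalizedCLM_pow_le {α b : ℝ} (hψ : IsPsiAlpha P X α b)
    (hX : Isotropic P X) (hb : 0 ≤ b) {j : ℕ} (hj : 1 ≤ j) (A : Matrix (Fin n) (Fin n) ℝ)
    {y : EuclideanSpace ℝ (Fin n)} (hy : ‖y‖ ≤ 1) :
    ∫ ω, ⟪normalizedCLM A (X ω), y⟫ ^ (2 * j) ∂P
      ≤ (b * ((2 * j : ℕ) : ℝ) ^ (1 / α) * ((√n)⁻¹ * opNorm A)) ^ (2 * j) := by
  have adjoint_norm_le : ‖(normalizedCLM A).adjoint y‖ ≤ (√n)⁻¹ * opNorm A := by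
    calc ‖(normalizedCLM A).adjoint y‖ ≤ ‖(normalizedCLM A).adjoint‖ * 1 :=
          ContinuousLinearMap.le_opNorm_of_le _ hy
      _ = (√n)⁻¹ * opNorm A := by
          rw [mul_one, LinearIsometryEquiv.norm_map, norm_normalizedCLM]
  simp only [← ContinuousLinearMap.adjoint_inner_right]
  refine (hψ.integral_inner_pow_le hX hj _).trans ?_
  gcongr

variable [IsProbabilityMeasure P]

lemma Isotropic.integral_normalizedCLM (hX : Isotropic P X) (hXm : Measurable X)
    (A : Matrix (Fin n) (Fin n) ℝ) :
    ∫ x, x ∂((P.map X).map (normalizedCLM A)) = 0 := by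
  rw [Measure.map_map (by fun_prop) hXm, integral_map (by fun_prop) (by fun_prop)]
  simp only [Function.comp_apply]
  rw [ContinuousLinearMap.integral_comp_comm _ (hX.integrable hXm), hX.1, map_zero]

theorem IsPsiAlpha.isPsiAlphaLaw {α b : ℝ} (hψ : IsPsiAlpha P X α b) (hX : Isotropic P X)
    {f : EuclideanSpace ℝ (Fin n) → ℝ} (hf : HasDensityFn P X f) (hfc : IsLogConcaveFn f)
    (hα1 : 1 ≤ α) (hα2 : α ≤ 2) (hn : 0 < n) {A : Matrix (Fin n) (Fin n) ℝ}
    (hA : hsNorm A ^ 2 = n) :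
    IsPsiAlphaLaw ((P.map X).map (normalizedCLM A)) ((n / (opNorm A ^ 2 * b ^ 2)) ^ (α / 2)) α := by
  have hXm := hf.1
  have map_prob : IsProbabilityMeasure (P.map X) := Measure.isProbabilityMeasure_map (by fun_prop)
  have prob : IsProbabilityMeasure ((P.map X).map (normalizedCLM A)) :=
    Measure.isProbabilityMeasure_map (by fun_prop)
  have logConcave : IsLogConcaveLaw ((P.map X).map (normalizedCLM A)) := by
    rw [hf.2]
    exact hfc.isLogConcaveLaw.map _
  have second_moment := hX.lintegral_norm_sq_normalizedCLM hXm hn hA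
  have hb : 0 < b := hψ.pos hX hn
  have A_ne_zero : A ≠ 0 := by
    rintro rfl
    simp [hsNorm, eq_comm, hn.ne'] at hA
  have hop : 0 < opNorm A := opNorm_pos A_ne_zero
  refine ⟨prob, logConcave, second_moment, fun j hj y hy ↦ ?_, hα1, hα2, by positivity⟩
  rw [rpow_one_div_effectiveDim (by positivity) hop hb (by positivity) (by positivity),
    ← ofReal_integral_eq_lintegral_ofReal
      (logConcave.prekopaLeindler.integrable_inner_pow second_moment y (2 * j))
      (.of_forall fun _ ↦ (even_two_mul j).pow_nonneg _),
    ← ENNReal.ofReal_pow (by positivity), Measure.map_map (by fun_prop) hXm,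
    integral_map (by fun_prop) (by fun_prop)]
  exact ENNReal.ofReal_le_ofReal (hψ.integral_inner_normalizedCLM_pow_le hX hb.le hj A hy)

end NormalizedImage

/-- negative deviation (small-ball) estimate for `|AX|`. -/
theorem statement4 :
    ∃ c C c₂ : ℝ, 0 < c ∧ 0 < C ∧ 0 < c₂ ∧ c₂ < 1 ∧
      ∀ (n : ℕ) (Ω : Type) (_mΩ : MeasurableSpace Ω) (P : Measure Ω),
        IsProbabilityMeasure P →
        ∀ (X : Ω → EuclideanSpace ℝ (Fin n)) (f : EuclideanSpace ℝ (Fin n) → ℝ)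
          (α b : ℝ) (A : Matrix (Fin n) (Fin n) ℝ),
          HasDensityFn P X f → IsLogConcaveFn f → Isotropic P X →
          1 ≤ α → α ≤ 2 → IsPsiAlpha P X α b →
          hsNorm A ^ 2 = n →
          ∀ t : ℝ, 0 ≤ t → t < 1 →
            P {ω | ‖mApp A (X ω)‖ ≤ (1 - t) * Real.sqrt n} ≤
              ENNReal.ofReal (C * Real.exp
                (-(c * ((n : ℝ) / (opNorm A ^ 2 * b ^ 2)) ^ (α/2) *
                  max (t ^ (2 + α)) (Real.log (c₂ / (1 - t)))))) := by
  refine ⟨1e-44, 192, (1 / 2) ^ 17, by norm_num, by norm_num, by norm_num, by norm_num, ?_⟩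
  intro n Ω _ P _ X f α b A hf hfc hX hα1 hα2 hψ hA t ht ht1
  rcases Nat.eq_zero_or_pos n with rfl | hn
  · rw [Nat.cast_zero, zero_div, Real.zero_rpow (by linarith)]
    exact prob_le_one.trans (by simp)
  have law := hψ.isPsiAlphaLaw hX hf hfc hα1 hα2 hn hA
  calc P {ω | ‖mApp A (X ω)‖ ≤ (1 - t) * √n}
      = P ((normalizedCLM A ∘ X) ⁻¹' {x | ‖x‖ ≤ 1 - t}) := by
        simp only [norm_mApp_le_iff hn, Set.preimage_ofPred_eq, Function.comp_apply]
    _ ≤ (P.map X).map (normalizedCLM A) {x | ‖x‖ ≤ 1 - t} := by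
        rw [Measure.map_map (by fun_prop) hf.1]
        exact Measure.le_map_apply ((normalizedCLM A).measurable.comp hf.1).aemeasurable _
    _ ≤ _ := law.measure_norm_le_one_sub_le_max (hX.integral_normalizedCLM hf.1 A) ht ht1
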